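/- arXiv:1801.00186 — 2 statements merged into one kernel-verified Lean document; each statement's English description precedes it below -/
import Mathlib

section
/- For every measurable function φ : S^{n-1} → [0,∞], ( ∫_{S^{n-1}} ( (Fφ)(w) )^{n} d*w )^{1/n} ≤ ( ∫_{S^{n-1}} φ(θ)^{n/(n−1)} d*θ )^{(n−1)/n}. No symmetry assumption on φ is required, and the constant 1 is sharp. (This is the sharp L^{n/k} → L^n inequality for the Funk-type transform F_k over (k−1)-dimensional geodesics, in the case k = n−1, which the paper derives from the Drury–Christ–Drouot theorem via stereographic projection.) -/
open MeasureTheory Metric Real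
open scoped ENNReal NNReal

noncomputable section


/-- The normalized (probability) surface measure `d*θ` on the unit sphere of
`EuclideanSpace ℝ (Fin n)`. -/
def sphMeasure (n : ℕ) : Measure (sphere (0 : EuclideanSpace ℝ (Fin n)) 1) :=
  ((volume : Measure (EuclideanSpace ℝ (Fin n))).toSphere Set.univ)⁻¹ •
    (volume : Measure (EuclideanSpace ℝ (Fin n))).toSphere

/-- The hyperplane Radon transform: `Rf(θ,t) = ∫_{θ^⊥} f(tθ + y) dy`, where `θ^⊥` carries its
canonical Lebesgue measure as an (n-1)-dimensional inner product space. -/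
def Radon (n : ℕ) (f : EuclideanSpace ℝ (Fin n) → ℝ≥0∞)
    (θ : sphere (0 : EuclideanSpace ℝ (Fin n)) 1) (t : ℝ) : ℝ≥0∞ :=
  ∫⁻ y : ((ℝ ∙ (θ : EuclideanSpace ℝ (Fin n)))ᗮ),
    f (t • (θ : EuclideanSpace ℝ (Fin n)) + (y : EuclideanSpace ℝ (Fin n)))

/-- The codimension-one Funk transform: the average of `φ` over the great subsphere
`S^{n-1} ∩ w^⊥` (the unit sphere of the subspace `w^⊥`, with its normalized surface
measure). -/
def Funk (n : ℕ) (φ : sphere (0 : EuclideanSpace ℝ (Fin n)) 1 → ℝ≥0∞)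
    (w : sphere (0 : EuclideanSpace ℝ (Fin n)) 1) : ℝ≥0∞ :=
  ((volume : Measure ((ℝ ∙ (w : EuclideanSpace ℝ (Fin n)))ᗮ)).toSphere Set.univ)⁻¹ *
    ∫⁻ v : sphere (0 : ((ℝ ∙ (w : EuclideanSpace ℝ (Fin n)))ᗮ)) 1,
      φ ⟨((v : ((ℝ ∙ (w : EuclideanSpace ℝ (Fin n)))ᗮ)) : EuclideanSpace ℝ (Fin n)), by
          have hv := v.2
          simp only [mem_sphere_iff_norm, sub_zero] at hv ⊢
          rwa [Submodule.coe_norm] at hv⟩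
      ∂((volume : Measure ((ℝ ∙ (w : EuclideanSpace ℝ (Fin n)))ᗮ)).toSphere)


namespace FP

/-- convex order in dimension one, for `|a t + b|`. -/
lemma oneD_convex (J : Set ℝ) (hJ : MeasurableSet J) (R : ℝ) (hR : J ⊆ Set.Icc (-R) R)
    (a b : ℝ) :
    ∫⁻ t in Set.Ioo ((∫ t in J, t) / (volume J).toReal - (volume J).toReal / 2)
        ((∫ t in J, t) / (volume J).toReal + (volume J).toReal / 2), ENNReal.ofReal |a * t + b|
      ≤ ∫⁻ t in J, ENNReal.ofReal |a * t + b| := by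
  have hfin : volume J < ∞ := lt_of_le_of_lt (measure_mono hR) (by simp)
  set l := (volume J).toReal with hl
  set c := (∫ t in J, t) / l with hc
  rcases eq_or_lt_of_le (show 0 ≤ l from ENNReal.toReal_nonneg) with h0 | hpos
  · simp [← h0]
  have intc : ∀ (f : ℝ → ℝ), Continuous f → IntegrableOn f J volume := fun f hf =>
    (hf.continuousOn.integrableOn_Icc (a := -R) (b := R)).mono_set hR
  have intc' : ∀ (f : ℝ → ℝ), Continuous f →
      IntegrableOn f (Set.Ioo (c - l/2) (c + l/2)) volume := fun f hf =>
    (hf.continuousOn.integrableOn_Icc (a := c - l/2) (b := c + l/2)).mono_set Set.Ioo_subset_Icc_self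
  have hcont : Continuous fun t : ℝ => |a * t + b| := by fun_prop
  rw [← ofReal_integral_eq_lintegral_ofReal (intc' _ hcont) (ae_of_all _ fun t => abs_nonneg _),
    ← ofReal_integral_eq_lintegral_ofReal (intc _ hcont) (ae_of_all _ fun t => abs_nonneg _)]
  apply ENNReal.ofReal_le_ofReal
  set K := Set.Ioo (c - l/2) (c + l/2) with hK
  -- chord
  set p := |a * (c - l/2) + b| with hp
  set q := |a * (c + l/2) + b| with hq
  set α := (q - p) / l with hα
  set β := p - α * (c - l/2) with hβ
  have hαl : α * l = q - p := by rw [hα]; field_simp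
  have hp2 : p = α * (c - l/2) + β := by rw [hβ]; ring
  have hq2 : q = α * (c + l/2) + β := by rw [hβ]; linarith
  have hconv : ConvexOn ℝ Set.univ fun t : ℝ => |a * t + b| := by
    refine ⟨convex_univ, fun x _ y _ u v hu hv huv => ?_⟩
    simp only [smul_eq_mul]
    calc |a * (u * x + v * y) + b| = |u * (a * x + b) + v * (a * y + b)| := by
          congr 1; linear_combination (-b) * huv
      _ ≤ _ := by
          refine (abs_add_le _ _).trans ?_
          rw [abs_mul, abs_mul, abs_of_nonneg hu, abs_of_nonneg hv]
  set g : ℝ → ℝ := fun t => |a * t + b| - (α * t + β) with hg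
  have hgconv : ConvexOn ℝ Set.univ g := by
    refine ⟨convex_univ, fun x hx y hy u v hu hv huv => ?_⟩
    have := hconv.2 hx hy hu hv huv
    simp only [smul_eq_mul, hg] at this ⊢
    have h2 : β = u * β + v * β := by rw [← add_mul, huv, one_mul]
    nlinarith
  have hgp : g (c - l/2) = 0 := by simp only [hg]; linarith
  have hgq : g (c + l/2) = 0 := by simp only [hg]; linarith
  have hin : ∀ t ∈ K, g t ≤ 0 := by
    intro t ht
    have := hgconv.le_max_of_mem_Icc (Set.mem_univ _) (Set.mem_univ _) (Set.Ioo_subset_Icc_self ht)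
    simpa [hgp, hgq] using this
  have hout : ∀ t, t ∉ K → 0 ≤ g t := by
    intro t ht
    rw [hK, Set.mem_Ioo, not_and_or, not_lt, not_lt] at ht
    rcases ht with ht | ht
    · rcases eq_or_lt_of_le ht with rfl | ht
      · exact hgp.ge
      have := hgconv.slope_mono_adjacent (Set.mem_univ t) (Set.mem_univ (c + l/2)) ht
        (by linarith : c - l/2 < c + l/2)
      rw [hgp, hgq, sub_zero, zero_div, div_le_iff₀ (by linarith)] at this
      linarith
    · rcases eq_or_lt_of_le ht with rfl | ht
      · exact hgq.ge
      have := hgconv.slope_mono_adjacent (Set.mem_univ (c - l/2)) (Set.mem_univ t)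
        (by linarith : c - l/2 < c + l/2) ht
      rw [hgp, hgq, sub_zero, zero_div, le_div_iff₀ (by linarith)] at this
      linarith
  have hgc : Continuous g := by fun_prop
  have hmain : ∫ t in K, g t ≤ ∫ t in J, g t := by
    have hKm : MeasurableSet K := measurableSet_Ioo
    rw [← integral_indicator hKm, ← integral_indicator hJ]
    refine integral_mono ((integrable_indicator_iff hKm).2 (intc' _ hgc))
      ((integrable_indicator_iff hJ).2 (intc _ hgc)) fun t => ?_
    by_cases h1 : t ∈ K <;> by_cases h2 : t ∈ J <;> simp [h1, h2]
    · exact hin t h1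
    · exact hout t h1
  have hlin : ∫ t in K, (α * t + β) = ∫ t in J, (α * t + β) := by
    rw [integral_add ((intc' _ (by fun_prop))) ((intc' _ (by fun_prop))),
      integral_add ((intc _ (by fun_prop))) ((intc _ (by fun_prop))),
      integral_const_mul, integral_const_mul]
    have e1 : ∫ t in K, t = c * l := by
      rw [hK, ← integral_Ioc_eq_integral_Ioo, ← intervalIntegral.integral_of_le (by linarith),
        integral_id]
      ring
    have e2 : ∫ t in J, t = c * l := by rw [hc]; field_simp
    rw [e1, e2]
    simp [hK, measureReal_def, ← hl]
    left
    exact hpos.le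
  have s1 : ∫ t in K, g t = (∫ t in K, |a * t + b|) - ∫ t in K, (α * t + β) :=
    integral_sub (intc' _ hcont) (intc' _ (by fun_prop))
  have s2 : ∫ t in J, g t = (∫ t in J, |a * t + b|) - ∫ t in J, (α * t + β) :=
    integral_sub (intc _ hcont) (intc _ (by fun_prop))
  linarith

/-- one dimensional comparison of mass outside a centred interval. -/
lemma oneD_ball (J D : Set ℝ) (hJ : MeasurableSet J) (R : ℝ) (hR : J ⊆ Set.Icc (-R) R)
    (β : ℝ) (hD : D = ∅ ∨ (0 ≤ β ∧ D = Set.Icc (-β) β)) (r : ℝ) :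
    volume (Set.Ioo (-((volume J).toReal / 2)) ((volume J).toReal / 2) \ D) +
      volume {s | (s ∈ D ∧ s ∉ J) ∧ (s + r ∈ J ∧ s + r ∉ D)} ≤ volume (J \ D) := by
  have hfin : volume J < ∞ := lt_of_le_of_lt (measure_mono hR) (by simp)
  set l := (volume J).toReal with hl
  have hl0 : 0 ≤ l := ENNReal.toReal_nonneg
  have hJl : volume J = ENNReal.ofReal l := by rw [hl, ENNReal.ofReal_toReal hfin.ne]
  rcases hD with rfl | ⟨hβ, rfl⟩
  · simp [hJl]
  set D := Set.Icc (-β) β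
  have q1 : volume {s | (s ∈ D ∧ s ∉ J) ∧ (s + r ∈ J ∧ s + r ∉ D)} ≤ volume (D \ J) :=
    measure_mono fun s hs => hs.1
  have q2 : volume {s | (s ∈ D ∧ s ∉ J) ∧ (s + r ∈ J ∧ s + r ∉ D)} ≤ volume (J \ D) := by
    rw [← measure_preimage_add_right volume r (J \ D)]
    exact measure_mono fun s hs => hs.2
  have hDm : MeasurableSet D := measurableSet_Icc
  rcases le_total (l/2) β with h | h
  · have : Set.Ioo (-(l/2)) (l/2) \ D = ∅ := by
      rw [Set.sdiff_eq_empty]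
      intro x hx
      exact ⟨by linarith [hx.1], by linarith [hx.2]⟩
    rw [this]; simpa using q2
  · have h1 : volume (Set.Ioo (-(l/2)) (l/2) \ D) ≤ ENNReal.ofReal (l - 2 * β) := by
      have : Set.Ioo (-(l/2)) (l/2) \ D ⊆ Set.Ioo (-(l/2)) (-β) ∪ Set.Ioo β (l/2) := by
        rintro x ⟨⟨hx1, hx2⟩, hx3⟩
        simp only [D, Set.mem_Icc, not_and_or, not_le] at hx3
        rcases hx3 with hx3 | hx3
        · left; exact ⟨hx1, hx3⟩
        · right; exact ⟨hx3, hx2⟩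
      refine (measure_mono this).trans ((measure_union_le _ _).trans ?_)
      rw [Real.volume_Ioo, Real.volume_Ioo, ← ENNReal.ofReal_add (by linarith) (by linarith)]
      apply ENNReal.ofReal_le_ofReal; linarith
    have hDv : volume D = ENNReal.ofReal (2 * β) := by
      rw [Real.volume_Icc]; congr 1; ring
    have e1 : volume (J ∩ D) + volume (J \ D) = volume J := measure_inter_add_sdiff J hDm
    have e2 : volume (D ∩ J) + volume (D \ J) = volume D := measure_inter_add_sdiff D hJ
    rw [Set.inter_comm] at e2
    have hne : volume (J ∩ D) ≠ ∞ :=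
      ((measure_mono Set.inter_subset_left).trans_lt hfin).ne
    refine (add_le_add h1 q1).trans ?_
    rw [← ENNReal.add_le_add_iff_left hne, e1, hJl, add_left_comm, e2, hDv,
      ← ENNReal.ofReal_add (by linarith) (by linarith)]
    apply ENNReal.ofReal_le_ofReal; linarith

end FP


namespace FP

abbrev V (m : ℕ) := Fin m → ℝ

variable {k : ℕ}

/-- slice of `L` along the `0`-th coordinate -/
def sl (L : Set (V (k+1))) (y : V (k+1)) : Set ℝ := {t | Function.update y 0 t ∈ L}
/-- length of the slice -/
def len (L : Set (V (k+1))) (y : V (k+1)) : ℝ := (volume (sl L y)).toReal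
/-- mean of the slice -/
def mean (L : Set (V (k+1))) (y : V (k+1)) : ℝ := (∫ t in sl L y, t) / len L y

/-- Steiner symmetrization -/
def St (L : Set (V (k+1))) : Set (V (k+1)) := {y | |y 0| < len L y / 2}
/-- recentred version -/
def StC (L : Set (V (k+1))) : Set (V (k+1)) := {y | |y 0 - mean L y| < len L y / 2}

@[simp] lemma sl_update (L : Set (V (k+1))) (y : V (k+1)) (t : ℝ) :
    sl L (Function.update y 0 t) = sl L y := by
  simp [sl]
@[simp] lemma len_update (L : Set (V (k+1))) (y : V (k+1)) (t : ℝ) :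
    len L (Function.update y 0 t) = len L y := by
  simp [len]
@[simp] lemma mean_update (L : Set (V (k+1))) (y : V (k+1)) (t : ℝ) :
    mean L (Function.update y 0 t) = mean L y := by
  simp [mean]

lemma upd_meas : Measurable (fun p : V (k+1) × ℝ => Function.update p.1 0 p.2) :=
  measurable_update'

lemma measurableSet_sl {L : Set (V (k+1))} (hL : MeasurableSet L) (y : V (k+1)) :
    MeasurableSet (sl L y) :=
  (upd_meas.comp (measurable_prodMk_left (x := y))) hL

lemma measurable_len {L : Set (V (k+1))} (hL : MeasurableSet L) : Measurable (len L) := by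
  have : MeasurableSet ((fun p : V (k+1) × ℝ => Function.update p.1 0 p.2) ⁻¹' L) := upd_meas hL
  exact (measurable_measure_prodMk_left this).ennreal_toReal

lemma measurable_mean {L : Set (V (k+1))} (hL : MeasurableSet L) : Measurable (mean L) := by
  refine Measurable.div ?_ (measurable_len hL)
  have h : MeasurableSet ((fun p : V (k+1) × ℝ => Function.update p.1 0 p.2) ⁻¹' L) := upd_meas hL
  have : StronglyMeasurable fun y : V (k+1) => ∫ t : ℝ,
      (((fun p : V (k+1) × ℝ => Function.update p.1 0 p.2) ⁻¹' L).indicator (fun p => p.2)) (y, t) := by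
    apply StronglyMeasurable.integral_prod_right (f := fun (y : V (k+1)) (t : ℝ) =>
      (((fun p : V (k+1) × ℝ => Function.update p.1 0 p.2) ⁻¹' L).indicator (fun p => p.2)) (y, t))
    exact (measurable_snd.indicator h).stronglyMeasurable
  convert this.measurable using 2 with y
  rw [← integral_indicator (measurableSet_sl hL y)]
  rfl

lemma measurableSet_St {L : Set (V (k+1))} (hL : MeasurableSet L) : MeasurableSet (St L) :=
  measurableSet_lt (measurable_pi_apply 0).abs ((measurable_len hL).div_const 2)

lemma measurableSet_StC {L : Set (V (k+1))} (hL : MeasurableSet L) : MeasurableSet (StC L) :=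
  measurableSet_lt ((measurable_pi_apply 0).sub (measurable_mean hL)).abs
    ((measurable_len hL).div_const 2)

lemma sl_St (L : Set (V (k+1))) (y : V (k+1)) :
    sl (St L) y = Set.Ioo (-(len L y / 2)) (len L y / 2) := by
  ext t; simp [sl, St, abs_lt]

lemma sl_StC (L : Set (V (k+1))) (y : V (k+1)) :
    sl (StC L) y = Set.Ioo (mean L y - len L y / 2) (mean L y + len L y / 2) := by
  ext t; simp only [sl, StC, Set.mem_ofPred_eq, mean_update, len_update, Function.update_self,
    abs_lt, Set.mem_Ioo]
  constructor <;> rintro ⟨h1, h2⟩ <;> constructor <;> linarith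

/-- comparing integrals by comparing along the coordinate lines -/
lemma lint_le_of_lines {ι : Type*} [Fintype ι] [DecidableEq ι] {X : ι → Type*}
    [∀ i, MeasureSpace (X i)] [∀ i, SigmaFinite (volume : Measure (X i))]
    (i : ι) {f g : (∀ i, X i) → ℝ≥0∞} (hf : Measurable f)
    (hg : Measurable g)
    (h : ∀ y, ∫⁻ t, f (Function.update y i t) ≤ ∫⁻ t, g (Function.update y i t)) :
    ∫⁻ y, f y ≤ ∫⁻ y, g y := by
  rw [volume_pi]
  refine lintegral_le_of_lmarginal_le (μ := fun i : ι => (volume : Measure (X i))) {i} hf hg ?_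
  intro y
  rw [lmarginal_singleton, lmarginal_singleton]
  exact h y

/-- the euclidean ball in `V m` -/
def eB (m : ℕ) (ρ : ℝ) : Set (V m) := {x | ∑ i, x i ^ 2 ≤ ρ ^ 2}

lemma measurableSet_eB (m : ℕ) (ρ : ℝ) : MeasurableSet (eB m ρ) :=
  measurableSet_le (by fun_prop) measurable_const

lemma sl_eB (ρ : ℝ) (y : V (k+1)) : sl (eB (k+1) ρ) y = ∅ ∨
    (0 ≤ √(ρ^2 - ∑ i : Fin k, y i.succ ^ 2) ∧ sl (eB (k+1) ρ) y =
      Set.Icc (-√(ρ^2 - ∑ i : Fin k, y i.succ ^ 2)) (√(ρ^2 - ∑ i : Fin k, y i.succ ^ 2))) := by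
  have key : ∀ t, t ∈ sl (eB (k+1) ρ) y ↔ t ^ 2 ≤ ρ^2 - ∑ i : Fin k, y i.succ ^ 2 := by
    intro t
    simp only [sl, eB, Set.mem_ofPred_eq, Fin.sum_univ_succ, Function.update_self]
    have : ∀ i : Fin k, Function.update y 0 t i.succ = y i.succ := fun i =>
      Function.update_of_ne (Fin.succ_ne_zero i) _ _
    simp only [this]
    constructor <;> intro h <;> linarith
  set c := ρ^2 - ∑ i : Fin k, y i.succ ^ 2
  rcases lt_or_ge c 0 with h | h
  · left
    ext t
    rw [key]; simp only [Set.mem_empty_iff_false, iff_false, not_le]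
    nlinarith [sq_nonneg t]
  · right
    refine ⟨Real.sqrt_nonneg _, ?_⟩
    ext t
    rw [key, Set.mem_Icc, ← abs_le, ← sq_abs]
    constructor
    · intro h2; exact Real.le_sqrt_of_sq_le h2
    · intro h2; calc |t|^2 ≤ (√c)^2 := by gcongr
        _ = c := Real.sq_sqrt h

/-- the determinant functional for a family of sets -/
def JJ (m : ℕ) (Ls : Fin m → Set (V m)) : ℝ≥0∞ :=
  ∫⁻ x : Fin m → V m, (Set.univ.pi Ls).indicator
    (fun x => ENNReal.ofReal |Matrix.det (Matrix.of x)|) x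

/-- the determinant functional -/
def II (m : ℕ) (L : Set (V m)) : ℝ≥0∞ := JJ m fun _ => L

lemma continuous_det' (m : ℕ) :
    Continuous fun x : Fin m → V m => Matrix.det (Matrix.of x) := by
  apply Continuous.matrix_det
  exact continuous_id

lemma measurable_det' (m : ℕ) :
    Measurable fun x : Fin m → V m => Matrix.det (Matrix.of x) := (continuous_det' m).measurable

lemma measurable_det (m : ℕ) :
    Measurable fun x : Fin m → V m => ENNReal.ofReal |Matrix.det (Matrix.of x)| :=
  ((continuous_det' m).abs.measurable).ennreal_ofReal

lemma measurable_JJ_integrand (m : ℕ) {Ls : Fin m → Set (V m)} (h : ∀ i, MeasurableSet (Ls i)) :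
    Measurable ((Set.univ.pi Ls).indicator
    (fun x => ENNReal.ofReal |Matrix.det (Matrix.of x)|)) :=
  (measurable_det m).indicator (MeasurableSet.univ_pi h)

/-- integrals of absolute values of linear functionals decrease. -/
lemma StC_linear {L : Set (V (k+1))} (hL : MeasurableSet L) (R : ℝ)
    (hR : ∀ y ∈ L, |y 0| ≤ R) (f : V (k+1) →ₗ[ℝ] ℝ) :
    ∫⁻ y, (StC L).indicator (fun y => ENNReal.ofReal |f y|) y ≤
      ∫⁻ y, L.indicator (fun y => ENNReal.ofReal |f y|) y := by
  have hf : Measurable fun y => ENNReal.ofReal |f y| :=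
    (f.continuous_of_finiteDimensional.abs.measurable).ennreal_ofReal
  refine lint_le_of_lines 0 (hf.indicator (measurableSet_StC hL)) (hf.indicator hL) fun y => ?_
  have e : ∀ t, f (Function.update y 0 t) = f (Pi.single 0 1) * t + f (Function.update y 0 0) := by
    intro t
    have : Function.update y 0 t = t • Pi.single (M := fun _ => ℝ) 0 1 + Function.update y 0 0 := by
      ext i
      by_cases h : i = 0
      · subst h; simp
      · simp [h]
    rw [this, map_add, map_smul, smul_eq_mul, mul_comm]
  have e2 : ∀ (A : Set (V (k+1))), MeasurableSet A → ∫⁻ t, A.indicator (fun y => ENNReal.ofReal |f y|) (Function.update y 0 t)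
      = ∫⁻ t in sl A y, ENNReal.ofReal |f (Pi.single 0 1) * t + f (Function.update y 0 0)| := by
    intro A hA
    rw [← lintegral_indicator (measurableSet_sl hA y)]
    congr 1; ext t
    by_cases h : Function.update y 0 t ∈ A
    · rw [Set.indicator_of_mem h, Set.indicator_of_mem (show t ∈ sl A y from h), e]
    · rw [Set.indicator_of_notMem h, Set.indicator_of_notMem (show t ∉ sl A y from h)]
  rw [e2 _ (measurableSet_StC hL), e2 _ hL, sl_StC]
  exact oneD_convex (sl L y) (measurableSet_sl hL y) R
    (fun t ht => abs_le.1 (by simpa using hR _ ht)) _ _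

/-- replacing one of the sets -/
lemma JJ_update {L : Set (V (k+1))} (hL : MeasurableSet L) (R : ℝ)
    (hR : ∀ y ∈ L, |y 0| ≤ R) (Ls : Fin (k+1) → Set (V (k+1))) (hLs : ∀ i, MeasurableSet (Ls i))
    (i : Fin (k+1)) :
    JJ (k+1) (Function.update Ls i (StC L)) ≤ JJ (k+1) (Function.update Ls i L) := by
  have hm : ∀ A : Set (V (k+1)), MeasurableSet A → ∀ j, MeasurableSet (Function.update Ls i A j) := by
    intro A hA j
    by_cases h : j = i
    · subst h; simpa
    · simpa [h] using hLs j
  refine lint_le_of_lines i (measurable_JJ_integrand _ (hm _ (measurableSet_StC hL)))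
    (measurable_JJ_integrand _ (hm _ hL)) fun x => ?_
  by_cases hx : ∀ j ≠ i, x j ∈ Ls j
  · have e : ∀ (A : Set (V (k+1))) (y : V (k+1)),
        (Set.univ.pi (Function.update Ls i A)).indicator
        (fun x => ENNReal.ofReal |Matrix.det (Matrix.of x)|) (Function.update x i y) =
        A.indicator (fun y => ENNReal.ofReal |(Matrix.detRowAlternating.toMultilinearMap.toLinearMap x i) y|) y := by
      intro A y
      by_cases h : y ∈ A
      · rw [Set.indicator_of_mem h, Set.indicator_of_mem]
        · rfl
        · intro j _
          by_cases hj : j = i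
          · subst hj; simpa
          · simpa [hj] using hx j hj
      · rw [Set.indicator_of_notMem h, Set.indicator_of_notMem]
        intro hc
        have := hc i (Set.mem_univ _)
        simp at this; exact h this
    simp only [e]
    exact StC_linear hL R hR _
  · have e : ∀ (A : Set (V (k+1))) (y : V (k+1)),
        (Set.univ.pi (Function.update Ls i A)).indicator
        (fun x => ENNReal.ofReal |Matrix.det (Matrix.of x)|) (Function.update x i y) = 0 := by
      intro A y
      push Not at hx
      obtain ⟨j, hj, hxj⟩ := hx
      apply Set.indicator_of_notMem
      intro hc
      have := hc j (Set.mem_univ _)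
      simp [hj] at this; exact hxj this
    simp only [e]; rfl

lemma II_StC_le {L : Set (V (k+1))} (hL : MeasurableSet L) (R : ℝ)
    (hR : ∀ y ∈ L, |y 0| ≤ R) : II (k+1) (StC L) ≤ II (k+1) L := by
  have : ∀ s : Finset (Fin (k+1)), JJ (k+1) (fun i => if i ∈ s then StC L else L) ≤ II (k+1) L := by
    intro s
    induction s using Finset.induction_on with
    | empty => simp [II]
    | insert a s ha ih =>
      refine le_trans ?_ ih
      have h := JJ_update hL R hR (fun i => if i ∈ s then StC L else L) (fun i => by
        split_ifs
        · exact measurableSet_StC hL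
        · exact hL) a
      have e1 : (fun i => if i ∈ insert a s then StC L else L) =
          Function.update (fun i => if i ∈ s then StC L else L) a (StC L) := by
        ext1 i
        by_cases hi : i = a
        · subst hi; simp
        · simp [hi]
      have e2 : (fun i => if i ∈ s then StC L else L) =
          Function.update (fun i => if i ∈ s then StC L else L) a L := by
        ext1 i
        by_cases hi : i = a
        · subst hi; simp [ha]
        · simp [hi]
      rw [e1]; nth_rewrite 2 [e2]; exact h
  simpa [II] using this Finset.univ

/-- shear along the first coordinate -/
lemma mp_shear (ε : ℝ) (hε : ε = 1 ∨ ε = -1) (c : V (k+1) → ℝ) (hc : Measurable c)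
    (hcu : ∀ y t, c (Function.update y 0 t) = c y) :
    MeasurePreserving (fun y : V (k+1) => Function.update y 0 (ε * y 0 + c y)) := by
  have hm : Measurable (fun y : V (k+1) => Function.update y 0 (ε * y 0 + c y)) := by
    have h1 : Measurable fun y : V (k+1) => (y, ε * y 0 + c y) := by fun_prop
    exact upd_meas.comp h1
  refine ⟨hm, ?_⟩
  ext A hA
  rw [Measure.map_apply hm hA, ← lintegral_indicator_one (hm hA), ← lintegral_indicator_one hA]
  have key : ∀ y : V (k+1), ∫⁻ t, ((fun y : V (k+1) => Function.update y 0 (ε * y 0 + c y)) ⁻¹' A).indicator 1 (Function.update y 0 t)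
      = ∫⁻ t, A.indicator (1 : V (k+1) → ℝ≥0∞) (Function.update y 0 t) := by
    intro y
    have hg : Measurable fun t => A.indicator (1 : V (k+1) → ℝ≥0∞) (Function.update y 0 t) :=
      (measurable_one.indicator hA).comp (upd_meas.comp (measurable_prodMk_left (x := y)))
    have e : ∀ t, ((fun y : V (k+1) => Function.update y 0 (ε * y 0 + c y)) ⁻¹' A).indicator (1 : V (k+1) → ℝ≥0∞) (Function.update y 0 t)
        = A.indicator 1 (Function.update y 0 (ε * t + c y)) := by
      intro t
      have : Function.update y 0 t ∈ (fun y : V (k+1) => Function.update y 0 (ε * y 0 + c y)) ⁻¹' A ↔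
          Function.update y 0 (ε * t + c y) ∈ A := by
        rw [Set.mem_preimage, Function.update_self, hcu, Function.update_idem]
      by_cases h : Function.update y 0 (ε * t + c y) ∈ A
      · rw [Set.indicator_of_mem h, Set.indicator_of_mem (this.2 h)]; rfl
      · rw [Set.indicator_of_notMem h, Set.indicator_of_notMem (fun h' => h (this.1 h'))]
    simp only [e]
    rcases hε with rfl | rfl
    · simp only [one_mul]
      exact lintegral_add_right_eq_self (fun t => A.indicator (1 : V (k+1) → ℝ≥0∞) (Function.update y 0 t)) (c y)
    · simp only [neg_one_mul, neg_add_eq_sub]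
      exact lintegral_sub_left_eq_self (fun t => A.indicator (1 : V (k+1) → ℝ≥0∞) (Function.update y 0 t)) (c y)
  exact le_antisymm
    (lint_le_of_lines 0 (measurable_one.indicator (hm hA)) (measurable_one.indicator hA) fun y => (key y).le)
    (lint_le_of_lines 0 (measurable_one.indicator hA) (measurable_one.indicator (hm hA)) fun y => (key y).ge)

lemma II_St_le_StC {L : Set (V (k+1))} (hL : MeasurableSet L) :
    II (k+1) (St L) ≤ II (k+1) (StC L) := by
  have hmean := measurable_mean hL
  set D : (Fin (k+1) → V (k+1)) → ℝ := fun x => Matrix.det (Matrix.of x) with hD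
  set c : (Fin (k+1) → V (k+1)) → ℝ := fun x =>
    Matrix.det ((Matrix.of x).updateCol 0 (fun i => mean L (x i))) with hc
  -- the functional of `StC L` for both signs
  have main : ∀ ε : ℝ, (ε = 1 ∨ ε = -1) → II (k+1) (StC L) =
      ∫⁻ x, (Set.univ.pi fun _ => St L).indicator (fun x => ENNReal.ofReal |ε * D x + c x|) x := by
    intro ε hε
    have mp := volume_preserving_pi (fun _ : Fin (k+1) =>
      mp_shear ε hε (mean L) hmean (mean_update L))
    have := mp.lintegral_comp (measurable_JJ_integrand (k+1) (Ls := fun _ => StC L) fun _ => measurableSet_StC hL)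
    rw [II, JJ, ← this]
    congr 1; ext x
    have hdet : Matrix.det (Matrix.of fun i => Function.update (x i) 0 (ε * x i 0 + mean L (x i)))
        = ε * D x + c x := by
      have e1 : (Matrix.of fun i => Function.update (x i) 0 (ε * x i 0 + mean L (x i))) =
          (Matrix.of x).updateCol 0 ((ε • fun i => x i 0) + fun i => mean L (x i)) := by
        ext i j
        by_cases hj : j = 0
        · subst hj; simp
        · simp [hj]
      have e2 : (Matrix.of x).updateCol 0 (fun i => x i 0) = Matrix.of x := by
        ext i j
        by_cases hj : j = 0
        · subst hj; simp
        · simp [hj]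
      rw [e1, Matrix.det_updateCol_add, Matrix.det_updateCol_smul, e2]
    have hmem : ∀ y : V (k+1), Function.update y 0 (ε * y 0 + mean L y) ∈ StC L ↔ y ∈ St L := by
      intro y
      simp only [StC, St, Set.mem_ofPred_eq, mean_update, len_update, Function.update_self,
        add_sub_cancel_right, abs_mul]
      rcases hε with rfl | rfl <;> simp
    by_cases hx : x ∈ Set.univ.pi fun _ => St L
    · rw [Set.indicator_of_mem hx, Set.indicator_of_mem]
      · rw [← hdet]
      · intro i _
        exact (hmem _).2 (hx i trivial)
    · rw [Set.indicator_of_notMem hx, Set.indicator_of_notMem]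
      intro h
      exact hx fun i _ => (hmem _).1 (h i trivial)
  have h2 : 2 * II (k+1) (St L) ≤ 2 * II (k+1) (StC L) := by
    have hcm : Measurable c := by
      have : Measurable fun (x : Fin (k+1) → V (k+1)) (i j : Fin (k+1)) =>
          (Matrix.of x).updateCol 0 (fun i => mean L (x i)) i j := by
        refine measurable_pi_lambda _ fun i => measurable_pi_lambda _ fun j => ?_
        by_cases hj : j = 0
        · subst hj
          simp only [Matrix.updateCol_self]
          exact hmean.comp (measurable_pi_apply i)
        · simp only [Matrix.updateCol_ne hj, Matrix.of_apply]
          exact (measurable_pi_apply j).comp (measurable_pi_apply i)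
      exact (measurable_det' (k+1)).comp this
    have hDm : Measurable D := measurable_det' (k+1)
    have hS : MeasurableSet (Set.univ.pi fun _ : Fin (k+1) => St L) :=
      MeasurableSet.univ_pi fun _ => measurableSet_St hL
    rw [two_mul (II (k+1) (StC L))]
    nth_rewrite 1 [main 1 (Or.inl rfl)]
    rw [main (-1) (Or.inr rfl), ← lintegral_add_left, II, JJ, ← lintegral_const_mul]
    · refine lintegral_mono fun x => ?_
      by_cases hx : x ∈ Set.univ.pi fun _ => St L
      · simp only [Set.indicator_of_mem hx]
        rw [← ENNReal.ofReal_add (abs_nonneg _) (abs_nonneg _),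
          ← ENNReal.ofReal_ofNat, ← ENNReal.ofReal_mul (by norm_num)]
        apply ENNReal.ofReal_le_ofReal
        have : 2 * D x = (1 * D x + c x) - (-1 * D x + c x) := by ring
        calc 2 * |D x| = |2 * D x| := by rw [abs_mul]; norm_num
          _ ≤ _ := by rw [this]; exact abs_sub _ _
      · simp only [Set.indicator_of_notMem hx]; simp
    · exact measurable_JJ_integrand (k+1) fun _ => measurableSet_St hL
    · exact ((((hDm.const_mul 1).add hcm).abs).ennreal_ofReal).indicator hS
  exact (ENNReal.mul_le_mul_iff_right (by simp) (by simp)).1 h2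

end FP


namespace FP

variable {k : ℕ}

lemma abs_le_of_eB {m : ℕ} {R : ℝ} (hR : 0 ≤ R) {y : V m} (hy : y ∈ eB m R) (i : Fin m) :
    |y i| ≤ R := by
  have h1 : y i ^ 2 ≤ ∑ i, y i ^ 2 :=
    Finset.single_le_sum (f := fun i => y i ^ 2) (fun _ _ => sq_nonneg _) (Finset.mem_univ i)
  exact abs_le_of_sq_le_sq (h1.trans hy) hR

/-- the set of points moved by `v` from inside the ball to outside -/
def QQ {m : ℕ} (L : Set (V m)) (ρ : ℝ) (v : V m) : Set (V m) :=
  {x | (x ∈ eB m ρ ∧ x ∉ L) ∧ (x + v ∈ L ∧ x + v ∉ eB m ρ)}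

lemma measurableSet_QQ {m : ℕ} {L : Set (V m)} (hL : MeasurableSet L) (ρ : ℝ) (v : V m) :
    MeasurableSet (QQ L ρ v) := by
  have h1 : MeasurableSet (eB m ρ \ L) := (measurableSet_eB m ρ).diff hL
  have h2 : MeasurableSet ((fun x => x + v) ⁻¹' (L \ eB m ρ)) :=
    (measurable_add_const v) (hL.diff (measurableSet_eB m ρ))
  exact h1.inter h2

lemma St_volume {L : Set (V (k+1))} (hL : MeasurableSet L) (R : ℝ)
    (hR : ∀ y ∈ L, |y 0| ≤ R) : volume (St L) = volume L := by
  have key : ∀ y : V (k+1), ∫⁻ t, (St L).indicator (1 : V (k+1) → ℝ≥0∞) (Function.update y 0 t) =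
      ∫⁻ t, L.indicator (1 : V (k+1) → ℝ≥0∞) (Function.update y 0 t) := by
    intro y
    have e : ∀ A : Set (V (k+1)), MeasurableSet A →
        ∫⁻ t, A.indicator (1 : V (k+1) → ℝ≥0∞) (Function.update y 0 t) = volume (sl A y) := by
      intro A hA
      rw [← lintegral_indicator_one (measurableSet_sl hA y)]
      rfl
    rw [e _ (measurableSet_St hL), e _ hL, sl_St, Real.volume_Ioo]
    have hfin : volume (sl L y) < ∞ := by
      refine lt_of_le_of_lt (measure_mono (t := Set.Icc (-R) R) fun t ht => abs_le.1 (by simpa using hR _ ht)) (by simp)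
    rw [show len L y / 2 - -(len L y / 2) = len L y by ring, len, ENNReal.ofReal_toReal hfin.ne]
  rw [← lintegral_indicator_one (measurableSet_St hL), ← lintegral_indicator_one hL]
  exact le_antisymm
    (lint_le_of_lines 0 (measurable_one.indicator (measurableSet_St hL)) (measurable_one.indicator hL) fun y => (key y).le)
    (lint_le_of_lines 0 (measurable_one.indicator hL) (measurable_one.indicator (measurableSet_St hL)) fun y => (key y).ge)

lemma St_ball {L : Set (V (k+1))} (hL : MeasurableSet L) (R : ℝ)
    (hR : ∀ y ∈ L, |y 0| ≤ R) (ρ r : ℝ) :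
    volume (St L \ eB (k+1) ρ) + volume (QQ L ρ (Pi.single 0 r)) ≤ volume (L \ eB (k+1) ρ) := by
  have hB := measurableSet_eB (k+1) ρ
  have hS := (measurableSet_St hL).diff hB
  have hQ := measurableSet_QQ hL ρ (Pi.single 0 r)
  rw [← lintegral_indicator_one hS, ← lintegral_indicator_one (hL.diff hB),
    ← lintegral_indicator_one hQ, ← lintegral_add_left (measurable_one.indicator hS)]
  refine lint_le_of_lines 0 ((measurable_one.indicator hS).add (measurable_one.indicator hQ))
    (measurable_one.indicator (hL.diff hB)) fun y => ?_
  have e : ∀ A : Set (V (k+1)), MeasurableSet A →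
      ∫⁻ t, A.indicator (1 : V (k+1) → ℝ≥0∞) (Function.update y 0 t) = volume (sl A y) := by
    intro A hA
    rw [← lintegral_indicator_one (measurableSet_sl hA y)]
    rfl
  have hm : Measurable fun t : ℝ => (St L \ eB (k+1) ρ).indicator (1 : V (k+1) → ℝ≥0∞)
      (Function.update y 0 t) :=
    (measurable_one.indicator hS).comp (upd_meas.comp (measurable_prodMk_left (x := y)))
  rw [lintegral_add_left hm, e _ hS, e _ hQ, e _ (hL.diff hB)]
  have h := oneD_ball (sl L y) (sl (eB (k+1) ρ) y) (measurableSet_sl hL y) R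
    (fun t ht => abs_le.1 (by simpa using hR _ ht)) _ (sl_eB ρ y) r
  have e1 : sl (St L \ eB (k+1) ρ) y = sl (St L) y \ sl (eB (k+1) ρ) y := rfl
  have e2 : sl (L \ eB (k+1) ρ) y = sl L y \ sl (eB (k+1) ρ) y := rfl
  have e3 : sl (QQ L ρ (Pi.single 0 r)) y = {s | (s ∈ sl (eB (k+1) ρ) y ∧ s ∉ sl L y) ∧
      (s + r ∈ sl L y ∧ s + r ∉ sl (eB (k+1) ρ) y)} := by
    ext s
    have : Function.update y 0 s + Pi.single 0 r = Function.update y 0 (s + r) := by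
      ext i
      by_cases h : i = 0
      · subst h; simp
      · simp [h]
    simp only [sl, QQ, Set.mem_ofPred_eq, this]
  rw [e1, e2, e3, sl_St]
  exact h

lemma St_sub {L : Set (V (k+1))} {R : ℝ}
    (hR : L ⊆ eB (k+1) R) : St L ⊆ eB (k+1) R := by
  intro y hy
  have hy' : |y 0| < len L y / 2 := hy
  have hsub : sl L y ⊆ sl (eB (k+1) R) y := fun t ht => hR ht
  have hne : len L y ≠ 0 := by
    intro h; rw [h] at hy'; simp at hy'; linarith [abs_nonneg (y 0)]
  rcases sl_eB R y with h | ⟨h0, h⟩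
  · rw [h, Set.subset_empty_iff] at hsub
    exact absurd (by simp [len, hsub]) hne
  · rw [h] at hsub
    set β := √(R^2 - ∑ i : Fin k, y i.succ ^ 2)
    have hl : len L y ≤ 2 * β := by
      have := measure_mono (μ := volume) hsub
      rw [Real.volume_Icc] at this
      have := ENNReal.toReal_mono (by simp) this
      rw [ENNReal.toReal_ofReal (by linarith)] at this
      rw [len]; linarith
    have : y 0 ∈ sl (eB (k+1) R) y := by
      rw [h, Set.mem_Icc, ← abs_le]; linarith
    simpa [sl] using this

/-- linear change of variables for the determinant functional -/
lemma II_linear {m : ℕ} (f : V m →ₗ[ℝ] V m) (hf : LinearMap.det f ≠ 0) {L : Set (V m)}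
    (hL : MeasurableSet L) :
    ENNReal.ofReal |LinearMap.det f| ^ (m+1) * II m (f ⁻¹' L) = II m L := by
  set d := LinearMap.det f with hd
  have hfc : Continuous f := f.continuous_of_finiteDimensional
  -- the measure `|d| • volume` is preserved
  have mp : MeasurePreserving f (ENNReal.ofReal |d| • volume : Measure (V m)) volume := by
    refine ⟨hfc.measurable, ?_⟩
    rw [Measure.map_smul, Measure.map_linearMap_addHaar_eq_smul_addHaar _ hf, smul_smul,
      ← ENNReal.ofReal_mul (abs_nonneg _), ← abs_mul, mul_inv_cancel₀ hf]
    simp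
  have hsf : SigmaFinite (ENNReal.ofReal |d| • volume : Measure (V m)) := by
    have : (ENNReal.ofReal |d| • volume : Measure (V m)) = Real.toNNReal |d| • volume := rfl
    rw [this]; infer_instance
  have mpp := measurePreserving_pi (fun _ : Fin m => (ENNReal.ofReal |d| • volume : Measure (V m)))
    (fun _ : Fin m => (volume : Measure (V m))) (fun _ => mp)
  have hpi : Measure.pi (fun _ : Fin m => (ENNReal.ofReal |d| • volume : Measure (V m))) =
      ENNReal.ofReal |d| ^ m • volume := by
    refine Measure.pi_eq fun s hs => ?_
    simp only [Measure.smul_apply, smul_eq_mul, Finset.prod_mul_distrib, volume_pi_pi]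
    simp
  have := mpp.lintegral_comp (measurable_JJ_integrand m (Ls := fun _ => L) fun _ => hL)
  rw [hpi, lintegral_smul_measure] at this
  rw [II, II, JJ, JJ, volume_pi, ← this, pow_succ, smul_eq_mul, mul_assoc]
  congr 1
  rw [← lintegral_const_mul _ (measurable_JJ_integrand m fun _ => hfc.measurable hL)]
  refine lintegral_congr fun x => ?_
  have hdet : Matrix.det (Matrix.of fun i => f (x i)) = d * Matrix.det (Matrix.of x) := by
    have e : (Matrix.of fun i => f (x i)) = Matrix.of x * (LinearMap.toMatrix' f).transpose := by
      ext i j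
      have := congrFun (LinearMap.toMatrix'_mulVec f (x i)) j
      simp only [Matrix.of_apply, Matrix.mul_apply, Matrix.transpose_apply]
      rw [← this]
      simp [Matrix.mulVec, dotProduct, mul_comm]
    rw [e, Matrix.det_mul, Matrix.det_transpose, LinearMap.det_toMatrix', mul_comm]
  by_cases hx : x ∈ Set.univ.pi fun _ : Fin m => f ⁻¹' L
  · rw [Set.indicator_of_mem hx, Set.indicator_of_mem, hdet, abs_mul,
      ENNReal.ofReal_mul (abs_nonneg _)]
    intro i _; exact hx i trivial
  · rw [Set.indicator_of_notMem hx, Set.indicator_of_notMem, mul_zero]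
    intro h; exact hx fun i _ => h i trivial

lemma exists_rot {m : ℕ} (v w : V m) (h : ∑ i, v i ^ 2 = ∑ i, w i ^ 2) :
    ∃ f : V m →ₗ[ℝ] V m, f v = w ∧ (∀ x, ∑ i, f x i ^ 2 = ∑ i, x i ^ 2) ∧
      |LinearMap.det f| = 1 := by
  let e := (WithLp.linearEquiv 2 ℝ (V m))
  have hn : ∀ x : EuclideanSpace ℝ (Fin m), ∑ i, (x i)^2 = ‖x‖^2 := by
    intro x; rw [EuclideanSpace.real_norm_sq_eq]
  have hvw : ‖e.symm v‖ = ‖e.symm w‖ := by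
    have := (hn (e.symm v)).symm.trans (h.trans (hn (e.symm w)))
    exact (sq_eq_sq₀ (norm_nonneg _) (norm_nonneg _)).1 this
  let r := (Submodule.reflection (ℝ ∙ (e.symm v - e.symm w))ᗮ)
  have hr : r (e.symm v) = e.symm w := Submodule.reflection_sub hvw
  let f : V m →ₗ[ℝ] V m := (e.toLinearMap ∘ₗ r.toLinearEquiv.toLinearMap) ∘ₗ e.symm.toLinearMap
  have hff : ∀ x, f (f x) = x := by
    intro x
    change e (r (e.symm (e (r (e.symm x))))) = x
    rw [e.symm_apply_apply, Submodule.reflection_reflection, e.apply_symm_apply]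
  refine ⟨f, ?_, ?_, ?_⟩
  · change e (r (e.symm v)) = w
    rw [hr, e.apply_symm_apply]
  · intro x
    have h1 := hn (r (e.symm x))
    have h2 := hn (e.symm x)
    rw [r.norm_map, ← h2] at h1
    exact h1
  · have : LinearMap.det f * LinearMap.det f = 1 := by
      rw [← LinearMap.det_comp, show f ∘ₗ f = LinearMap.id from LinearMap.ext hff, LinearMap.det_id]
    have h3 : |LinearMap.det f| * |LinearMap.det f| = 1 := by rw [← abs_mul, this, abs_one]
    nlinarith [abs_nonneg (LinearMap.det f)]

lemma vol_linear {m : ℕ} (f : V m →ₗ[ℝ] V m) (hf : |LinearMap.det f| = 1) (L : Set (V m)) :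
    volume (f ⁻¹' L) = volume L := by
  have h0 : LinearMap.det f ≠ 0 := by intro h; rw [h] at hf; simp at hf
  rw [Measure.addHaar_preimage_linearMap _ h0, abs_inv, hf]; simp

/-- symmetrization in direction `v` -/
lemma exists_sym {L : Set (V (k+1))} (hL : MeasurableSet L) {R : ℝ} (hR0 : 0 ≤ R)
    (hR : L ⊆ eB (k+1) R) (ρ : ℝ) (v : V (k+1)) :
    ∃ L' : Set (V (k+1)), MeasurableSet L' ∧ L' ⊆ eB (k+1) R ∧ volume L' = volume L ∧
      II (k+1) L' ≤ II (k+1) L ∧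
      volume (L' \ eB (k+1) ρ) + volume (QQ L ρ v) ≤ volume (L \ eB (k+1) ρ) := by
  obtain ⟨f, hfv, hfn, hfd⟩ := exists_rot (Pi.single 0 (√(∑ i, v i ^ 2))) v (by
    rw [Finset.sum_eq_single 0]
    · simp only [Pi.single_eq_same]
      exact Real.sq_sqrt (Finset.sum_nonneg fun _ _ => sq_nonneg _)
    · intro b _ hb; simp [hb]
    · simp)
  have h0 : LinearMap.det f ≠ 0 := by intro h; rw [h] at hfd; simp at hfd
  have hfB : ∀ r, f ⁻¹' (eB (k+1) r) = eB (k+1) r := by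
    intro r; ext x; simp only [eB, Set.mem_preimage, Set.mem_ofPred_eq, hfn]
  have hLm : MeasurableSet (f ⁻¹' L) := f.continuous_of_finiteDimensional.measurable hL
  have hsub : f ⁻¹' L ⊆ eB (k+1) R := by rw [← hfB R]; exact Set.preimage_mono hR
  have hb : ∀ y ∈ f ⁻¹' L, |y 0| ≤ R := fun y hy => abs_le_of_eB hR0 (hsub hy) 0
  refine ⟨St (f ⁻¹' L), measurableSet_St hLm, St_sub hsub, ?_, ?_, ?_⟩
  · rw [St_volume hLm R hb, vol_linear f hfd]
  · refine (II_St_le_StC hLm).trans ((II_StC_le hLm R hb).trans ?_)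
    rw [← II_linear f h0 hL, hfd]; simp
  · have := St_ball hLm R hb ρ (√(∑ i, v i ^ 2))
    have e1 : volume (f ⁻¹' L \ eB (k+1) ρ) = volume (L \ eB (k+1) ρ) := by
      rw [← vol_linear f hfd (L \ eB (k+1) ρ), Set.preimage_sdiff, hfB]
    have e2 : volume (QQ (f ⁻¹' L) ρ (Pi.single 0 (√(∑ i, v i ^ 2)))) = volume (QQ L ρ v) := by
      rw [← vol_linear f hfd (QQ L ρ v)]
      congr 1
      ext x
      have hx : ∀ z, z ∈ eB (k+1) ρ ↔ f z ∈ eB (k+1) ρ := fun z => by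
        conv_lhs => rw [← hfB ρ]
        rfl
      set s : V (k+1) := Pi.single 0 (√(∑ i, v i ^ 2))
      change ((x ∈ eB (k+1) ρ ∧ f x ∉ L) ∧ (f (x + s) ∈ L ∧ x + s ∉ eB (k+1) ρ)) ↔
        ((f x ∈ eB (k+1) ρ ∧ f x ∉ L) ∧ (f x + v ∈ L ∧ f x + v ∉ eB (k+1) ρ))
      rw [hx x, hx (x + s), map_add, hfv]
    rwa [e1, e2] at this

end FP


namespace FP

variable {k : ℕ}

lemma eB_sub_Icc {m : ℕ} {R : ℝ} (hR : 0 ≤ R) :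
    eB m R ⊆ Set.Icc (fun _ => -R) (fun _ => R) := fun _ hy =>
  ⟨fun i => (abs_le.1 (abs_le_of_eB hR hy i)).1, fun i => (abs_le.1 (abs_le_of_eB hR hy i)).2⟩

lemma vol_eB_lt_top {m : ℕ} {R : ℝ} (hR : 0 ≤ R) : volume (eB m R) < ∞ :=
  (measure_mono (eB_sub_Icc hR)).trans_lt (isCompact_Icc.measure_lt_top)

lemma det_bdd (m : ℕ) {R : ℝ} (hR : 0 ≤ R) : ∃ C : ℝ, 0 ≤ C ∧
    ∀ x : Fin m → V m, (∀ i, x i ∈ eB m R) → |Matrix.det (Matrix.of x)| ≤ C := by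
  have hc : IsCompact (Set.Icc (fun _ _ => -R : Fin m → V m) (fun _ _ => R)) := isCompact_Icc
  obtain ⟨C, hC⟩ := hc.exists_bound_of_continuousOn (continuous_det' m).continuousOn
  refine ⟨max C 0, le_max_right _ _, fun x hx => le_trans ?_ (le_max_left _ _)⟩
  exact hC x ⟨fun i => (eB_sub_Icc hR (hx i)).1, fun i => (eB_sub_Icc hR (hx i)).2⟩

lemma JJ_le (m : ℕ) {R : ℝ} {C : ℝ}
    (hC : ∀ x : Fin m → V m, (∀ i, x i ∈ eB m R) → |Matrix.det (Matrix.of x)| ≤ C)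
    (Ls : Fin m → Set (V m)) (h : ∀ i, Ls i ⊆ eB m R) (hm : ∀ i, MeasurableSet (Ls i)) :
    JJ m Ls ≤ ENNReal.ofReal C * ∏ i, volume (Ls i) := by
  have hp : MeasurableSet (Set.univ.pi Ls) := MeasurableSet.univ_pi hm
  rw [← volume_pi_pi, ← lintegral_indicator_const hp]
  refine lintegral_mono fun x => ?_
  by_cases hx : x ∈ Set.univ.pi Ls
  · rw [Set.indicator_of_mem hx, Set.indicator_of_mem hx]
    exact ENNReal.ofReal_le_ofReal (hC x fun i => h i (hx i trivial))
  · rw [Set.indicator_of_notMem hx, Set.indicator_of_notMem hx]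

lemma II_lt_top (m : ℕ) {R : ℝ} (hR : 0 ≤ R) (L : Set (V m)) (h : L ⊆ eB m R)
    (hm : MeasurableSet L) : II m L < ∞ := by
  obtain ⟨C, _, hC⟩ := det_bdd m hR
  refine (JJ_le m hC _ (fun _ => h) (fun _ => hm)).trans_lt ?_
  refine ENNReal.mul_lt_top (by simp) (ENNReal.prod_lt_top fun i _ => ?_)
  exact (measure_mono h).trans_lt (vol_eB_lt_top hR)

/-- continuity of the determinant functional at the ball -/
lemma II_cont (m : ℕ) {ρ : ℝ} (hρ : 0 ≤ ρ) : ∃ C : ℝ≥0∞, C ≠ ∞ ∧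
    ∀ L : Set (V m), MeasurableSet L → II m (eB m ρ) ≤ II m L + C * volume (eB m ρ \ L) := by
  obtain ⟨C, _, hC⟩ := det_bdd m hρ
  have hB := measurableSet_eB m ρ
  refine ⟨∑ i : Fin m, ENNReal.ofReal C * ∏ j ∈ Finset.univ.erase i, volume (eB m ρ), ?_, ?_⟩
  · refine (ENNReal.sum_lt_top.2 fun i _ => ENNReal.mul_lt_top (by simp)
      (ENNReal.prod_lt_top fun i _ => vol_eB_lt_top hρ)).ne
  intro L hL
  have hmm : ∀ i j : Fin m, MeasurableSet (Function.update (fun _ => eB m ρ) i (eB m ρ \ L) j) := by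
    intro i j
    by_cases h : j = i
    · subst h; simpa using hB.diff hL
    · simpa [h] using hB
  have step : II m (eB m ρ) ≤ II m L +
      ∑ i : Fin m, JJ m (Function.update (fun _ => eB m ρ) i (eB m ρ \ L)) := by
    rw [II, II, JJ, JJ]
    simp only [JJ]
    rw [← lintegral_finsetSum _ (fun i _ => measurable_JJ_integrand m (hmm i)),
      ← lintegral_add_left (measurable_JJ_integrand m fun _ => hL)]
    refine lintegral_mono fun x => ?_
    by_cases hx : x ∈ Set.univ.pi fun _ : Fin m => eB m ρ
    · rw [Set.indicator_of_mem hx]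
      by_cases hxL : ∀ i, x i ∈ L
      · rw [Set.indicator_of_mem (show x ∈ Set.univ.pi fun _ : Fin m => L from fun i _ => hxL i)]
        exact le_self_add
      · push Not at hxL
        obtain ⟨i, hi⟩ := hxL
        refine le_trans ?_ le_add_self
        refine le_trans ?_ (Finset.single_le_sum (f := fun i => (Set.univ.pi
          (Function.update (fun _ => eB m ρ) i (eB m ρ \ L))).indicator
          (fun x => ENNReal.ofReal |Matrix.det (Matrix.of x)|) x) (fun _ _ => zero_le) (Finset.mem_univ i))
        dsimp only
        rw [Set.indicator_of_mem]
        intro j _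
        by_cases h : j = i
        · subst h; simpa using ⟨hx j trivial, hi⟩
        · simpa [h] using hx j trivial
    · rw [Set.indicator_of_notMem hx]; exact zero_le
  refine step.trans ?_
  gcongr
  rw [Finset.sum_mul]
  refine Finset.sum_le_sum fun i _ => ?_
  refine (JJ_le m hC _ (fun j => ?_) (hmm i)).trans (le_of_eq ?_)
  · by_cases h : j = i
    · subst h; simp
    · simp [h]
  · rw [← Finset.mul_prod_erase Finset.univ _ (Finset.mem_univ i), mul_assoc]
    congr 1
    rw [mul_comm]
    congr 1
    · refine Finset.prod_congr rfl fun j hj => ?_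
      rw [Function.update_of_ne (Finset.ne_of_mem_erase hj)]
    · simp

/-- integrating the gap over all directions -/
lemma lint_QQ {m : ℕ} {L : Set (V m)} (hL : MeasurableSet L) (ρ : ℝ) :
    ∫⁻ v, volume (QQ L ρ v) = volume (eB m ρ \ L) * volume (L \ eB m ρ) := by
  have hB := measurableSet_eB m ρ
  have hA := hB.diff hL
  have hC := hL.diff hB
  have e : ∀ v, volume (QQ L ρ v) = ∫⁻ x, (eB m ρ \ L).indicator 1 x *
      (L \ eB m ρ).indicator (1 : V m → ℝ≥0∞) (x + v) := by
    intro v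
    rw [← lintegral_indicator_one (measurableSet_QQ hL ρ v)]
    refine lintegral_congr fun x => ?_
    by_cases h1 : x ∈ eB m ρ \ L <;> by_cases h2 : x + v ∈ L \ eB m ρ
    · rw [Set.indicator_of_mem h1, Set.indicator_of_mem h2, Set.indicator_of_mem (show x ∈ QQ L ρ v from ⟨h1, h2⟩)]
      simp
    · rw [Set.indicator_of_notMem h2, mul_zero, Set.indicator_of_notMem (fun h => h2 h.2)]
    · rw [Set.indicator_of_notMem h1, zero_mul, Set.indicator_of_notMem (fun h => h1 h.1)]
    · rw [Set.indicator_of_notMem h1, zero_mul, Set.indicator_of_notMem (fun h => h1 h.1)]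
  simp only [e]
  rw [lintegral_lintegral_swap]
  · have e2 : ∀ x : V m, ∫⁻ v, (eB m ρ \ L).indicator 1 x *
      (L \ eB m ρ).indicator (1 : V m → ℝ≥0∞) (x + v) =
        (eB m ρ \ L).indicator 1 x * volume (L \ eB m ρ) := by
      intro x
      rw [lintegral_const_mul, lintegral_add_left_eq_self (fun v => (L \ eB m ρ).indicator (1 : V m → ℝ≥0∞) v) x,
        lintegral_indicator_one hC]
      exact (measurable_one.indicator hC).comp (measurable_const_add x)
    simp only [e2]
    rw [lintegral_mul_const _ (measurable_one.indicator hA), lintegral_indicator_one hA]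
  · refine Measurable.aemeasurable ?_
    refine Measurable.mul ?_ ?_
    · exact (measurable_one.indicator hA).comp measurable_snd
    · exact (measurable_one.indicator hC).comp (measurable_snd.add measurable_fst)

/-- Busemann's random simplex inequality, for bounded sets. -/
lemma busemann_bdd {L₀ : Set (V (k+1))} (hL₀ : MeasurableSet L₀) {R : ℝ} (hR0 : 0 ≤ R)
    (hR : L₀ ⊆ eB (k+1) R) {ρ : ℝ} (hρ : 0 ≤ ρ) (hvol : volume L₀ = volume (eB (k+1) ρ)) :
    II (k+1) (eB (k+1) ρ) ≤ II (k+1) L₀ := by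
  set B := eB (k+1) ρ with hBdef
  have hB : MeasurableSet B := measurableSet_eB (k+1) ρ
  obtain ⟨C, hC, hcont⟩ := II_cont (k+1) hρ
  set W : ℝ≥0∞ := volume (Set.Icc (fun _ => -(R+ρ)) (fun _ => R+ρ) : Set (V (k+1))) with hW
  have hWfin : W ≠ ∞ := isCompact_Icc.measure_lt_top.ne
  have hBfin : volume B ≠ ∞ := (vol_eB_lt_top hρ).ne
  -- main estimate
  have main : ∀ ε : ℝ≥0∞, ε ≠ 0 → ε ≤ 1 →
      II (k+1) B ≤ II (k+1) L₀ + ε * (volume (L₀ \ B) + 1 + C * (W + 1)) := by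
    intro ε hε0 hε1
    have hεt : ε ≠ ∞ := (hε1.trans_lt ENNReal.one_lt_top).ne
    let cls : Set (Set (V (k+1))) := {L | MeasurableSet L ∧ L ⊆ eB (k+1) R ∧ volume L = volume B}
    let Λ : Set (V (k+1)) → ℝ≥0∞ := fun L => II (k+1) L + ε * volume (L \ B)
    set lam := ⨅ L ∈ cls, Λ L with hlam
    have hmem : L₀ ∈ cls := ⟨hL₀, hR, hvol⟩
    have hle : ∀ L ∈ cls, lam ≤ Λ L := fun L hL => iInf₂_le L hL
    have hfin : lam ≠ ∞ := by
      refine ((hle L₀ hmem).trans_lt ?_).ne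
      refine ENNReal.add_lt_top.2 ⟨II_lt_top _ hR0 _ hR hL₀, ENNReal.mul_lt_top hεt.lt_top ?_⟩
      exact (measure_mono Set.sdiff_subset).trans_lt (hvol ▸ hBfin.lt_top)
    obtain ⟨L, hL, hlt⟩ : ∃ L ∈ cls, Λ L < lam + ε ^ 3 := by
      have h : lam < lam + ε ^ 3 := ENNReal.lt_add_right hfin (pow_ne_zero _ hε0)
      rw [hlam] at h
      simpa only [iInf_lt_iff, exists_prop] using h
    have hΛfin : Λ L ≠ ∞ := (hlt.trans_le le_top).ne
    obtain ⟨hLm, hLR, hLv⟩ := hL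
    have hq : ∀ v, ε * volume (QQ L ρ v) ≤ ε ^ 3 := by
      intro v
      obtain ⟨L', h1, h2, h3, h4, h5⟩ := exists_sym hLm hR0 hLR ρ v
      have hle' := hle L' ⟨h1, h2, h3.trans hLv⟩
      have : Λ L' + ε * volume (QQ L ρ v) ≤ Λ L := by
        simp only [Λ]
        rw [add_assoc, ← mul_add]
        gcongr
      have h6 : lam + ε * volume (QQ L ρ v) ≤ lam + ε ^ 3 :=
        (add_le_add_left hle' _).trans (this.trans hlt.le)
      exact (ENNReal.add_le_add_iff_left hfin).1 h6
    have hq' : ∀ v, volume (QQ L ρ v) ≤ ε ^ 2 := by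
      intro v
      have := hq v
      rw [pow_succ', ENNReal.mul_le_mul_iff_right hε0 hεt] at this
      exact this
    have hδ : volume (L \ B) = volume (B \ L) := by
      have e1 := measure_inter_add_sdiff (μ := volume) L hB
      have e2 := measure_inter_add_sdiff (μ := volume) B hLm
      rw [hLv, ← e2, Set.inter_comm] at e1
      refine (ENNReal.add_right_inj ?_).1 e1
      exact ((measure_mono Set.inter_subset_left).trans_lt hBfin.lt_top).ne
    set δ := volume (B \ L)
    have hδ2 : δ ^ 2 ≤ ε ^ 2 * W := by
      have h := lint_QQ hLm ρ
      rw [← hBdef, hδ, ← pow_two] at h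
      rw [← h, hW, ← lintegral_indicator_const measurableSet_Icc]
      refine lintegral_mono fun v => ?_
      by_cases hv : v ∈ (Set.Icc (fun _ => -(R+ρ)) (fun _ => R+ρ) : Set (V (k+1)))
      · rw [Set.indicator_of_mem hv]; exact hq' v
      · rw [Set.indicator_of_notMem hv]
        have : QQ L ρ v = ∅ := by
          rw [Set.eq_empty_iff_forall_notMem]
          rintro x ⟨⟨hx1, _⟩, ⟨hx2, _⟩⟩
          apply hv
          have key : ∀ i, |v i| ≤ R + ρ := by
            intro i
            have a1 := abs_le_of_eB hρ hx1 i
            have a2 := abs_le_of_eB hR0 (hLR hx2) i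
            calc |v i| = |(x + v) i - x i| := by simp
              _ ≤ |(x + v) i| + |x i| := abs_sub _ _
              _ ≤ _ := add_le_add a2 a1
          exact ⟨fun i => (abs_le.1 (key i)).1, fun i => (abs_le.1 (key i)).2⟩
        rw [this]; simp
    have hδ1 : δ ≤ ε * (W + 1) := by
      have : δ ^ 2 ≤ (ε * (W + 1)) ^ 2 := by
        refine hδ2.trans ?_
        rw [mul_pow]
        gcongr
        calc W ≤ W + 1 := le_self_add
          _ = (W + 1) * 1 := (mul_one _).symm
          _ ≤ (W+1) * (W + 1) := by gcongr; exact le_add_self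
          _ = (W+1)^2 := (pow_two _).symm
      exact (ENNReal.pow_le_pow_left_iff (by norm_num)).1 this
    calc II (k+1) B ≤ II (k+1) L + C * δ := hcont L hLm
      _ ≤ Λ L + C * (ε * (W + 1)) := by
          gcongr
          exact le_self_add
      _ ≤ (lam + ε ^ 3) + C * (ε * (W + 1)) := by gcongr
      _ ≤ (Λ L₀ + ε) + C * (ε * (W + 1)) := by
          gcongr
          · exact hle L₀ hmem
          · calc ε ^ 3 = ε * ε ^ 2 := by ring
              _ ≤ ε * 1 := by gcongr; exact pow_le_one₀ zero_le hε1
              _ = ε := mul_one _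
      _ = _ := by simp only [Λ]; ring
  set K := (volume (L₀ \ B) + 1 + C * (W + 1)) with hK
  have hKfin : K ≠ ∞ := by
    refine ENNReal.add_ne_top.2 ⟨ENNReal.add_ne_top.2 ⟨?_, by simp⟩, ENNReal.mul_ne_top hC (by simp [hWfin])⟩
    exact ((measure_mono Set.sdiff_subset).trans_lt (hvol ▸ hBfin.lt_top)).ne
  have hK0 : K ≠ 0 := by
    rw [hK]; intro h; simp at h
  refine ENNReal.le_of_forall_pos_le_add fun η hη _ => ?_
  refine (main (min 1 (η / K)) ?_ (min_le_left _ _)).trans ?_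
  · have : (0 : ℝ≥0∞) < min 1 (η / K) := lt_min (by simp) (ENNReal.div_pos (by simpa using hη.ne') hKfin)
    exact this.ne'
  · gcongr
    calc min 1 (η / K) * K ≤ (η / K) * K := by gcongr; exact min_le_right _ _
      _ ≤ η := (ENNReal.div_mul_cancel hK0 hKfin).le
      
end FP

namespace FP

variable {k : ℕ}

lemma ball_eq {m : ℕ} (f : V m →ₗ[ℝ] V m) (hf : LinearMap.det f ≠ 0) :
    II m (eB m 1) * volume (f ⁻¹' (eB m 1)) ^ (m+1) =
      volume (eB m 1) ^ (m+1) * II m (f ⁻¹' (eB m 1)) := by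
  rw [Measure.addHaar_preimage_linearMap _ hf, ← II_linear f hf (measurableSet_eB m 1)]
  have h : ENNReal.ofReal |LinearMap.det f| * ENNReal.ofReal |(LinearMap.det f)⁻¹| = 1 := by
    rw [← ENNReal.ofReal_mul (abs_nonneg _), ← abs_mul, mul_inv_cancel₀ hf]; simp
  set d := ENNReal.ofReal |LinearMap.det f|
  set d' := ENNReal.ofReal |(LinearMap.det f)⁻¹|
  set J := II m (f ⁻¹' (eB m 1))
  calc d ^ (m+1) * J * (d' * volume (eB m 1)) ^ (m+1)
      = (d * d') ^ (m+1) * (volume (eB m 1) ^ (m+1) * J) := by ring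
    _ = _ := by rw [h]; simp

lemma eB_smul {m : ℕ} {ρ : ℝ} (hρ : 0 < ρ) :
    eB m ρ = (ρ⁻¹ • (LinearMap.id : V m →ₗ[ℝ] V m)) ⁻¹' (eB m 1) := by
  ext x
  simp only [eB, Set.mem_ofPred_eq, Set.mem_preimage, LinearMap.smul_apply, LinearMap.id_apply,
    Pi.smul_apply, smul_eq_mul, mul_pow, ← Finset.mul_sum]
  rw [inv_pow, inv_mul_le_iff₀ (by positivity)]; simp

lemma vol_eB_pos (m : ℕ) : 0 < volume (eB m 1) := by
  have h : IsOpen {x : V m | ∑ i, x i ^ 2 < 1} := isOpen_lt (by fun_prop) continuous_const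
  refine (h.measure_pos volume ⟨0, by simp⟩).trans_le (measure_mono fun x hx => ?_)
  simp only [eB, Set.mem_ofPred_eq] at hx ⊢
  simpa using hx.le

lemma det_smul_id {m : ℕ} (c : ℝ) :
    LinearMap.det (c • (LinearMap.id : V m →ₗ[ℝ] V m)) = c ^ m := by
  rw [LinearMap.det_smul]; simp

lemma vol_eB {m : ℕ} {ρ : ℝ} (hρ : 0 < ρ) :
    volume (eB m ρ) = ENNReal.ofReal (ρ ^ m) * volume (eB m 1) := by
  have hd : LinearMap.det (ρ⁻¹ • (LinearMap.id : V m →ₗ[ℝ] V m)) ≠ 0 := by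
    rw [det_smul_id]; positivity
  rw [eB_smul hρ, Measure.addHaar_preimage_linearMap _ hd, det_smul_id]
  rw [← inv_pow, inv_inv, abs_of_pos (by positivity)]

/-- Busemann random simplex inequality, bounded case -/
lemma busemann_bdd' {L : Set (V (k+1))} (hL : MeasurableSet L) {R : ℝ} (hR0 : 0 ≤ R)
    (hR : L ⊆ eB (k+1) R) :
    II (k+1) (eB (k+1) 1) * volume L ^ (k+2) ≤ volume (eB (k+1) 1) ^ (k+2) * II (k+1) L := by
  have hκ0 := vol_eB_pos (k+1)
  have hκ := vol_eB_lt_top (m := k+1) (R := 1) zero_le_one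
  have hLf : volume L < ∞ := (measure_mono hR).trans_lt (vol_eB_lt_top hR0)
  by_cases h0 : volume L = 0
  · simp [h0]
  set q : ℝ := (volume L / volume (eB (k+1) 1)).toReal with hq
  have hqf : volume L / volume (eB (k+1) 1) ≠ ∞ := (ENNReal.div_lt_top hLf.ne hκ0.ne').ne
  have hq0 : 0 < q := ENNReal.toReal_pos (ENNReal.div_pos h0 hκ.ne).ne' hqf
  set ρ : ℝ := q ^ ((1:ℝ) / (k+1:ℕ)) with hρd
  have hρ : 0 < ρ := Real.rpow_pos_of_pos hq0 _
  have hρm : ρ ^ (k+1) = q := by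
    rw [hρd, one_div, Real.rpow_inv_natCast_pow hq0.le (by omega)]
  have hvol : volume L = volume (eB (k+1) ρ) := by
    rw [vol_eB hρ, hρm, hq, ENNReal.ofReal_toReal hqf, ENNReal.div_mul_cancel hκ0.ne' hκ.ne]
  have hd : LinearMap.det (ρ⁻¹ • (LinearMap.id : V (k+1) →ₗ[ℝ] V (k+1))) ≠ 0 := by
    rw [det_smul_id]; positivity
  have hbe := ball_eq _ hd
  rw [← eB_smul hρ] at hbe
  rw [hvol, hbe]
  gcongr
  exact busemann_bdd hL hR0 hR hρ.le hvol

lemma II_mono {m : ℕ} {L L' : Set (V m)} (h : L ⊆ L') : II m L ≤ II m L' := by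
  refine lintegral_mono fun x => ?_
  exact Set.indicator_le_indicator_of_subset (Set.pi_mono fun _ _ => h) (fun _ => zero_le) x

/-- Busemann random simplex inequality -/
lemma busemann {L : Set (V (k+1))} (hL : MeasurableSet L) :
    II (k+1) (eB (k+1) 1) * volume L ^ (k+2) ≤ volume (eB (k+1) 1) ^ (k+2) * II (k+1) L := by
  have hmono : Monotone fun j : ℕ => L ∩ eB (k+1) j := by
    intro i j hij
    refine Set.inter_subset_inter_right _ fun x hx => ?_
    simp only [eB, Set.mem_ofPred_eq] at hx ⊢
    exact hx.trans (by gcongr)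
  have hU : ⋃ j : ℕ, L ∩ eB (k+1) j = L := by
    rw [← Set.inter_iUnion, Set.inter_eq_left]
    intro x _
    obtain ⟨j, hj⟩ := exists_nat_ge (∑ i, x i ^ 2)
    refine Set.mem_iUnion.2 ⟨j + 1, ?_⟩
    simp only [eB, Set.mem_ofPred_eq]
    push_cast
    nlinarith
  have ht := tendsto_measure_iUnion_atTop (μ := volume) hmono
  rw [hU] at ht
  have hβ : II (k+1) (eB (k+1) 1) ≠ ∞ :=
    (II_lt_top (k+1) zero_le_one _ subset_rfl (measurableSet_eB _ _)).ne
  have ht2 := ENNReal.Tendsto.const_mul (a := II (k+1) (eB (k+1) 1)) (ENNReal.Tendsto.pow (n := k+2) ht) (Or.inr hβ)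
  refine le_of_tendsto' ht2 fun j => ?_
  refine (busemann_bdd' (hL.inter (measurableSet_eB _ _)) (Nat.cast_nonneg j) Set.inter_subset_right).trans ?_
  gcongr
  exact II_mono Set.inter_subset_left

end FP

namespace FP

lemma det_null (m : ℕ) : volume {x : Fin m → V m | Matrix.det (Matrix.of x) = 0} = 0 := by
  set Z := {x : Fin m → V m | Matrix.det (Matrix.of x) = 0} with hZ
  have hZm : MeasurableSet Z := measurable_det' m (measurableSet_singleton 0)
  set one : Fin m → V m := fun i => Pi.single i 1 with hone
  have h1 : ∀ s : ℝ, ∫⁻ x : Fin m → V m, Z.indicator 1 (x + s • one) = volume Z := by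
    intro s
    rw [lintegral_add_right_eq_self (fun x => Z.indicator (1 : (Fin m → V m) → ℝ≥0∞) x) (s • one),
      lintegral_indicator_one hZm]
  have hmeas : Measurable (Function.uncurry fun (s : ℝ) (x : Fin m → V m) =>
      Z.indicator (1 : (Fin m → V m) → ℝ≥0∞) (x + s • one)) := by
    apply (measurable_one.indicator hZm).comp
    fun_prop
  have h2 : ∫⁻ s in Set.Icc (0:ℝ) 1, ∫⁻ x : Fin m → V m, Z.indicator 1 (x + s • one) = volume Z := by
    simp only [h1]; simp
  rw [lintegral_lintegral_swap hmeas.aemeasurable] at h2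
  rw [← h2]
  refine (lintegral_congr fun x => ?_).trans lintegral_zero
  refine le_antisymm ?_ zero_le
  refine (setLIntegral_le_lintegral _ _).trans ?_
  have : (fun s : ℝ => Z.indicator (1 : (Fin m → V m) → ℝ≥0∞) (x + s • one)) =
      {s : ℝ | x + s • one ∈ Z}.indicator 1 := by
    ext s; simp [Set.indicator]
  rw [this]
  have hfin : {s : ℝ | x + s • one ∈ Z}.Finite := by
    refine ((Matrix.charpoly (-(Matrix.of x))).roots.toFinset.finite_toSet).subset ?_
    intro s hs
    simp only [Finset.mem_coe, Multiset.mem_toFinset]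
    rw [Polynomial.mem_roots (Matrix.charpoly_monic _).ne_zero, Polynomial.IsRoot.def,
      Matrix.eval_charpoly]
    have : Matrix.det (Matrix.of (x + s • one)) = 0 := hs
    rw [← this]
    congr 1
    ext i j
    simp [hone, Matrix.diagonal_apply, Pi.single_apply, add_comm, eq_comm]
  rw [lintegral_indicator_one hfin.measurableSet, hfin.measure_zero]

/-- the slice of `K` by a graph hyperplane -/
def Ka {m : ℕ} (K : Set (V (m+1))) (a : V m) : Set (V m) :=
  {x | (Fin.cons (-∑ j, x j * a j) x : V (m+1)) ∈ K}

lemma measurable_cons {m : ℕ} : Measurable fun p : ℝ × V m => (Fin.cons p.1 p.2 : V (m+1)) := by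
  refine measurable_pi_lambda _ fun i => ?_
  refine Fin.cases ?_ (fun j => ?_) i
  · simpa using measurable_fst
  · simp only [Fin.cons_succ]; fun_prop

lemma measurable_Ka {m : ℕ} {K : Set (V (m+1))} (hK : MeasurableSet K) :
    MeasurableSet {p : V m × V m | p.2 ∈ Ka K p.1} := by
  have : Measurable fun p : V m × V m => (Fin.cons (-∑ j, p.2 j * p.1 j) p.2 : V (m+1)) :=
    measurable_cons.comp (show Measurable fun p : V m × V m => (-∑ j, p.2 j * p.1 j, p.2) by fun_prop)
  exact this hK

lemma measurableSet_Ka {m : ℕ} {K : Set (V (m+1))} (hK : MeasurableSet K) (a : V m) :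
    MeasurableSet (Ka K a) := measurable_prodMk_left (x := a) (measurable_Ka hK)

lemma measurable_vol_Ka {m : ℕ} {K : Set (V (m+1))} (hK : MeasurableSet K) :
    Measurable fun a => volume (Ka K a) := measurable_measure_prodMk_left (measurable_Ka hK)

lemma lint_linear {m : ℕ} (x : Fin m → V m) (hx : Matrix.det (Matrix.of x) ≠ 0)
    {g : V m → ℝ≥0∞} (hg : Measurable g) :
    ∫⁻ t, g t = ENNReal.ofReal |Matrix.det (Matrix.of x)| *
      ∫⁻ a : V m, g (fun i => -∑ j, x i j * a j) := by
  have hx' : Matrix.det (-(Matrix.of x)) ≠ 0 := by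
    rw [Matrix.det_neg]; exact mul_ne_zero (by simp) hx
  have h := Real.map_matrix_volume_pi_eq_smul_volume_pi hx'
  have h2 : ∫⁻ a : V m, g (fun i => -∑ j, x i j * a j) =
      ∫⁻ t, g t ∂(Measure.map (Matrix.toLin' (-(Matrix.of x))) volume) := by
    rw [lintegral_map hg (LinearMap.continuous_of_finiteDimensional _).measurable]
    refine lintegral_congr fun a => ?_
    congr 1
    ext i
    simp [Matrix.mulVec, dotProduct]
  rw [h2, h, lintegral_smul_measure, smul_eq_mul, ← mul_assoc, ← ENNReal.ofReal_mul (abs_nonneg _),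
    Matrix.det_neg]
  rw [← abs_mul]
  have : Matrix.det (Matrix.of x) * ((-1) ^ Fintype.card (Fin m) * Matrix.det (Matrix.of x))⁻¹
      = ((-1) ^ Fintype.card (Fin m))⁻¹ := by
    field_simp
  rw [this]; simp

/-- Blaschke-Petkantschin formula in a chart -/
lemma BP {m : ℕ} {K : Set (V (m+1))} (hK : MeasurableSet K) :
    ∫⁻ a : V m, II m (Ka K a) = volume K ^ m := by
  have hmp : MeasurePreserving (fun X : Fin m → V (m+1) =>
      ((fun i => X i 0, fun i j => X i j.succ) : (Fin m → ℝ) × (Fin m → V m))) := by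
    have h1 := volume_preserving_pi (ι := Fin m) (fun _ => volume_preserving_piFinSuccAbove (fun _ : Fin (m+1) => ℝ) 0)
    have h2 := volume_measurePreserving_arrowProdEquivProdArrow ℝ (V m) (Fin m)
    exact h2.comp h1
  set G : (Fin m → ℝ) × (Fin m → V m) → ℝ≥0∞ := fun p =>
    {p : (Fin m → ℝ) × (Fin m → V m) | ∀ i, (Fin.cons (p.1 i) (p.2 i) : V (m+1)) ∈ K}.indicator 1 p with hG
  have hGs : MeasurableSet {p : (Fin m → ℝ) × (Fin m → V m) | ∀ i, (Fin.cons (p.1 i) (p.2 i) : V (m+1)) ∈ K} := by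
    have : {p : (Fin m → ℝ) × (Fin m → V m) | ∀ i, (Fin.cons (p.1 i) (p.2 i) : V (m+1)) ∈ K} =
      ⋂ i, (fun p : (Fin m → ℝ) × (Fin m → V m) => (Fin.cons (p.1 i) (p.2 i) : V (m+1))) ⁻¹' K := by
      ext p; simp
    rw [this]
    refine MeasurableSet.iInter fun i => ?_
    have hh : Measurable fun p : (Fin m → ℝ) × (Fin m → V m) => (p.1 i, p.2 i) := by fun_prop
    exact (measurable_cons.comp hh) hK
  have hGm : Measurable G := measurable_one.indicator hGs
  clear_value G
  have e1 : volume K ^ m = ∫⁻ p, G p := by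
    rw [← hmp.lintegral_comp hGm]
    have : (fun X : Fin m → V (m+1) => G (fun i => X i 0, fun i j => X i j.succ)) =
        (Set.univ.pi fun _ : Fin m => K).indicator 1 := by
      ext X
      simp only [hG, Set.indicator, Set.mem_ofPred_eq]
      congr 1
      rw [Set.mem_pi]
      refine propext (forall_congr' fun i => ?_)
      have : (Fin.cons (X i 0) (fun j => X i j.succ) : V (m+1)) = X i := Fin.cons_self_tail (X i)
      rw [this]; simp
    rw [this, lintegral_indicator_one (MeasurableSet.univ_pi fun _ => hK), volume_pi_pi]
    simp
  have hP : Measurable fun q : (Fin m → V m) × V m => G (fun i => -∑ j, q.1 i j * q.2 j, q.1) :=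
    hGm.comp (by fun_prop)
  rw [e1, Measure.volume_eq_prod, lintegral_prod_symm _ hGm.aemeasurable]
  have hP1 : ∀ x : Fin m → V m, Measurable fun a : V m => G (fun i => -∑ j, x i j * a j, x) := by
    intro x
    apply hGm.comp
    fun_prop
  have e2 : ∀ᵐ x : Fin m → V m, ∫⁻ t, G (t, x) = ∫⁻ a : V m,
      ENNReal.ofReal |Matrix.det (Matrix.of x)| * G (fun i => -∑ j, x i j * a j, x) := by
    have : ∀ᵐ x : Fin m → V m, Matrix.det (Matrix.of x) ≠ 0 := by
      rw [ae_iff]; simpa using det_null m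
    filter_upwards [this] with x hx
    rw [lint_linear x hx (g := fun t => G (t, x)) (hGm.comp (measurable_prodMk_right (y := x))),
      lintegral_const_mul]
    exact hP1 x
  rw [lintegral_congr_ae e2, lintegral_lintegral_swap]
  · refine lintegral_congr fun a => ?_
    rw [II, JJ]
    refine lintegral_congr fun x => ?_
    have hiff : (x ∈ Set.univ.pi fun _ : Fin m => Ka K a) ↔
        ∀ i, (Fin.cons (-∑ j, x i j * a j) (x i) : V (m+1)) ∈ K := by
      rw [Set.mem_pi]; simp [Ka]
    by_cases h : ∀ i, (Fin.cons (-∑ j, x i j * a j) (x i) : V (m+1)) ∈ K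
    · rw [Set.indicator_of_mem (hiff.2 h)]; simp [hG, h]
    · rw [Set.indicator_of_notMem (fun h' => h (hiff.1 h'))]; simp [hG, h]
  · exact (((measurable_det m).comp measurable_fst).mul hP).aemeasurable

end FP

namespace FP

lemma chart_ineq {k : ℕ} {K : Set (V (k+1+1))} (hK : MeasurableSet K) :
    II (k+1) (eB (k+1) 1) * ∫⁻ a : V (k+1), volume (Ka K a) ^ (k+2) ≤
      volume (eB (k+1) 1) ^ (k+2) * volume K ^ (k+1) := by
  have hm : Measurable fun a => volume (Ka K a) ^ (k+2) := (measurable_vol_Ka hK).pow_const _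
  have hκ := vol_eB_lt_top (m := k+1) (R := 1) zero_le_one
  rw [← BP hK, ← lintegral_const_mul _ hm, ← lintegral_const_mul' _ _ (by finiteness)]
  exact lintegral_mono fun a => busemann (measurableSet_Ka hK a)

/-- the matrix `(1 + a aᵀ)^{1/2}` -/
def mA {m : ℕ} (a : V m) : Matrix (Fin m) (Fin m) ℝ :=
  1 + Matrix.replicateCol Unit a *
    Matrix.replicateRow Unit ((1 + √(1 + ∑ i, a i ^ 2))⁻¹ • a)

def fA {m : ℕ} (a : V m) : V m →ₗ[ℝ] V m := Matrix.toLin' (mA a)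

lemma det_fA {m : ℕ} (a : V m) : LinearMap.det (fA a) = √(1 + ∑ i, a i ^ 2) := by
  rw [fA, LinearMap.det_toLin', mA, Matrix.det_one_add_replicateCol_mul_replicateRow]
  have hs : 0 ≤ ∑ i, a i ^ 2 := Finset.sum_nonneg fun i _ => sq_nonneg _
  have h1 : dotProduct ((1 + √(1 + ∑ i, a i ^ 2))⁻¹ • a) a =
      (1 + √(1 + ∑ i, a i ^ 2))⁻¹ * ∑ i, a i ^ 2 := by
    rw [smul_dotProduct, smul_eq_mul]; congr 1; simp [dotProduct, sq]
  rw [h1]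
  have h2 := Real.sq_sqrt (show 0 ≤ 1 + ∑ i, a i ^ 2 by linarith)
  have h3 := Real.sqrt_nonneg (1 + ∑ i, a i ^ 2)
  set r := √(1 + ∑ i, a i ^ 2)
  have : 1 + r ≠ 0 := by positivity
  field_simp
  linarith

lemma det_fA_pos {m : ℕ} (a : V m) : 0 < LinearMap.det (fA a) := by
  rw [det_fA]
  have hs : 0 ≤ ∑ i, a i ^ 2 := Finset.sum_nonneg fun i _ => sq_nonneg _
  positivity

lemma fA_apply {m : ℕ} (a x : V m) (i : Fin m) :
    fA a x i = x i + (1 + √(1 + ∑ i, a i ^ 2))⁻¹ * (∑ j, x j * a j) * a i := by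
  simp only [fA, mA, Matrix.toLin'_apply, Matrix.add_mulVec, Matrix.one_mulVec, Pi.add_apply]
  congr 1
  rw [← Matrix.mulVec_mulVec]
  simp [Matrix.mulVec, dotProduct, Finset.mul_sum, Finset.sum_mul]
  refine Finset.sum_congr rfl fun j _ => by ring

lemma fA_norm {m : ℕ} (a x : V m) :
    ∑ i, fA a x i ^ 2 = (-∑ j, x j * a j) ^ 2 + ∑ i, x i ^ 2 := by
  simp only [fA_apply]
  have hs : 0 ≤ ∑ i, a i ^ 2 := Finset.sum_nonneg fun i _ => sq_nonneg _
  have h2 := Real.sq_sqrt (show 0 ≤ 1 + ∑ i, a i ^ 2 by linarith)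
  have h3 := Real.sqrt_nonneg (1 + ∑ i, a i ^ 2)
  set r := √(1 + ∑ i, a i ^ 2)
  set p := ∑ j, x j * a j with hp
  have e : ∀ i, (x i + (1 + r)⁻¹ * p * a i) ^ 2 =
      x i ^ 2 + (2 * ((1 + r)⁻¹ * p)) * (x i * a i) + ((1 + r)⁻¹ * p) ^ 2 * a i ^ 2 := fun i => by ring
  simp only [e, Finset.sum_add_distrib, ← Finset.mul_sum]
  rw [← hp]
  have : 1 + r ≠ 0 := by positivity
  have h4 : ∑ i, a i ^ 2 = r ^ 2 - 1 := by linarith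
  rw [h4]
  field_simp
  ring

lemma Ka_ball {m : ℕ} (a : V m) : Ka (eB (m+1) 1) a = fA a ⁻¹' (eB m 1) := by
  ext x
  simp only [Ka, eB, Set.mem_ofPred_eq, Set.mem_preimage, fA_norm, Fin.sum_univ_succ, Fin.cons_zero,
    Fin.cons_succ]

lemma chart_eq {m : ℕ} :
    II m (eB m 1) * ∫⁻ a : V m, volume (Ka (eB (m+1) 1) a) ^ (m+1) =
      volume (eB m 1) ^ (m+1) * volume (eB (m+1) 1) ^ m := by
  have hK := measurableSet_eB (m+1) 1
  have hm : Measurable fun a => volume (Ka (eB (m+1) 1) a) ^ (m+1) := (measurable_vol_Ka hK).pow_const _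
  have hκ := vol_eB_lt_top (m := m) (R := 1) zero_le_one
  rw [← BP hK, ← lintegral_const_mul _ hm, ← lintegral_const_mul' _ _ (by finiteness)]
  refine lintegral_congr fun a => ?_
  rw [Ka_ball]
  exact ball_eq _ (det_fA_pos a).ne'

end FP

namespace FP

section polar
variable {F : Type*} [NormedAddCommGroup F] [NormedSpace ℝ F] [MeasurableSpace F] [BorelSpace F]
  [FiniteDimensional ℝ F] [Nontrivial F] (μ : Measure F) [μ.IsAddHaarMeasure]

lemma polar {f : F → ℝ≥0∞} (hf : Measurable f) :
    ∫⁻ x, f x ∂μ = ∫⁻ θ : sphere (0 : F) 1, ∫⁻ r : Set.Ioi (0:ℝ), f ((r : ℝ) • (θ : F))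
      ∂(Measure.volumeIoiPow (Module.finrank ℝ F - 1)) ∂μ.toSphere := by
  have h := μ.measurePreserving_homeomorphUnitSphereProd
  have hg : Measurable fun p : sphere (0 : F) 1 × Set.Ioi (0:ℝ) => f ((p.2 : ℝ) • (p.1 : F)) := by
    apply hf.comp; fun_prop
  rw [← lintegral_prod (f := fun p : sphere (0 : F) 1 × Set.Ioi (0:ℝ) => f ((p.2 : ℝ) • (p.1 : F)))
    hg.aemeasurable, ← h.lintegral_comp hg]
  conv_lhs => rw [← restrict_compl_singleton (μ := μ) 0]
  rw [← lintegral_subtype_comap (measurableSet_singleton _).compl]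
  refine lintegral_congr fun x => ?_
  congr 1
  have hx : ‖(x : F)‖ ≠ 0 := norm_ne_zero_iff.2 x.2
  simp [smul_smul, hx]

lemma ioi_star (d m : ℕ) (hm : 0 < m) (hd : 0 < d) (c : ℝ≥0∞) :
    (Measure.volumeIoiPow (d - 1)) {r : Set.Ioi (0:ℝ) | ENNReal.ofReal r ^ m < c} =
      c ^ ((d:ℝ) / m) / d := by
  have hI : ∀ x : Set.Ioi (0:ℝ), Measure.volumeIoiPow (d-1) (Set.Iio x) =
      ENNReal.ofReal x ^ d / d := by
    intro x
    rw [Measure.volumeIoiPow_apply_Iio, Nat.sub_add_cancel hd, Nat.cast_pred hd, sub_add_cancel,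
      ENNReal.ofReal_div_of_pos (by exact_mod_cast hd), ENNReal.ofReal_pow x.2.out.le,
      ENNReal.ofReal_natCast]
  have hmR : (0:ℝ) < m := by exact_mod_cast hm
  have hdR : (0:ℝ) < d := by exact_mod_cast hd
  rcases eq_or_ne c 0 with rfl | hc0
  · rw [ENNReal.zero_rpow_of_pos (by positivity)]; simp
  rcases eq_or_ne c ∞ with rfl | hc
  · rw [ENNReal.top_rpow_of_pos (by positivity), ENNReal.top_div_of_ne_top (by simp)]
    have : {r : Set.Ioi (0:ℝ) | ENNReal.ofReal r ^ m < ∞} = Set.univ := by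
      ext r; simp
    rw [this]
    refine ENNReal.eq_top_of_forall_nnreal_le fun N => ?_
    have hx : (0:ℝ) < (N * d + 1 : ℝ) := by positivity
    refine le_trans ?_ ((hI ⟨N * d + 1, hx⟩).ge.trans (measure_mono (Set.subset_univ _)))
    rw [ENNReal.le_div_iff_mul_le (by simp [hd.ne']) (by simp)]
    have e : ENNReal.ofReal ((N:ℝ) * d + 1) = N * d + 1 := by
      rw [ENNReal.ofReal_add (by positivity) zero_le_one, ENNReal.ofReal_mul (by positivity)]; simp
    simp only [e]
    calc (N * d : ℝ≥0∞) ≤ N * d + 1 := le_self_add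
      _ ≤ (N * d + 1) ^ d := le_self_pow₀ le_add_self hd.ne'
  · set q : ℝ := (c ^ ((1:ℝ)/m)).toReal with hq
    have hcf : c ^ ((1:ℝ)/m) ≠ ∞ := ENNReal.rpow_ne_top_of_nonneg (by positivity) hc
    have hq0 : 0 < q := ENNReal.toReal_pos (by
      rw [Ne, ENNReal.rpow_eq_zero_iff]; push Not; exact ⟨fun h => absurd h hc0, fun h => absurd h hc⟩) hcf
    have hqe : ENNReal.ofReal q = c ^ ((1:ℝ)/m) := ENNReal.ofReal_toReal hcf
    have : {r : Set.Ioi (0:ℝ) | ENNReal.ofReal r ^ m < c} = Set.Iio ⟨q, hq0⟩ := by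
      ext r
      rw [Set.mem_ofPred_eq, Set.mem_Iio, ← Subtype.coe_lt_coe,
        ← ENNReal.ofReal_lt_ofReal_iff hq0, hqe, ← ENNReal.rpow_lt_rpow_iff (z := 1 / (m:ℝ)) (by positivity)]
      rw [← ENNReal.rpow_natCast, ← ENNReal.rpow_mul, mul_one_div_cancel hmR.ne', ENNReal.rpow_one]
    rw [this, hI, hqe, ← ENNReal.rpow_natCast, ← ENNReal.rpow_mul]
    congr 2; ring

lemma star_vol (m : ℕ) (hm : 0 < m) {ψ : F → ℝ≥0∞} (hψ : Measurable ψ)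
    (hh : ∀ r : ℝ, 0 < r → ∀ x, ψ (r • x) = ψ x) :
    μ {x | ENNReal.ofReal ‖x‖ ^ m < ψ x} =
      (∫⁻ θ : sphere (0 : F) 1, ψ θ ^ ((Module.finrank ℝ F : ℝ) / m) ∂μ.toSphere) / Module.finrank ℝ F := by
  have hS : MeasurableSet {x | ENNReal.ofReal ‖x‖ ^ m < ψ x} :=
    measurableSet_lt (by fun_prop) hψ
  rw [← lintegral_indicator_one hS, polar μ (measurable_one.indicator hS), ENNReal.div_eq_inv_mul,
    ← lintegral_const_mul' _ _ (by simp [Module.finrank_pos.ne'])]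
  refine lintegral_congr fun θ => ?_
  rw [← ENNReal.div_eq_inv_mul, ← ioi_star _ m hm Module.finrank_pos]
  have hθ : ‖(θ : F)‖ = 1 := by simp
  have hS2 : MeasurableSet {r : Set.Ioi (0:ℝ) | ENNReal.ofReal r ^ m < ψ θ} :=
    measurableSet_lt (by fun_prop) measurable_const
  rw [← lintegral_indicator_one hS2]
  refine lintegral_congr fun r => ?_
  have hr : (0:ℝ) < r := r.2
  simp only [Set.indicator, Set.mem_ofPred_eq, norm_smul, hθ, mul_one, hh r hr, Real.norm_eq_abs,
    abs_of_pos hr, Pi.one_apply]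
end polar
end FP

namespace FP

/-- Euclidean space -/
abbrev EE (n : ℕ) := EuclideanSpace ℝ (Fin n)

lemma subst_chart {m : ℕ} {h : V m → ℝ≥0∞} (hh : Measurable h) :
    ∫⁻ x : V (m+1), {x : V (m+1) | |x 0| < 1}.indicator (fun x => h fun j => x j.succ / x 0) x =
      (∫⁻ s : ℝ, {s : ℝ | |s| < 1}.indicator (fun s => ENNReal.ofReal (|s| ^ m)) s) * ∫⁻ a, h a := by
  have hmp := volume_preserving_piFinSuccAbove (fun _ : Fin (m+1) => ℝ) 0
  set G : ℝ × V m → ℝ≥0∞ := fun p => {p : ℝ × V m | |p.1| < 1}.indicator (fun p => h fun j => p.2 j / p.1) p with hG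
  have hGs : MeasurableSet {p : ℝ × V m | |p.1| < 1} := measurableSet_lt (by fun_prop) measurable_const
  have hGm : Measurable G := by
    refine Measurable.indicator (hh.comp ?_) hGs
    exact measurable_pi_lambda _ fun j => by fun_prop
  have e1 : ∫⁻ x : V (m+1), {x : V (m+1) | |x 0| < 1}.indicator (fun x => h fun j => x j.succ / x 0) x
      = ∫⁻ p, G p := by
    rw [← hmp.lintegral_comp hGm]; rfl
  have hsm : Measurable fun s : ℝ => {s : ℝ | |s| < 1}.indicator (fun s => ENNReal.ofReal (|s| ^ m)) s :=
    Measurable.indicator (by fun_prop) (measurableSet_lt (by fun_prop) measurable_const)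
  rw [e1, Measure.volume_eq_prod, lintegral_prod _ hGm.aemeasurable, ← lintegral_mul_const _ hsm]
  have hne : ∀ᵐ s : ℝ, s ≠ 0 := by rw [ae_iff]; simp
  refine lintegral_congr_ae ?_
  filter_upwards [hne] with s hs
  by_cases h1 : |s| < 1
  · have := Measure.map_addHaar_smul (volume : Measure (V m)) (inv_ne_zero hs)
    have e2 : ∫⁻ y, G (s, y) = ∫⁻ a, h a ∂(Measure.map (fun x => s⁻¹ • x) (volume : Measure (V m))) := by
      rw [lintegral_map hh (by fun_prop)]
      refine lintegral_congr fun y => ?_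
      simp only [hG, Set.indicator, Set.mem_ofPred_eq, h1, if_true]
      congr 1; ext j; simp [div_eq_inv_mul]
    rw [e2]
    change ∫⁻ a, h a ∂(Measure.map (s⁻¹ • ·) (volume : Measure (V m))) = _
    rw [this, lintegral_smul_measure]
    simp [Set.indicator, h1]
  · simp [hG, Set.indicator, h1]

lemma null_coord (m : ℕ) : ∀ᵐ θ : sphere (0 : EE (m+1)) 1 ∂(volume : Measure (EE (m+1))).toSphere,
    (θ : EE (m+1)) 0 ≠ 0 := by
  rw [ae_iff]
  have hms : MeasurableSet {θ : sphere (0 : EE (m+1)) 1 | ¬ (θ : EE (m+1)) 0 ≠ 0} := by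
    simp only [ne_eq, not_not]
    exact measurableSet_eq_fun (by fun_prop) measurable_const
  rw [Measure.toSphere_apply' _ hms]
  refine mul_eq_zero_of_right _ (measure_mono_null (t := {x : EE (m+1) | x 0 = 0}) ?_ ?_)
  · rintro _ ⟨r, _, _, ⟨θ, hθ, rfl⟩, rfl⟩
    simp only [ne_eq, not_not, Set.mem_ofPred_eq] at hθ
    simp [hθ]
  · have hmp := PiLp.volume_preserving_ofLp (Fin (m+1))
    have := hmp.measure_preimage (s := {x : V (m+1) | x 0 = 0})
      (measurableSet_eq_fun (by fun_prop) measurable_const).nullMeasurableSet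
    refine (Eq.trans ?_ this).trans ?_
    · rfl
    · rw [volume_pi]; exact Measure.pi_hyperplane _ 0 0

lemma gnom (m : ℕ) : ∃ C : ℝ≥0∞, C ≠ 0 ∧ C ≠ ∞ ∧ ∀ h : V m → ℝ≥0∞, Measurable h →
    ∫⁻ θ : sphere (0 : EE (m+1)) 1, ENNReal.ofReal |(θ : EE (m+1)) 0|⁻¹ ^ (m+1) *
      h (fun j => (θ : EE (m+1)) j.succ / (θ : EE (m+1)) 0) ∂(volume : Measure (EE (m+1))).toSphere =
      C * ∫⁻ a, h a := by
  set C2 := (∫⁻ s : ℝ, {s : ℝ | |s| < 1}.indicator (fun s => ENNReal.ofReal (|s| ^ m)) s) with hC2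
  have hsm : Measurable fun s : ℝ => {s : ℝ | |s| < 1}.indicator (fun s => ENNReal.ofReal (|s| ^ m)) s :=
    Measurable.indicator (by fun_prop) (measurableSet_lt (by fun_prop) measurable_const)
  have hC20 : C2 ≠ 0 := by
    refine (lintegral_pos_iff_support hsm |>.2 ?_).ne'
    refine lt_of_lt_of_le ?_ (measure_mono (s := Set.Ioo (0:ℝ) 1) fun s hs => ?_)
    · simp
    · have h1 : |s| < 1 := by rw [abs_of_pos hs.1]; exact hs.2
      have h2 : s ≠ 0 := hs.1.ne'
      simp only [Function.mem_support, Set.indicator, Set.mem_ofPred_eq, h1, if_true]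
      exact (ENNReal.ofReal_pos.2 (by positivity)).ne'
  have hC2f : C2 ≠ ∞ := by
    refine ne_top_of_le_ne_top (b := volume (Set.Ioo (-1:ℝ) 1)) (by simp) ?_
    rw [← lintegral_indicator_one measurableSet_Ioo]
    refine lintegral_mono fun s => ?_
    by_cases h1 : |s| < 1
    · rw [Set.indicator_of_mem (show s ∈ {s : ℝ | |s| < 1} from h1), Set.indicator_of_mem (show s ∈ Set.Ioo (-1:ℝ) 1 from abs_lt.1 h1)]
      exact ENNReal.ofReal_le_one.2 (pow_le_one₀ (abs_nonneg s) h1.le)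
    · rw [Set.indicator_of_notMem (show s ∉ {s : ℝ | |s| < 1} from h1)]; exact zero_le
  refine ⟨(m+1 : ℕ) * C2, mul_ne_zero (by simp) hC20, ENNReal.mul_ne_top (by simp) hC2f, fun h hh => ?_⟩
  rw [mul_assoc, ← subst_chart hh]
  set f : V (m+1) → ℝ≥0∞ := {x : V (m+1) | |x 0| < 1}.indicator (fun x => h fun j => x j.succ / x 0) with hf
  have hfs : MeasurableSet {x : V (m+1) | |x 0| < 1} := measurableSet_lt (by fun_prop) measurable_const
  have hfm : Measurable f := by
    refine Measurable.indicator (hh.comp ?_) hfs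
    exact measurable_pi_lambda _ fun j => by fun_prop
  have hmp := PiLp.volume_preserving_ofLp (Fin (m+1))
  rw [← hmp.lintegral_comp hfm, polar _ (f := fun x : EE (m+1) => f (WithLp.ofLp x)) (hfm.comp hmp.measurable), ← lintegral_const_mul' _ _ (by simp)]
  refine lintegral_congr_ae ?_
  filter_upwards [null_coord m] with θ hθ
  set t := (θ : EE (m+1)) 0
  have ht : 0 < |t| := abs_pos.2 hθ
  have e1 : ∀ r : Set.Ioi (0:ℝ), f (WithLp.ofLp ((r : ℝ) • (θ : EE (m+1)))) =
      (Set.Iio (⟨|t|⁻¹, inv_pos.2 ht⟩ : Set.Ioi (0:ℝ))).indicator 1 r * h (fun j => (θ : EE (m+1)) j.succ / t) := by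
    intro r
    have hr : (0:ℝ) < r := r.2
    have e : ∀ j : Fin m, (WithLp.ofLp ((r : ℝ) • (θ : EE (m+1)))) j.succ /
        (WithLp.ofLp ((r : ℝ) • (θ : EE (m+1)))) 0 = (θ : EE (m+1)) j.succ / t := by
      intro j; simp only [PiLp.smul_apply, smul_eq_mul]; exact mul_div_mul_left _ _ hr.ne'
    have e' : |(WithLp.ofLp ((r : ℝ) • (θ : EE (m+1)))) 0| < 1 ↔
        r ∈ (Set.Iio (⟨|t|⁻¹, inv_pos.2 ht⟩ : Set.Ioi (0:ℝ))) := by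
      rw [Set.mem_Iio, ← Subtype.coe_lt_coe, lt_inv_comm₀ hr ht]
      simp only [PiLp.smul_apply, smul_eq_mul, abs_mul, abs_of_pos hr]
      rw [← lt_div_iff₀' hr, one_div]
    simp only [hf]
    by_cases hb : r ∈ (Set.Iio (⟨|t|⁻¹, inv_pos.2 ht⟩ : Set.Ioi (0:ℝ)))
    · rw [Set.indicator_of_mem (show _ ∈ {x : V (m+1) | |x 0| < 1} from e'.2 hb), Set.indicator_of_mem hb]
      simp only [e, Pi.one_apply, one_mul]
    · rw [Set.indicator_of_notMem (show _ ∉ {x : V (m+1) | |x 0| < 1} from fun q => hb (e'.1 q)), Set.indicator_of_notMem hb]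
      simp
  simp only [e1]
  rw [lintegral_mul_const _ (measurable_one.indicator measurableSet_Iio), lintegral_indicator_one measurableSet_Iio,
    ← mul_assoc]
  congr 1
  rw [Measure.volumeIoiPow_apply_Iio, finrank_euclideanSpace_fin, Nat.add_sub_cancel,
    ← ENNReal.ofReal_natCast, ← ENNReal.ofReal_mul (by positivity), ← ENNReal.ofReal_pow (by positivity)]
  congr 1
  push_cast
  field_simp

end FP

namespace FP

/-- the graph map -/
def gr {m : ℕ} (a : V m) : V m →ₗ[ℝ] V (m+1) where
  toFun x := Fin.cons (-∑ j, x j * a j) x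
  map_add' x y := by
    ext i
    refine Fin.cases ?_ (fun j => ?_) i
    · simp [add_mul, Finset.sum_add_distrib]; ring
    · simp
  map_smul' c x := by
    ext i
    refine Fin.cases ?_ (fun j => ?_) i
    · simp [mul_assoc, Finset.mul_sum]
    · simp

lemma gr_zero {m : ℕ} (a x : V m) : gr a x 0 = -∑ j, x j * a j := rfl
lemma gr_succ {m : ℕ} (a x : V m) (j : Fin m) : gr a x j.succ = x j := rfl

lemma finrank_perp {m : ℕ} (w : sphere (0 : EE (m+1)) 1) :
    Module.finrank ℝ ((ℝ ∙ (w : EE (m+1)))ᗮ) = m := by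
  have hw : (w : EE (m+1)) ≠ 0 := by
    intro h; have := w.2; simp [h] at this
  haveI : Fact (Module.finrank ℝ (EE (m+1)) = m + 1) := ⟨by simp⟩
  exact Submodule.finrank_orthogonal_span_singleton hw

lemma section_vol {m : ℕ} (w : sphere (0 : EE (m+1)) 1) (hw : (w : EE (m+1)) 0 ≠ 0)
    (K : Set (V (m+1))) :
    volume {y : ((ℝ ∙ (w : EE (m+1)))ᗮ) | WithLp.ofLp (y : EE (m+1)) ∈ K} =
      ENNReal.ofReal |(w : EE (m+1)) 0|⁻¹ *
        volume (Ka K fun j => (w : EE (m+1)) j.succ / (w : EE (m+1)) 0) := by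
  set t := (w : EE (m+1)) 0 with ht
  set a : V m := fun j => (w : EE (m+1)) j.succ / t with ha
  have hdet : LinearMap.det (fA a) ≠ 0 := (det_fA_pos a).ne'
  set fe : V m ≃ₗ[ℝ] V m := LinearMap.equivOfDetNeZero (fA a) hdet with hfe
  have hfea : ∀ x, fe x = fA a x := fun x => rfl
  have hdet2 : LinearMap.det (fA a) = |t|⁻¹ := by
    rw [det_fA]
    have hn : ∑ i, (w : EE (m+1)) i ^ 2 = 1 := by
      rw [← EuclideanSpace.real_norm_sq_eq]; simp
    rw [Fin.sum_univ_succ] at hn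
    have : 1 + ∑ i, a i ^ 2 = (|t|⁻¹) ^ 2 := by
      simp only [ha, div_pow, ← Finset.sum_div]
      rw [inv_pow, sq_abs]
      field_simp
      exact hn
    rw [this, Real.sqrt_sq (by positivity)]
  -- the isometry
  let T : EE m →ₗ[ℝ] EE (m+1) :=
    (WithLp.linearEquiv 2 ℝ (V (m+1))).symm.toLinearMap ∘ₗ (gr a) ∘ₗ fe.symm.toLinearMap ∘ₗ
      (WithLp.linearEquiv 2 ℝ (V m)).toLinearMap
  have hT : ∀ x, WithLp.ofLp (T x) = gr a (fe.symm (WithLp.ofLp x)) := fun x => rfl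
  have hperp : ∀ x, T x ∈ ((ℝ ∙ (w : EE (m+1)))ᗮ) := by
    intro x
    rw [Submodule.mem_orthogonal_singleton_iff_inner_right, PiLp.inner_apply]
    simp only [hT]
    rw [Fin.sum_univ_succ]
    simp only [gr_zero, gr_succ, ha]
    simp only [RCLike.inner_apply, conj_trivial]
    rw [← ht, neg_mul, Finset.sum_mul]
    rw [neg_add_eq_zero]
    refine Finset.sum_congr rfl fun j _ => ?_
    field_simp
  have hnorm : ∀ x, ‖T x‖ = ‖x‖ := by
    intro x
    rw [← sq_eq_sq₀ (norm_nonneg _) (norm_nonneg _), EuclideanSpace.real_norm_sq_eq,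
      EuclideanSpace.real_norm_sq_eq]
    simp only [hT]
    rw [Fin.sum_univ_succ]
    simp only [gr_zero, gr_succ]
    rw [← fA_norm]
    simp only [← hfea, LinearEquiv.apply_symm_apply]
  let li : EE m →ₗᵢ[ℝ] ((ℝ ∙ (w : EE (m+1)))ᗮ) :=
    { toLinearMap := T.codRestrict _ hperp
      norm_map' := fun x => hnorm x }
  let e := li.toLinearIsometryEquiv (by rw [finrank_perp]; simp)
  have he : ∀ x, WithLp.ofLp ((e x : ((ℝ ∙ (w : EE (m+1)))ᗮ)) : EE (m+1)) =
      gr a (fe.symm (WithLp.ofLp x)) := fun x => rfl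
  have h1 := e.measurePreserving.measure_preimage_emb e.toHomeomorph.measurableEmbedding
    {y : ((ℝ ∙ (w : EE (m+1)))ᗮ) | WithLp.ofLp (y : EE (m+1)) ∈ K}
  rw [← h1]
  have h2 : e ⁻¹' {y : ((ℝ ∙ (w : EE (m+1)))ᗮ) | WithLp.ofLp (y : EE (m+1)) ∈ K} =
      WithLp.ofLp ⁻¹' (fe.symm ⁻¹' (Ka K a)) := rfl
  rw [h2]
  have h3 := (PiLp.volume_preserving_ofLp (Fin m)).measure_preimage_emb
    (MeasurableEquiv.toLp 2 (V m)).symm.measurableEmbedding (fe.symm ⁻¹' (Ka K a))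
  refine h3.trans ?_
  rw [Measure.addHaar_preimage_linearEquiv]
  rw [LinearEquiv.symm_symm]
  have : LinearMap.det (fe : V m →ₗ[ℝ] V m) = |t|⁻¹ := by
    rw [← hdet2]; rfl
  rw [this, abs_inv, abs_abs]

end FP

namespace FP

/-- degree zero homogeneous extension -/
def ext0 {n : ℕ} (φ : sphere (0 : EE n) 1 → ℝ≥0∞) (x : EE n) : ℝ≥0∞ :=
  if h : x ∈ ({0}ᶜ : Set (EE n)) then φ (homeomorphUnitSphereProd (EE n) ⟨x, h⟩).1 else 0

lemma ext0_meas {n : ℕ} {φ : sphere (0 : EE n) 1 → ℝ≥0∞} (hφ : Measurable φ) :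
    Measurable (ext0 φ) := by
  classical
  refine Measurable.dite (s := ({0}ᶜ : Set (EE n)))
    (f := fun x => φ (homeomorphUnitSphereProd (EE n) x).1) (g := fun _ => 0) ?_ measurable_const
    (measurableSet_singleton _).compl
  exact hφ.comp (measurable_fst.comp (homeomorphUnitSphereProd (EE n)).measurable)

lemma ext0_smul {n : ℕ} (φ : sphere (0 : EE n) 1 → ℝ≥0∞) (r : ℝ) (hr : 0 < r) (x : EE n) :
    ext0 φ (r • x) = ext0 φ x := by
  by_cases hx : x = 0
  · simp [hx]
  have h1 : x ∈ ({0}ᶜ : Set (EE n)) := hx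
  have h2 : r • x ∈ ({0}ᶜ : Set (EE n)) := by simp [hx, hr.ne']
  rw [ext0, ext0, dif_pos h1, dif_pos h2]
  congr 1
  ext1
  simp only [homeomorphUnitSphereProd_apply_fst_coe, norm_smul, Real.norm_eq_abs, abs_of_pos hr, smul_smul]
  congr 1
  field_simp

lemma ext0_sphere {n : ℕ} (φ : sphere (0 : EE n) 1 → ℝ≥0∞) (θ : sphere (0 : EE n) 1) :
    ext0 φ θ = φ θ := by
  have h1 : (θ : EE n) ∈ ({0}ᶜ : Set (EE n)) := by
    intro h
    have h' : (θ : EE n) = 0 := h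
    have := θ.2; simp [h'] at this
  rw [ext0, dif_pos h1]
  congr 1
  ext1
  simp [homeomorphUnitSphereProd_apply_fst_coe]

/-- volume of the ball as a function of the dimension -/
def kap (d : ℕ) : ℝ≥0∞ := volume (ball (0 : EE d) 1)

lemma kap_ne (d : ℕ) : kap d ≠ 0 ∧ kap d ≠ ∞ :=
  ⟨(measure_ball_pos _ _ one_pos).ne', measure_ball_lt_top.ne⟩

lemma kap_eB (d : ℕ) : volume (eB d 1) = kap d := by
  rw [kap, ← Measure.addHaar_unitClosedBall_eq_addHaar_unitBall,
    ← (PiLp.volume_preserving_ofLp (Fin d)).measure_preimage (measurableSet_eB d 1).nullMeasurableSet]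
  congr 1
  ext x
  simp only [eB, Set.mem_preimage, Set.mem_ofPred_eq, mem_closedBall_zero_iff]
  rw [← EuclideanSpace.real_norm_sq_eq, sq_le_sq₀ (norm_nonneg _) zero_le_one]

lemma vol_perp {m : ℕ} [NeZero m] (w : sphere (0 : EE (m+1)) 1) :
    volume (ball (0 : ((ℝ ∙ (w : EE (m+1)))ᗮ)) 1) = kap m := by
  have : Nontrivial ((ℝ ∙ (w : EE (m+1)))ᗮ) :=
    Module.nontrivial_of_finrank_pos (R := ℝ) (by rw [finrank_perp]; exact Nat.pos_of_neZero m)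
  rw [kap, InnerProductSpace.volume_ball, InnerProductSpace.volume_ball, finrank_perp]
  simp

/-- the star body -/
def KE {m : ℕ} (φ : sphere (0 : EE (m+1)) 1 → ℝ≥0∞) : Set (V (m+1)) :=
  {x | ENNReal.ofReal ‖WithLp.toLp 2 x‖ ^ m < ext0 φ (WithLp.toLp 2 x)}

lemma measurableSet_KE {m : ℕ} {φ : sphere (0 : EE (m+1)) 1 → ℝ≥0∞} (hφ : Measurable φ) :
    MeasurableSet (KE φ) := by
  have h := (PiLp.volume_preserving_toLp (Fin (m+1))).measurable
  exact measurableSet_lt (by fun_prop) ((ext0_meas hφ).comp h)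

lemma Funk_eq {m : ℕ} [NeZero m] {φ : sphere (0 : EE (m+1)) 1 → ℝ≥0∞} (hφ : Measurable φ)
    (w : sphere (0 : EE (m+1)) 1) :
    Funk (m+1) φ w = (kap m)⁻¹ *
      volume {y : ((ℝ ∙ (w : EE (m+1)))ᗮ) | WithLp.ofLp (y : EE (m+1)) ∈ KE φ} := by
  have hm : 0 < m := Nat.pos_of_neZero m
  have : Nontrivial ((ℝ ∙ (w : EE (m+1)))ᗮ) :=
    Module.nontrivial_of_finrank_pos (R := ℝ) (by rw [finrank_perp]; exact hm)
  have h := star_vol (volume : Measure ((ℝ ∙ (w : EE (m+1)))ᗮ)) m hm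
    (ψ := fun y => ext0 φ (y : EE (m+1))) ((ext0_meas hφ).comp measurable_subtype_coe)
    (fun r hr x => ext0_smul φ r hr x)
  rw [Funk, Measure.toSphere_apply_univ, vol_perp, finrank_perp]
  rw [finrank_perp, div_self (by exact_mod_cast hm.ne')] at h
  have h2 : {y : ((ℝ ∙ (w : EE (m+1)))ᗮ) | WithLp.ofLp (y : EE (m+1)) ∈ KE φ} =
    {y : ((ℝ ∙ (w : EE (m+1)))ᗮ) | ENNReal.ofReal ‖y‖ ^ m < ext0 φ (y : EE (m+1))} := rfl
  rw [h2, h, ENNReal.mul_inv (by simp [hm.ne']) (by simp), mul_comm ((m : ℝ≥0∞)⁻¹), mul_assoc,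
    ENNReal.div_eq_inv_mul]
  congr 2
  refine lintegral_congr fun v => ?_
  rw [ENNReal.rpow_one]
  exact (ext0_sphere φ _).symm

lemma vol_KE {m : ℕ} (hm : 0 < m) {φ : sphere (0 : EE (m+1)) 1 → ℝ≥0∞} (hφ : Measurable φ) :
    volume (KE φ) = kap (m+1) *
      ∫⁻ θ, φ θ ^ (((m+1:ℕ):ℝ) / m) ∂(sphMeasure (m+1)) := by
  have h := star_vol (volume : Measure (EE (m+1))) m hm (ext0_meas hφ) (ext0_smul φ)
  rw [finrank_euclideanSpace_fin] at h
  have h1 : volume (KE φ) = volume {x | ENNReal.ofReal ‖x‖ ^ m < ext0 φ x} :=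
    (PiLp.volume_preserving_toLp (Fin (m+1))).measure_preimage
      (s := {x : EE (m+1) | ENNReal.ofReal ‖x‖ ^ m < ext0 φ x})
      (measurableSet_lt (by fun_prop) (ext0_meas hφ)).nullMeasurableSet
  rw [h1, h, sphMeasure, lintegral_smul_measure, Measure.toSphere_apply_univ,
    finrank_euclideanSpace_fin, smul_eq_mul, ← kap, ENNReal.mul_inv (by simp) (by simp)]
  simp only [ext0_sphere]
  rw [mul_comm (((m+1 : ℕ) : ℝ≥0∞)⁻¹), mul_assoc, ← mul_assoc (kap (m+1)),
    ENNReal.mul_inv_cancel (kap_ne _).1 (kap_ne _).2, one_mul, ENNReal.div_eq_inv_mul]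

lemma ball_section {m : ℕ} [NeZero m] (w : sphere (0 : EE (m+1)) 1) :
    volume {y : ((ℝ ∙ (w : EE (m+1)))ᗮ) | WithLp.ofLp (y : EE (m+1)) ∈ eB (m+1) 1} = kap m := by
  rw [← vol_perp w, ← Measure.addHaar_unitClosedBall_eq_addHaar_unitBall]
  congr 1
  ext y
  simp only [eB, Set.mem_ofPred_eq, mem_closedBall_zero_iff]
  rw [← EuclideanSpace.real_norm_sq_eq, sq_le_sq₀ (norm_nonneg _) zero_le_one]
  rfl

lemma section_int {m : ℕ} : ∃ C : ℝ≥0∞, C ≠ 0 ∧ C ≠ ∞ ∧ ∀ K : Set (V (m+1)), MeasurableSet K →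
    ∫⁻ w : sphere (0 : EE (m+1)) 1,
      volume {y : ((ℝ ∙ (w : EE (m+1)))ᗮ) | WithLp.ofLp (y : EE (m+1)) ∈ K} ^ (m+1)
      ∂(volume : Measure (EE (m+1))).toSphere = C * ∫⁻ a, volume (Ka K a) ^ (m+1) := by
  obtain ⟨C, h0, h1, h⟩ := gnom m
  refine ⟨C, h0, h1, fun K hK => ?_⟩
  rw [← h _ ((measurable_vol_Ka hK).pow_const _)]
  refine lintegral_congr_ae ?_
  filter_upwards [null_coord m] with w hw
  rw [section_vol w hw, mul_pow]

lemma sph_univ (m : ℕ) : (volume : Measure (EE (m+1))).toSphere Set.univ ≠ 0 ∧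
    (volume : Measure (EE (m+1))).toSphere Set.univ ≠ ∞ := by
  rw [Measure.toSphere_apply_univ, finrank_euclideanSpace_fin, ← kap]
  exact ⟨mul_ne_zero (by simp) (kap_ne _).1, ENNReal.mul_ne_top (by simp) (kap_ne _).2⟩

lemma main_ineq {k : ℕ} {φ : sphere (0 : EE (k+1+1)) 1 → ℝ≥0∞} (hφ : Measurable φ) :
    ∫⁻ w, Funk (k+1+1) φ w ^ (k+1+1) ∂(sphMeasure (k+1+1)) ≤
      (∫⁻ θ, φ θ ^ (((k+1+1:ℕ):ℝ) / (k+1:ℕ)) ∂(sphMeasure (k+1+1))) ^ (k+1) := by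
  obtain ⟨C, hC0, hC, hsec⟩ := section_int (m := k+1)
  set Φ := ∫⁻ θ, φ θ ^ (((k+1+1:ℕ):ℝ) / (k+1:ℕ)) ∂(sphMeasure (k+1+1)) with hΦ
  have hK := measurableSet_KE hφ
  have i1 := chart_ineq hK
  have i2 := chart_eq (m := k+1)
  rw [kap_eB, vol_KE (by omega) hφ, ← hΦ] at i1
  rw [kap_eB, kap_eB] at i2
  have s1 := hsec _ hK
  have s2 := hsec _ (measurableSet_eB (k+1+1) 1)
  simp only [ball_section, lintegral_const] at s2
  have hF : ∫⁻ w, Funk (k+1+1) φ w ^ (k+1+1) ∂(volume : Measure (EE (k+1+1))).toSphere =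
      (kap (k+1))⁻¹ ^ (k+1+1) * (C * ∫⁻ a, volume (Ka (KE φ) a) ^ (k+1+1)) := by
    rw [← s1, ← lintegral_const_mul' _ _ (by simp [(kap_ne (k+1)).1])]
    refine lintegral_congr fun w => ?_
    rw [Funk_eq hφ w, mul_pow]
  rw [sphMeasure, lintegral_smul_measure, smul_eq_mul, hF]
  obtain ⟨hσ0, hσ⟩ := sph_univ (k+1)
  set σ := (volume : Measure (EE (k+1+1))).toSphere Set.univ
  set β := II (k+1) (eB (k+1) 1)
  set A := ∫⁻ a, volume (Ka (KE φ) a) ^ (k+1+1)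
  set D := ∫⁻ a, volume (Ka (eB (k+1+1) 1) a) ^ (k+1+1)
  obtain ⟨hm0, hm⟩ := kap_ne (k+1)
  obtain ⟨hn0, hn⟩ := kap_ne (k+1+1)
  set κm := kap (k+1)
  set κn := kap (k+1+1)
  have hβ0 : β ≠ 0 := by
    intro h; rw [h, zero_mul] at i2
    exact (mul_ne_zero (pow_ne_zero _ hm0) (pow_ne_zero _ hn0)) i2.symm
  have hβ : β ≠ ∞ := (II_lt_top (k+1) zero_le_one _ subset_rfl (measurableSet_eB _ _)).ne
  -- `β * A ≤ β * D * Φ^m`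
  have i3 : A ≤ D * Φ ^ (k+1) := by
    refine (ENNReal.mul_le_mul_iff_right hβ0 hβ).1 ?_
    calc β * A ≤ κm ^ (k+2) * (κn * Φ) ^ (k+1) := i1
      _ = (κm ^ (k+1+1) * κn ^ (k+1)) * Φ ^ (k+1) := by ring
      _ = β * (D * Φ ^ (k+1)) := by rw [← i2]; ring
  calc σ⁻¹ * (κm⁻¹ ^ (k+1+1) * (C * A)) ≤ σ⁻¹ * (κm⁻¹ ^ (k+1+1) * (C * (D * Φ ^ (k+1)))) := by gcongr
    _ = σ⁻¹ * (κm⁻¹ ^ (k+1+1) * ((C * D) * Φ ^ (k+1))) := by ring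
    _ = (σ⁻¹ * σ) * (κm⁻¹ * κm) ^ (k+1+1) * Φ ^ (k+1) := by rw [← s2]; ring
    _ = Φ ^ (k+1) := by
      rw [ENNReal.inv_mul_cancel hσ0 hσ, ENNReal.inv_mul_cancel hm0 hm]; simp

lemma Funk_one {m : ℕ} [NeZero m] (w : sphere (0 : EE (m+1)) 1) : Funk (m+1) (fun _ => 1) w = 1 := by
  rw [Funk, lintegral_const, one_mul, Measure.toSphere_apply_univ, vol_perp, finrank_perp]
  exact ENNReal.inv_mul_cancel (mul_ne_zero (by simp [NeZero.ne m]) (kap_ne m).1)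
    (ENNReal.mul_ne_top (by simp) (kap_ne m).2)

lemma sph_one (m : ℕ) : sphMeasure (m+1) Set.univ = 1 := by
  rw [sphMeasure, Measure.smul_apply, smul_eq_mul]
  exact ENNReal.inv_mul_cancel (sph_univ m).1 (sph_univ m).2

end FP

/-- The sharp `L^{n/(n-1)} → L^n` inequality, with constant 1, for the codimension-one Funk
transform; no symmetry assumption on `φ` is required, and the constant `1` is sharp. -/
theorem stmt13 (n : ℕ) (hn : 3 ≤ n) :
    (∀ φ : sphere (0 : EuclideanSpace ℝ (Fin n)) 1 → ℝ≥0∞, Measurable φ →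
      (∫⁻ w, Funk n φ w ^ (n : ℝ) ∂(sphMeasure n)) ^ (1 / (n : ℝ)) ≤
        (∫⁻ θ, φ θ ^ ((n : ℝ) / ((n : ℝ) - 1)) ∂(sphMeasure n)) ^ (((n : ℝ) - 1) / (n : ℝ))) ∧
    (∀ C : ℝ≥0∞,
      (∀ φ : sphere (0 : EuclideanSpace ℝ (Fin n)) 1 → ℝ≥0∞, Measurable φ →
        (∫⁻ w, Funk n φ w ^ (n : ℝ) ∂(sphMeasure n)) ^ (1 / (n : ℝ)) ≤
          C * (∫⁻ θ, φ θ ^ ((n : ℝ) / ((n : ℝ) - 1)) ∂(sphMeasure n)) ^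
            (((n : ℝ) - 1) / (n : ℝ))) →
      1 ≤ C) := by

  obtain ⟨k, rfl⟩ : ∃ k, n = k + 1 + 1 := ⟨n - 2, by omega⟩
  have hc : ((k + 1 + 1 : ℕ) : ℝ) - 1 = ((k + 1 : ℕ) : ℝ) := by push_cast; ring
  have hp : (0 : ℝ) < ((k + 1 + 1 : ℕ) : ℝ) := by positivity
  rw [hc]
  refine ⟨fun φ hφ => ?_, fun C hC => ?_⟩
  · have h := FP.main_ineq hφ
    simp only [ENNReal.rpow_natCast]
    rw [div_eq_mul_one_div (((k + 1 : ℕ) : ℝ)) (((k + 1 + 1 : ℕ) : ℝ)), ENNReal.rpow_mul, ENNReal.rpow_natCast]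
    exact ENNReal.rpow_le_rpow h (by positivity)
  · have h := hC (fun _ => 1) measurable_const
    simp only [FP.Funk_one, ENNReal.one_rpow, lintegral_const, FP.sph_one, mul_one] at h
    exact h
end
end

section
/- Let 1 ≤ p < ∞ be real, let μ be real with μ > (n−1) − n/p − 1/p′, and set ν = μ − (n−2)/p′ and c₁ = (Γ((n−1)/2)/Γ(1/2)) · Γ((μ + n/p − (n−1) + 1/p′)/2) / Γ((μ + n/p − 1/p)/2). Then for every measurable φ : S^{n-1} → [0,∞], ( ∫_{S^{n-1}} ( (Fφ)(w) )^p |w_n|^{νp} (1 − w_n²)^{((1−ν)p − n)/2} d*w )^{1/p} ≤ c₁ · ( ∫_{S^{n-1}} φ(θ)^p (1 − θ_n²)^{μp/2} |θ_n|^{(n−1−μ)p − n} d*θ )^{1/p}, with c₁ the sharp constant. (Case k = n−1 of the paper's weighted norm inequality for the Funk-type transform F_k, obtained from the weighted k-plane transform estimate by stereographic projection; here sin d(w^⊥) = |w_n| and cos d(w^⊥) = (1 − w_n²)^{1/2}.) -/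
open MeasureTheory Metric Real
open scoped ENNReal NNReal

noncomputable section

section StmtHelpers
open Set Module


section FunkAux

variable {E : Type*} [NormedAddCommGroup E] [InnerProductSpace ℝ E] [FiniteDimensional ℝ E]
  [MeasurableSpace E] [BorelSpace E]

theorem lint_polar [Nontrivial E] (f : E → ℝ≥0∞) (hf : Measurable f) :
    ∫⁻ x, f x = ∫⁻ v : sphere (0 : E) 1, (∫⁻ r in Ioi (0 : ℝ),
      ENNReal.ofReal (r ^ (finrank ℝ E - 1)) * f (r • (v : E)))
        ∂((volume : Measure E).toSphere) := by
  have h1 : ∫⁻ x, f x = ∫⁻ x : ({0}ᶜ : Set E), f x ∂((volume : Measure E).comap (↑)) := by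
    rw [lintegral_subtype_comap (measurableSet_singleton _).compl, restrict_compl_singleton]
  have h2 := ((volume : Measure E).measurePreserving_homeomorphUnitSphereProd).lintegral_comp_emb
    (Homeomorph.measurableEmbedding _)
    (fun q : sphere (0 : E) 1 × Ioi (0 : ℝ) => f ((q.2 : ℝ) • (q.1 : E)))
  have h3 : ∀ x : ({0}ᶜ : Set E), ((homeomorphUnitSphereProd E x).2 : ℝ) •
      ((homeomorphUnitSphereProd E x).1 : E) = x := by
    intro x
    have := (homeomorphUnitSphereProd E).symm_apply_apply x
    conv_rhs => rw [← this]
    simp only [homeomorphUnitSphereProd_symm_apply_coe]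
  simp only [h3] at h2
  have hm : Measurable (fun q : sphere (0 : E) 1 × Ioi (0 : ℝ) => f ((q.2 : ℝ) • (q.1 : E))) := by
    fun_prop
  rw [h1, h2, lintegral_prod _ hm.aemeasurable]
  refine lintegral_congr fun v => ?_
  rw [Measure.volumeIoiPow, lintegral_withDensity_eq_lintegral_mul _ (by fun_prop) (by fun_prop)]
  rw [← lintegral_subtype_comap measurableSet_Ioi]
  rfl

theorem lint_gamma {q : ℝ} (hq : -1 < q) :
    ∫⁻ r in Ioi (0 : ℝ), ENNReal.ofReal (r ^ q * Real.exp (-r ^ 2)) =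
      ENNReal.ofReal (Real.Gamma ((q + 1) / 2) / 2) := by
  have h := integral_rpow_mul_exp_neg_rpow (p := 2) (q := q) (by norm_num) hq
  have hpos : 0 < Real.Gamma ((q + 1) / 2) := Real.Gamma_pos_of_pos (by linarith)
  have e : (fun x : ℝ => x ^ q * Real.exp (-x ^ 2)) = fun x => x ^ q * Real.exp (-x ^ (2:ℝ)) := by
    funext x; rw [show (2:ℝ) = ((2:ℕ):ℝ) by norm_num, Real.rpow_natCast]
  have hi : IntegrableOn (fun x : ℝ => x ^ q * Real.exp (-x ^ 2)) (Ioi 0) := by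
    rw [e]
    by_contra hcon
    have := integral_undef hcon
    rw [h] at this
    have : (0:ℝ) < 1 / 2 * Real.Gamma ((q + 1) / 2) := by positivity
    linarith
  rw [← ofReal_integral_eq_lintegral_ofReal hi, e, h]
  · congr 1; ring
  · filter_upwards [ae_restrict_mem measurableSet_Ioi] with x hx
    have : (0:ℝ) < x := hx
    positivity

theorem lint_homog [Nontrivial E] (f : E → ℝ≥0∞) (hf : Measurable f)
    (Φ : sphere (0 : E) 1 → ℝ≥0∞) (hΦ : Measurable Φ) (b : ℝ)
    (hb : 0 < b + (finrank ℝ E : ℝ))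
    (h : ∀ v : sphere (0 : E) 1, ∀ r : ℝ, 0 < r →
      f (r • (v : E)) = Φ v * ENNReal.ofReal (r ^ b * Real.exp (-r ^ 2))) :
    ∫⁻ x, f x = (∫⁻ v, Φ v ∂((volume : Measure E).toSphere)) *
      ENNReal.ofReal (Real.Gamma ((b + (finrank ℝ E : ℝ)) / 2) / 2) := by
  rw [lint_polar f hf, ← lintegral_mul_const _ hΦ]
  refine lintegral_congr fun v => ?_
  have hd : 0 < finrank ℝ E := finrank_pos
  have hq : -1 < b + ((finrank ℝ E - 1 : ℕ) : ℝ) := by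
    rw [Nat.cast_pred hd]; linarith
  have := lint_gamma hq
  rw [show b + ((finrank ℝ E - 1 : ℕ) : ℝ) + 1 = b + (finrank ℝ E : ℝ) by
    rw [Nat.cast_pred hd]; ring] at this
  rw [← this, ← lintegral_const_mul _ (by fun_prop)]
  refine setLIntegral_congr_fun measurableSet_Ioi fun r hr => ?_
  have hr : 0 < r := hr
  rw [h v r hr, Real.rpow_add hr, Real.rpow_natCast, mul_left_comm, ← ENNReal.ofReal_mul (by positivity)]
  congr 2; ring

theorem lint_split (w : E) (hw : ‖w‖ = 1) (f : E → ℝ≥0∞) (hf : Measurable f) :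
    ∫⁻ x, f x = ∫⁻ u : (ℝ ∙ w)ᗮ, ∫⁻ s : ℝ, f ((u : E) + s • w) := by
  have h1 := ((ℝ ∙ w).orthogonalDecomposition.symm.measurePreserving).lintegral_comp hf
  rw [← h1]
  have h2 := (WithLp.volume_preserving_toLp (ℝ ∙ w) (ℝ ∙ w)ᗮ).lintegral_comp
    (f := fun x => f ((ℝ ∙ w).orthogonalDecomposition.symm x)) (by fun_prop)
  rw [← h2]
  rw [Measure.volume_eq_prod, lintegral_prod_symm _ (by fun_prop)]
  refine lintegral_congr fun u => ?_
  have h3 := (LinearIsometryEquiv.toSpanUnitSingleton w hw).measurePreserving.lintegral_comp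
    (f := fun k : (ℝ ∙ w) => f ((ℝ ∙ w).orthogonalDecomposition.symm (WithLp.toLp 2 (k, u))))
    (by fun_prop)
  rw [← h3]
  refine lintegral_congr fun s => ?_
  congr 1
  rw [add_comm]
  rfl

theorem lint_gauss : ∫⁻ x : E, ENNReal.ofReal (Real.exp (-‖x‖ ^ 2)) =
    ENNReal.ofReal (Real.pi ^ ((finrank ℝ E : ℝ) / 2)) := by
  have h := GaussianFourier.integral_rexp_neg_mul_sq_norm (V := E) (b := 1) one_pos
  simp only [neg_mul, one_mul, div_one] at h
  have hpos : (0:ℝ) < Real.pi ^ ((finrank ℝ E : ℝ) / 2) := by positivity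
  rw [← ofReal_integral_eq_lintegral_ofReal, h]
  · by_contra hcon
    rw [integral_undef hcon] at h
    linarith
  · exact Filter.Eventually.of_forall fun x => (Real.exp_pos _).le

end FunkAux

section FunkAux2

variable {E : Type*} [NormedAddCommGroup E] [InnerProductSpace ℝ E] [FiniteDimensional ℝ E]
  [MeasurableSpace E] [BorelSpace E]

theorem lint_affine (a c : ℝ) (hc : c ≠ 0) (Ψ : ℝ → ℝ≥0∞) (hΨ : Measurable Ψ) :
    ∫⁻ t : ℝ, Ψ (a + t * c) = ENNReal.ofReal |c|⁻¹ * ∫⁻ s : ℝ, Ψ s := by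
  have h1 : ∫⁻ t : ℝ, Ψ (a + t * c) = ∫⁻ s, Ψ (a + s) ∂(Measure.map (· * c) volume) := by
    rw [lintegral_map (by fun_prop) (by fun_prop)]
  rw [h1, Real.map_volume_mul_right hc, lintegral_smul_measure, lintegral_add_left_eq_self Ψ a,
    abs_inv, smul_eq_mul]

theorem lint_inv (c : ℝ) (hc : c ≠ 0) (G : ℝ → ℝ≥0∞) :
    ∫⁻ t : ℝ, ENNReal.ofReal |t|⁻¹ * G t = ∫⁻ t : ℝ, ENNReal.ofReal |t|⁻¹ * G (-(c / t)) := by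
  have h0 : ∀ H : ℝ → ℝ≥0∞, ∫⁻ t : ℝ, H t = ∫⁻ t in ({0}ᶜ : Set ℝ), H t := by
    intro H; rw [restrict_compl_singleton]
  rw [h0, h0 fun t => ENNReal.ofReal |t|⁻¹ * G (-(c / t))]
  have him : (fun t : ℝ => -(c / t)) '' ({0}ᶜ : Set ℝ) = {0}ᶜ := by
    ext x
    simp only [mem_image, mem_compl_iff, mem_singleton_iff]
    constructor
    · rintro ⟨t, ht, rfl⟩
      simp [ht, hc]
    · intro hx
      refine ⟨-(c / x), by simp [hx, hc], by field_simp⟩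
  have h := lintegral_image_eq_lintegral_abs_deriv_mul (s := ({0}ᶜ : Set ℝ))
    (f := fun t : ℝ => -(c / t)) (f' := fun t => c / t ^ 2)
    (measurableSet_singleton _).compl ?_ ?_ (fun t => ENNReal.ofReal |t|⁻¹ * G t)
  · rw [him] at h
    rw [h]
    refine setLIntegral_congr_fun (measurableSet_singleton _).compl fun t ht => ?_
    have ht : t ≠ 0 := ht
    rw [← mul_assoc, ← ENNReal.ofReal_mul (abs_nonneg _)]
    congr 2
    rw [abs_neg, abs_div, abs_div, abs_pow]
    have : |t| ≠ 0 := abs_ne_zero.2 ht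
    have : |c| ≠ 0 := abs_ne_zero.2 hc
    field_simp
  · intro t ht
    have ht : t ≠ 0 := ht
    have := ((hasDerivAt_inv ht).const_mul c).neg
    refine (this.congr_deriv ?_).hasDerivWithinAt
    field_simp
  · intro x hx y hy hxy
    have hx : x ≠ 0 := hx
    have hy : y ≠ 0 := hy
    simp only [neg_inj] at hxy
    rw [div_eq_div_iff hx hy] at hxy
    exact (mul_left_cancel₀ hc hxy).symm

/-- The point of the hyperplane orthogonal to `w` lying over `x`. -/
def gmap (e w x : E) : E := x - (inner ℝ w x / inner ℝ w e) • e

theorem perp_inner (w : E) (u : (ℝ ∙ w)ᗮ) : inner ℝ w (u : E) = 0 :=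
  Submodule.mem_orthogonal_singleton_iff_inner_right.1 u.2

theorem lint_chart (e w : E) (he : ‖e‖ = 1) (hw : ‖w‖ = 1) (hc : inner ℝ w e ≠ 0)
    (h : E → ℝ≥0∞) (hh : Measurable h) :
    ∫⁻ u : (ℝ ∙ w)ᗮ, h u =
      ENNReal.ofReal |inner ℝ w e|⁻¹ * ∫⁻ x : (ℝ ∙ e)ᗮ, h (gmap e w x) := by
  set k : ℝ → ℝ≥0∞ := (Icc (0 : ℝ) 1).indicator 1 with hk
  have hkm : Measurable k := measurable_one.indicator measurableSet_Icc
  have hk1 : ∫⁻ s, k s = 1 := by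
    rw [hk, lintegral_indicator_one measurableSet_Icc]; simp
  have hww : inner ℝ w w = (1 : ℝ) := by rw [real_inner_self_eq_norm_sq, hw]; norm_num
  have hee : inner ℝ e e = (1 : ℝ) := by rw [real_inner_self_eq_norm_sq, he]; norm_num
  have hgm : Measurable (fun x : E => gmap e w x) := by unfold gmap; fun_prop
  have A1 : ∫⁻ x : E, h (x - (inner ℝ w x : ℝ) • w) * k (inner ℝ w x) = ∫⁻ u : (ℝ ∙ w)ᗮ, h u := by
    rw [lint_split w hw _ (by fun_prop)]
    refine lintegral_congr fun u => ?_
    have : ∀ s : ℝ, inner ℝ w ((u : E) + s • w) = s := by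
      intro s; rw [inner_add_right, perp_inner, inner_smul_right, hww]; ring
    simp only [this, add_sub_cancel_right]
    rw [lintegral_const_mul _ hkm, hk1, mul_one]
  rw [← A1, lint_split e he _ (by fun_prop)]
  set c : ℝ := inner ℝ w e with hcdef
  have hw' : w - c • e ∈ (ℝ ∙ e)ᗮ := by
    rw [Submodule.mem_orthogonal_singleton_iff_inner_right, inner_sub_right, inner_smul_right, hee,
      real_inner_comm, ← hcdef]; ring
  set w' : (ℝ ∙ e)ᗮ := ⟨w - c • e, hw'⟩ with hw'def
  have key : ∀ (x : (ℝ ∙ e)ᗮ) (t : ℝ),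
      h ((x : E) + t • e - (inner ℝ w ((x : E) + t • e) : ℝ) • w) * k (inner ℝ w ((x : E) + t • e)) =
      (fun s => h (gmap e w ((x - s • w' : (ℝ ∙ e)ᗮ) : E)) * k s) (inner ℝ w (x : E) + t * c) := by
    intro x t
    have e1 : inner ℝ w ((x : E) + t • e) = inner ℝ w (x : E) + t * c := by
      rw [inner_add_right, inner_smul_right]
    dsimp only
    rw [e1]
    congr 2
    unfold gmap
    rw [← hcdef]
    simp only [hw'def, Submodule.coe_sub, Submodule.coe_smul, inner_sub_right, inner_smul_right, hww,
      ← hcdef]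
    match_scalars
    · ring
    · field_simp; ring
    · field_simp
  simp only [key]
  have hm2 : Measurable (fun q : (ℝ ∙ e)ᗮ × ℝ =>
      h (gmap e w ((q.1 - q.2 • w' : (ℝ ∙ e)ᗮ) : E)) * k q.2) := by
    fun_prop
  have : ∀ x : (ℝ ∙ e)ᗮ, ∫⁻ t : ℝ, (fun s => h (gmap e w ((x - s • w' : (ℝ ∙ e)ᗮ) : E)) * k s)
      (inner ℝ w (x : E) + t * c) = ENNReal.ofReal |c|⁻¹ *
        ∫⁻ s, h (gmap e w ((x - s • w' : (ℝ ∙ e)ᗮ) : E)) * k s := by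
    intro x
    exact lint_affine _ c hc (fun s => h (gmap e w ((x - s • w' : (ℝ ∙ e)ᗮ) : E)) * k s)
      (by fun_prop)
  simp only [this]
  rw [lintegral_const_mul _ hm2.lintegral_prod_right', lintegral_lintegral_swap hm2.aemeasurable]
  congr 1
  have : ∀ s : ℝ, ∫⁻ x : (ℝ ∙ e)ᗮ, h (gmap e w ((x - s • w' : (ℝ ∙ e)ᗮ) : E)) * k s =
      (∫⁻ x : (ℝ ∙ e)ᗮ, h (gmap e w x)) * k s := by
    intro s
    rw [lintegral_mul_const _ (by fun_prop),
      lintegral_sub_right_eq_self (fun x : (ℝ ∙ e)ᗮ => h (gmap e w x)) (s • w')]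
  simp only [this]
  rw [lintegral_const_mul _ hkm, hk1, mul_one]

theorem lint_symm (e : E) [Nontrivial (ℝ ∙ e)ᗮ] (Φ Ψ : E → ℝ≥0∞)
    (hΦ : Measurable Φ) (hΨ : Measurable Ψ) :
    ∫⁻ y : (ℝ ∙ e)ᗮ, ∫⁻ t : ℝ, ∫⁻ x : (ℝ ∙ e)ᗮ, ENNReal.ofReal |t|⁻¹ *
      (Φ ((x : E) - (inner ℝ (y : E) (x : E) / t) • e) * Ψ ((y : E) + t • e)) =
    ∫⁻ y : (ℝ ∙ e)ᗮ, ∫⁻ t : ℝ, ∫⁻ x : (ℝ ∙ e)ᗮ, ENNReal.ofReal |t|⁻¹ *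
      (Ψ ((x : E) - (inner ℝ (y : E) (x : E) / t) • e) * Φ ((y : E) + t • e)) := by
  have sw : ∀ Φ Ψ : E → ℝ≥0∞, Measurable Φ → Measurable Ψ → ∀ y : (ℝ ∙ e)ᗮ,
      ∫⁻ t : ℝ, ∫⁻ x : (ℝ ∙ e)ᗮ, ENNReal.ofReal |t|⁻¹ *
      (Φ ((x : E) - (inner ℝ (y : E) (x : E) / t) • e) * Ψ ((y : E) + t • e)) =
      ∫⁻ x : (ℝ ∙ e)ᗮ, ∫⁻ t : ℝ, ENNReal.ofReal |t|⁻¹ *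
      (Φ ((x : E) - (inner ℝ (y : E) (x : E) / t) • e) * Ψ ((y : E) + t • e)) := by
    intro Φ Ψ hΦ hΨ y
    exact lintegral_lintegral_swap (Measurable.aemeasurable (by unfold Function.uncurry; fun_prop))
  simp only [sw Φ Ψ hΦ hΨ, sw Ψ Φ hΨ hΦ]
  rw [lintegral_lintegral_swap]
  swap
  · refine Measurable.aemeasurable ?_
    unfold Function.uncurry
    refine Measurable.lintegral_prod_right' (f := fun (q : ((ℝ ∙ e)ᗮ × (ℝ ∙ e)ᗮ) × ℝ) =>
      ENNReal.ofReal |q.2|⁻¹ * (Φ ((q.1.2 : E) - (inner ℝ (q.1.1 : E) (q.1.2 : E) / q.2) • e) *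
        Ψ ((q.1.1 : E) + q.2 • e))) ?_
    fun_prop
  refine lintegral_congr_ae ?_
  have hne : ∀ᵐ x : (ℝ ∙ e)ᗮ, x ≠ 0 := by
    rw [ae_iff]; simp
  filter_upwards [hne] with x hx
  have hnull : ∀ᵐ y : (ℝ ∙ e)ᗮ, inner ℝ x y ≠ (0 : ℝ) := by
    have := Measure.addHaar_submodule (volume : Measure (ℝ ∙ e)ᗮ) (ℝ ∙ x)ᗮ (by
      intro htop
      have : x ∈ (ℝ ∙ x)ᗮ := by rw [htop]; trivial
      rw [Submodule.mem_orthogonal_singleton_iff_inner_right, inner_self_eq_zero] at this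
      exact hx this)
    rw [ae_iff]
    convert this using 2
    ext y
    simp [Submodule.mem_orthogonal_singleton_iff_inner_right]
  refine lintegral_congr_ae ?_
  filter_upwards [hnull] with y hy
  have hy' : inner ℝ (x : E) (y : E) ≠ (0 : ℝ) := hy
  rw [lint_inv (inner ℝ (x : E) (y : E)) hy'
    (fun t => Φ ((x : E) - (inner ℝ (y : E) (x : E) / t) • e) * Ψ ((y : E) + t • e))]
  refine lintegral_congr_ae ?_
  have ht0 : ∀ᵐ t : ℝ, t ≠ 0 := by rw [ae_iff]; simp
  filter_upwards [ht0] with t ht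
  rw [real_inner_comm (x : E) (y : E)]
  have : inner ℝ (x : E) (y : E) / -(inner ℝ (x : E) (y : E) / t) = -t := by
    field_simp
  rw [this, mul_comm (Φ _)]
  congr 3
  · rw [neg_smul, sub_eq_add_neg]
  · rw [neg_smul, sub_neg_eq_add]

end FunkAux2

section FunkAux3

variable {E : Type*} [NormedAddCommGroup E] [InnerProductSpace ℝ E] [FiniteDimensional ℝ E]
  [MeasurableSpace E] [BorelSpace E]

/-- The radial projection onto the unit sphere (with the value `e` at the origin). -/
def nrm (e : sphere (0 : E) 1) (x : E) : sphere (0 : E) 1 :=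
  ⟨open Classical in if x = 0 then (e : E) else ‖x‖⁻¹ • x, by
    split_ifs with h
    · exact e.2
    · rw [mem_sphere_zero_iff_norm, norm_smul, norm_inv, norm_norm,
        inv_mul_cancel₀ (norm_ne_zero_iff.2 h)]⟩

theorem measurable_nrm (e : sphere (0 : E) 1) : Measurable (nrm e) := by
  refine Measurable.subtype_mk ?_
  refine Measurable.ite (measurableSet_singleton 0) measurable_const ?_
  fun_prop

theorem nrm_coe (e : sphere (0 : E) 1) {x : E} (hx : x ≠ 0) : (nrm e x : E) = ‖x‖⁻¹ • x := by
  simp [nrm, hx]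

theorem sph_norm (v : sphere (0 : E) 1) : ‖(v : E)‖ = 1 := mem_sphere_zero_iff_norm.1 v.2

theorem nrm_smul (e v : sphere (0 : E) 1) {r : ℝ} (hr : 0 < r) : nrm e (r • (v : E)) = v := by
  have hv : (v : E) ≠ 0 := by
    intro h; have := sph_norm v; rw [h, norm_zero] at this; norm_num at this
  ext1
  rw [nrm_coe e (smul_ne_zero hr.ne' hv), norm_smul, sph_norm, smul_smul, Real.norm_of_nonneg hr.le,
    mul_one, inv_mul_cancel₀ hr.ne', one_smul]

/-- The Funk transform on the unit sphere of an inner product space. -/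
def FunkE (φ : sphere (0 : E) 1 → ℝ≥0∞) (w : sphere (0 : E) 1) : ℝ≥0∞ :=
  ((volume : Measure ((ℝ ∙ (w : E))ᗮ)).toSphere Set.univ)⁻¹ *
    ∫⁻ v : sphere (0 : ((ℝ ∙ (w : E))ᗮ)) 1,
      φ ⟨((v : ((ℝ ∙ (w : E))ᗮ)) : E), by
          have hv := v.2
          simp only [mem_sphere_iff_norm, sub_zero] at hv ⊢
          rwa [Submodule.coe_norm] at hv⟩
      ∂((volume : Measure ((ℝ ∙ (w : E))ᗮ)).toSphere)

theorem finrank_perp {m : ℕ} (hd : finrank ℝ E = m + 1) (w : sphere (0 : E) 1) :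
    finrank ℝ (ℝ ∙ (w : E))ᗮ = m := by
  have : Fact (finrank ℝ E = m + 1) := ⟨hd⟩
  refine Submodule.finrank_orthogonal_span_singleton ?_
  intro h; have := sph_norm w; rw [h, norm_zero] at this; norm_num at this

theorem nontrivial_perp {m : ℕ} (hm : 2 ≤ m) (hd : finrank ℝ E = m + 1) (w : sphere (0 : E) 1) :
    Nontrivial (ℝ ∙ (w : E))ᗮ := by
  refine nontrivial_of_finrank_pos (R := ℝ) ?_
  rw [finrank_perp hd w]; omega

theorem funkE_eq {m : ℕ} (hm : 2 ≤ m) (hd : finrank ℝ E = m + 1) (e w : sphere (0 : E) 1)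
    (φ : sphere (0 : E) 1 → ℝ≥0∞) (hφ : Measurable φ) :
    FunkE φ w = (ENNReal.ofReal (Real.pi ^ ((m : ℝ) / 2)))⁻¹ *
      ∫⁻ u : (ℝ ∙ (w : E))ᗮ, φ (nrm e u) * ENNReal.ofReal (Real.exp (-‖(u : E)‖ ^ 2)) := by
  have := nontrivial_perp hm hd w
  have hf := finrank_perp hd w
  have hm0 : (0 : ℝ) < m := by positivity
  have hnm := measurable_nrm e
  have hsph : ∀ v : sphere (0 : ((ℝ ∙ (w : E))ᗮ)) 1, ((v : (ℝ ∙ (w : E))ᗮ) : E) ∈ sphere (0 : E) 1 := by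
    intro v
    have hv := sph_norm v
    rw [mem_sphere_zero_iff_norm]
    exact hv
  have h1 := lint_homog (E := (ℝ ∙ (w : E))ᗮ)
    (fun u => φ (nrm e u) * ENNReal.ofReal (Real.exp (-‖(u : E)‖ ^ 2))) (by fun_prop)
    (fun v => φ ⟨v, hsph v⟩) (by fun_prop) 0 (by rw [hf]; linarith) (by
      intro v r hr
      have e1 : nrm e ((r • (v : (ℝ ∙ (w : E))ᗮ) : (ℝ ∙ (w : E))ᗮ) : E) = ⟨v, hsph v⟩ := by
        rw [Submodule.coe_smul]
        exact nrm_smul e ⟨v, hsph v⟩ hr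
      have e2 : ‖((r • (v : (ℝ ∙ (w : E))ᗮ) : (ℝ ∙ (w : E))ᗮ) : E)‖ = r := by
        rw [Submodule.coe_smul, norm_smul, Real.norm_of_nonneg hr.le,
          mem_sphere_zero_iff_norm.1 (hsph v), mul_one]
      rw [e1, e2, Real.rpow_zero, one_mul])
  have h2 := lint_homog (E := (ℝ ∙ (w : E))ᗮ)
    (fun u => ENNReal.ofReal (Real.exp (-‖u‖ ^ 2))) (by fun_prop)
    (fun v => 1) (by fun_prop) 0 (by rw [hf]; linarith) (by
      intro v r hr
      have e2 : ‖(r • (v : (ℝ ∙ (w : E))ᗮ))‖ = r := by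
        rw [norm_smul, Real.norm_of_nonneg hr.le, sph_norm v, mul_one]
      rw [e2, Real.rpow_zero, one_mul, one_mul])
  rw [lint_gauss, hf, lintegral_one] at h2
  rw [h1, h2, hf]
  set S := (volume : Measure ((ℝ ∙ (w : E))ᗮ)).toSphere Set.univ
  have hJ : 0 < Real.Gamma ((0 + (m : ℝ)) / 2) / 2 := by
    have := Real.Gamma_pos_of_pos (show 0 < (0 + (m : ℝ)) / 2 by linarith)
    positivity
  have hJ0 : ENNReal.ofReal (Real.Gamma ((0 + (m : ℝ)) / 2) / 2) ≠ 0 := by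
    simpa using hJ
  rw [ENNReal.mul_inv (Or.inr ENNReal.ofReal_ne_top) (Or.inr hJ0)]
  rw [mul_comm (∫⁻ _, _ ∂_) (ENNReal.ofReal _), ← mul_assoc, mul_assoc S⁻¹,
    ENNReal.inv_mul_cancel hJ0 ENNReal.ofReal_ne_top, mul_one]
  rfl

theorem lint_thick (w : E) (hw : ‖w‖ = 1) (h : E → ℝ≥0∞) (hh : Measurable h) :
    ∫⁻ u : (ℝ ∙ w)ᗮ, h u = ∫⁻ x : E, h (x - (inner ℝ w x : ℝ) • w) *
      (Icc (0 : ℝ) 1).indicator 1 (inner ℝ w x) := by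
  set k : ℝ → ℝ≥0∞ := (Icc (0 : ℝ) 1).indicator 1 with hk
  have hkm : Measurable k := measurable_one.indicator measurableSet_Icc
  have hk1 : ∫⁻ s, k s = 1 := by
    rw [hk, lintegral_indicator_one measurableSet_Icc]; simp
  have hww : inner ℝ w w = (1 : ℝ) := by rw [real_inner_self_eq_norm_sq, hw]; norm_num
  rw [lint_split w hw _ (by fun_prop)]
  refine (lintegral_congr fun u => ?_).symm
  have : ∀ s : ℝ, inner ℝ w ((u : E) + s • w) = s := by
    intro s; rw [inner_add_right, perp_inner, inner_smul_right, hww]; ring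
  simp only [this, add_sub_cancel_right]
  rw [lintegral_const_mul _ hkm, hk1, mul_one]

theorem measurable_funkE {m : ℕ} (hm : 2 ≤ m) (hd : finrank ℝ E = m + 1) (e : sphere (0 : E) 1)
    (φ : sphere (0 : E) 1 → ℝ≥0∞) (hφ : Measurable φ) : Measurable (FunkE φ) := by
  have hnm := measurable_nrm e
  have hkm : Measurable ((Icc (0 : ℝ) 1).indicator 1 : ℝ → ℝ≥0∞) :=
    measurable_one.indicator measurableSet_Icc
  have : FunkE φ = fun w : sphere (0 : E) 1 => (ENNReal.ofReal (Real.pi ^ ((m : ℝ) / 2)))⁻¹ *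
      ∫⁻ x : E, (φ (nrm e (x - (inner ℝ (w : E) x : ℝ) • (w : E))) *
        ENNReal.ofReal (Real.exp (-‖x - (inner ℝ (w : E) x : ℝ) • (w : E)‖ ^ 2))) *
      (Icc (0 : ℝ) 1).indicator 1 (inner ℝ (w : E) x) := by
    funext w
    rw [funkE_eq hm hd e w φ hφ, lint_thick (w : E) (sph_norm w)
      (fun u => φ (nrm e u) * ENNReal.ofReal (Real.exp (-‖(u : E)‖ ^ 2))) (by fun_prop)]
  rw [this]
  refine Measurable.const_mul ?_ _
  refine Measurable.lintegral_prod_right' (f := fun q : sphere (0 : E) 1 × E =>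
    (φ (nrm e (q.2 - (inner ℝ (q.1 : E) q.2 : ℝ) • (q.1 : E))) *
        ENNReal.ofReal (Real.exp (-‖q.2 - (inner ℝ (q.1 : E) q.2 : ℝ) • (q.1 : E)‖ ^ 2))) *
      (Icc (0 : ℝ) 1).indicator 1 (inner ℝ (q.1 : E) q.2)) ?_
  fun_prop

theorem funkE_chart {m : ℕ} (hm : 2 ≤ m) (hd : finrank ℝ E = m + 1) (e w : sphere (0 : E) 1)
    (hc : inner ℝ (w : E) (e : E) ≠ 0)
    (φ : sphere (0 : E) 1 → ℝ≥0∞) (hφ : Measurable φ) :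
    FunkE φ w = (ENNReal.ofReal (Real.pi ^ ((m : ℝ) / 2)))⁻¹ *
      (ENNReal.ofReal |inner ℝ (w : E) (e : E)|⁻¹ *
      ∫⁻ x : (ℝ ∙ (e : E))ᗮ, φ (nrm e (gmap (e : E) w x)) *
        ENNReal.ofReal (Real.exp (-‖gmap (e : E) w x‖ ^ 2))) := by
  have hnm := measurable_nrm e
  rw [funkE_eq hm hd e w φ hφ, lint_chart (e : E) w (sph_norm e) (sph_norm w) hc
    (fun u => φ (nrm e u) * ENNReal.ofReal (Real.exp (-‖(u : E)‖ ^ 2))) (by fun_prop)]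

theorem funkE_symm_aux {m : ℕ} (hm : 2 ≤ m) (hd : finrank ℝ E = m + 1) (e : sphere (0 : E) 1)
    (φ ψ : sphere (0 : E) 1 → ℝ≥0∞) (hφ : Measurable φ) (hψ : Measurable ψ) :
    (∫⁻ w, FunkE φ w * ψ w ∂((volume : Measure E).toSphere)) *
      ENNReal.ofReal (Real.Gamma ((-1 + (finrank ℝ E : ℝ)) / 2) / 2) =
    (ENNReal.ofReal (Real.pi ^ ((m : ℝ) / 2)))⁻¹ *
    ∫⁻ y : (ℝ ∙ (e : E))ᗮ, ∫⁻ t : ℝ, ∫⁻ x : (ℝ ∙ (e : E))ᗮ, ENNReal.ofReal |t|⁻¹ *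
      ((fun z => φ (nrm e z) * ENNReal.ofReal (Real.exp (-‖z‖ ^ 2)))
        ((x : E) - (inner ℝ (y : E) (x : E) / t) • (e : E)) *
      (fun z => ψ (nrm e z) * ENNReal.ofReal (Real.exp (-‖z‖ ^ 2))) ((y : E) + t • (e : E))) := by
  have hnm := measurable_nrm e
  have hF := measurable_funkE hm hd e φ hφ
  have : Nontrivial E := nontrivial_of_finrank_pos (R := ℝ) (by omega)
  have hee : inner ℝ (e : E) (e : E) = (1 : ℝ) := by
    rw [real_inner_self_eq_norm_sq, sph_norm]; norm_num
  rw [← lint_homog (fun y => FunkE φ (nrm e y) * ψ (nrm e y) *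
    ENNReal.ofReal (‖y‖ ^ (-1 : ℝ) * Real.exp (-‖y‖ ^ 2))) (by fun_prop)
    (fun w => FunkE φ w * ψ w) (by fun_prop) (-1) (by
      rw [hd]; push_cast
      have : (2 : ℝ) ≤ m := by exact_mod_cast hm
      linarith) (by
      intro v r hr
      rw [nrm_smul e v hr, norm_smul, sph_norm, mul_one, Real.norm_of_nonneg hr.le])]
  rw [lint_split (e : E) (sph_norm e) _ (by fun_prop)]
  have hmeas : Measurable (fun q : ((ℝ ∙ (e : E))ᗮ × ℝ) × (ℝ ∙ (e : E))ᗮ => ENNReal.ofReal |q.1.2|⁻¹ *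
      ((fun z => φ (nrm e z) * ENNReal.ofReal (Real.exp (-‖z‖ ^ 2)))
        ((q.2 : E) - (inner ℝ (q.1.1 : E) (q.2 : E) / q.1.2) • (e : E)) *
      (fun z => ψ (nrm e z) * ENNReal.ofReal (Real.exp (-‖z‖ ^ 2)))
        ((q.1.1 : E) + q.1.2 • (e : E)))) := by
    fun_prop
  have hmeas2 := hmeas.lintegral_prod_right' (ν := volume)
  have hmeas3 := hmeas2.lintegral_prod_right' (ν := volume)
  rw [← lintegral_const_mul _ hmeas3]
  refine lintegral_congr fun y => ?_
  have hmeas4 := hmeas2.comp (measurable_prodMk_left (x := y))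
  refine Eq.trans ?_ (lintegral_const_mul _ hmeas4)
  refine lintegral_congr_ae ?_
  have ht0 : ∀ᵐ t : ℝ, t ≠ 0 := by rw [ae_iff]; simp
  filter_upwards [ht0] with t ht
  have hye : inner ℝ ((y : E) + t • (e : E)) (e : E) = t := by
    rw [real_inner_comm, inner_add_right, perp_inner, inner_smul_right, hee]; ring
  have hne : (y : E) + t • (e : E) ≠ 0 := by
    intro h; rw [h, inner_zero_left] at hye; exact ht hye.symm
  have hn0 : ‖(y : E) + t • (e : E)‖ ≠ 0 := norm_ne_zero_iff.2 hne
  have hc : inner ℝ (nrm e ((y : E) + t • (e : E)) : E) (e : E) =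
      ‖(y : E) + t • (e : E)‖⁻¹ * t := by
    rw [nrm_coe e hne, real_inner_smul_left, hye]
  have hg : ∀ x : (ℝ ∙ (e : E))ᗮ, gmap (e : E) (nrm e ((y : E) + t • (e : E)) : E) x =
      (x : E) - (inner ℝ (y : E) (x : E) / t) • (e : E) := by
    intro x
    unfold gmap
    rw [hc, nrm_coe e hne, real_inner_smul_left, inner_add_left, real_inner_smul_left, perp_inner,
      mul_zero, add_zero]
    congr 2
    field_simp
  rw [funkE_chart hm hd e _ (by rw [hc]; positivity) φ hφ, hc]
  simp only [hg]
  rw [lintegral_const_mul _ (by fun_prop), lintegral_mul_const _ (by fun_prop)]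
  set I := ∫⁻ x : (ℝ ∙ (e : E))ᗮ, φ (nrm e ((x : E) - (inner ℝ (y : E) (x : E) / t) • (e : E))) *
    ENNReal.ofReal (Real.exp (-‖(x : E) - (inner ℝ (y : E) (x : E) / t) • (e : E)‖ ^ 2))
  set N := ‖(y : E) + t • (e : E)‖ with hN
  have hNpos : 0 < N := lt_of_le_of_ne (norm_nonneg _) (Ne.symm hn0)
  have e1 : ENNReal.ofReal |N⁻¹ * t|⁻¹ = ENNReal.ofReal |t|⁻¹ * ENNReal.ofReal N := by
    rw [← ENNReal.ofReal_mul (by positivity), abs_mul, abs_of_pos (inv_pos.2 hNpos), mul_inv, inv_inv,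
      mul_comm]
  have e2 : ENNReal.ofReal (N ^ (-1 : ℝ) * Real.exp (-N ^ 2)) =
      (ENNReal.ofReal N)⁻¹ * ENNReal.ofReal (Real.exp (-N ^ 2)) := by
    rw [ENNReal.ofReal_mul (by positivity), Real.rpow_neg_one, ENNReal.ofReal_inv_of_pos hNpos]
  rw [e1, e2]
  have e3 : ENNReal.ofReal N * (ENNReal.ofReal N)⁻¹ = 1 :=
    ENNReal.mul_inv_cancel (by simpa using hNpos) ENNReal.ofReal_ne_top
  generalize ENNReal.ofReal N = n1 at *
  generalize (n1)⁻¹ = n2 at *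
  calc _ = (ENNReal.ofReal (Real.pi ^ ((m : ℝ) / 2)))⁻¹ * (ENNReal.ofReal |t|⁻¹ * (I *
        (ψ (nrm e ((y : E) + t • (e : E))) * ENNReal.ofReal (Real.exp (-N ^ 2))))) * (n1 * n2) := by
        ring
    _ = _ := by rw [e3, mul_one]

theorem funkE_symm {m : ℕ} (hm : 2 ≤ m) (hd : finrank ℝ E = m + 1) (e : sphere (0 : E) 1)
    (φ ψ : sphere (0 : E) 1 → ℝ≥0∞) (hφ : Measurable φ) (hψ : Measurable ψ) :
    ∫⁻ w, FunkE φ w * ψ w ∂((volume : Measure E).toSphere) =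
    ∫⁻ w, FunkE ψ w * φ w ∂((volume : Measure E).toSphere) := by
  have hnm := measurable_nrm e
  have := nontrivial_perp hm hd e
  have h1 := funkE_symm_aux hm hd e φ ψ hφ hψ
  have h2 := funkE_symm_aux hm hd e ψ φ hψ hφ
  have h3 := lint_symm (e : E) (fun z => φ (nrm e z) * ENNReal.ofReal (Real.exp (-‖z‖ ^ 2)))
    (fun z => ψ (nrm e z) * ENNReal.ofReal (Real.exp (-‖z‖ ^ 2))) (by fun_prop) (by fun_prop)
  replace h1 := (h1.trans (congrArg _ h3)).trans h2.symm
  have hJ : 0 < Real.Gamma ((-1 + (finrank ℝ E : ℝ)) / 2) / 2 := by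
    have h2 : (2 : ℝ) ≤ m := by exact_mod_cast hm
    have := Real.Gamma_pos_of_pos (show 0 < (-1 + (finrank ℝ E : ℝ)) / 2 by
      rw [hd]; push_cast; linarith)
    positivity
  exact (ENNReal.mul_left_inj (by simpa using hJ) ENNReal.ofReal_ne_top).1 h1

end FunkAux3

section FunkAux4

theorem ofReal_mul_rpow' {r : ℝ} (hr : 0 < r) (c a : ℝ) :
    ENNReal.ofReal (r * c) ^ a = ENNReal.ofReal c ^ a * ENNReal.ofReal (r ^ a) := by
  rw [ENNReal.ofReal_mul hr.le, ENNReal.mul_rpow_of_ne_top ENNReal.ofReal_ne_top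
    ENNReal.ofReal_ne_top, ENNReal.ofReal_rpow_of_pos hr, mul_comm]

theorem lint_even {a : ℝ} (ha : -1 < a) :
    ∫⁻ s : ℝ, ENNReal.ofReal |s| ^ a * ENNReal.ofReal (Real.exp (-s ^ 2)) =
      ENNReal.ofReal (Real.Gamma ((a + 1) / 2)) := by
  have hpos : ∫⁻ s in Ioi (0 : ℝ), ENNReal.ofReal |s| ^ a * ENNReal.ofReal (Real.exp (-s ^ 2)) =
      ENNReal.ofReal (Real.Gamma ((a + 1) / 2) / 2) := by
    rw [← lint_gamma ha]
    refine setLIntegral_congr_fun measurableSet_Ioi fun s hs => ?_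
    have hs : 0 < s := hs
    rw [abs_of_pos hs, ENNReal.ofReal_rpow_of_pos hs, ← ENNReal.ofReal_mul (by positivity)]
  have hneg : ∫⁻ s in Iio (0 : ℝ), ENNReal.ofReal |s| ^ a * ENNReal.ofReal (Real.exp (-s ^ 2)) =
      ENNReal.ofReal (Real.Gamma ((a + 1) / 2) / 2) := by
    rw [← hpos, ← (Measure.measurePreserving_neg (volume : Measure ℝ)).setLIntegral_comp_preimage
      measurableSet_Iio (by fun_prop)]
    simp
  rw [← lintegral_add_compl _ (measurableSet_Ioi (a := (0 : ℝ))), compl_Ioi,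
    ← restrict_Iio_eq_restrict_Iic, hpos, hneg]
  have : 0 < Real.Gamma ((a + 1) / 2) := Real.Gamma_pos_of_pos (by linarith)
  rw [← ENNReal.ofReal_add (by positivity) (by positivity)]
  congr 1; ring

variable {E : Type*} [NormedAddCommGroup E] [InnerProductSpace ℝ E] [FiniteDimensional ℝ E]
  [MeasurableSpace E] [BorelSpace E]

theorem perp_normsq (w : E) (hw : ‖w‖ = 1) (u : (ℝ ∙ w)ᗮ) (s : ℝ) :
    ‖(u : E) + s • w‖ ^ 2 = ‖(u : E)‖ ^ 2 + s ^ 2 := by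
  rw [norm_add_sq_real, inner_smul_right, real_inner_comm, perp_inner, norm_smul, hw]
  simp

theorem perp_inner_add (w : E) (hw : ‖w‖ = 1) (u : (ℝ ∙ w)ᗮ) (s : ℝ) :
    inner ℝ w ((u : E) + s • w) = s := by
  rw [inner_add_right, perp_inner, inner_smul_right, real_inner_self_eq_norm_sq, hw]; ring

theorem sph_moment {m : ℕ} (hd : finrank ℝ E = m) (hm : 1 ≤ m) (ω : E) (hω : ‖ω‖ = 1) {a : ℝ}
    (ha : -1 < a) :
    (∫⁻ v : sphere (0 : E) 1, ENNReal.ofReal |inner ℝ ω (v : E)| ^ a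
      ∂((volume : Measure E).toSphere)) * ENNReal.ofReal (Real.Gamma ((a + m) / 2) / 2) =
    ENNReal.ofReal (Real.pi ^ (((m : ℝ) - 1) / 2) * Real.Gamma ((a + 1) / 2)) := by
  have : Nontrivial E := nontrivial_of_finrank_pos (R := ℝ) (by omega)
  have hm1 : (1 : ℝ) ≤ m := by exact_mod_cast hm
  have hf : finrank ℝ (ℝ ∙ ω)ᗮ = m - 1 :=
    finrank_perp (by omega) ⟨ω, mem_sphere_zero_iff_norm.2 hω⟩
  rw [← hd, ← lint_homog (fun x : E => ENNReal.ofReal |inner ℝ ω x| ^ a *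
    ENNReal.ofReal (Real.exp (-‖x‖ ^ 2))) (by fun_prop) _ (by fun_prop) a (by rw [hd]; linarith) ?_]
  · rw [lint_split ω hω _ (by fun_prop)]
    simp only [perp_normsq ω hω, perp_inner_add ω hω]
    have : ∀ (u : (ℝ ∙ ω)ᗮ) (s : ℝ), ENNReal.ofReal |s| ^ a *
        ENNReal.ofReal (Real.exp (-(‖(u : E)‖ ^ 2 + s ^ 2))) =
        ENNReal.ofReal (Real.exp (-‖u‖ ^ 2)) *
          (ENNReal.ofReal |s| ^ a * ENNReal.ofReal (Real.exp (-s ^ 2))) := by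
      intro u s
      rw [neg_add, Real.exp_add, ENNReal.ofReal_mul (Real.exp_pos _).le, Submodule.coe_norm]
      ring
    simp only [this]
    have h2 : ∀ u : (ℝ ∙ ω)ᗮ, ∫⁻ s : ℝ, ENNReal.ofReal (Real.exp (-‖u‖ ^ 2)) *
          (ENNReal.ofReal |s| ^ a * ENNReal.ofReal (Real.exp (-s ^ 2))) =
          ENNReal.ofReal (Real.exp (-‖u‖ ^ 2)) * ENNReal.ofReal (Real.Gamma ((a + 1) / 2)) := by
      intro u
      rw [lintegral_const_mul _ (by fun_prop), lint_even ha]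
    simp only [h2]
    rw [lintegral_mul_const _ (by fun_prop), lint_gauss, hf, ← ENNReal.ofReal_mul (by positivity),
      hd, Nat.cast_pred (by omega)]
  · intro v r hr
    rw [inner_smul_right, abs_mul, abs_of_pos hr, ofReal_mul_rpow' hr, norm_smul, sph_norm,
      Real.norm_of_nonneg hr.le, mul_one, ENNReal.ofReal_mul (by positivity)]
    ring

theorem lint_homog2 [Nontrivial E] (f : E → ℝ≥0∞) (hf : Measurable f)
    (Φ : sphere (0 : E) 1 → ℝ≥0∞) (hΦ : Measurable Φ) (G : sphere (0 : E) 1 → ℝ)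
    (hG : ∀ v, 0 < G v)
    (h : ∀ v : sphere (0 : E) 1, ∀ r : ℝ, 0 < r →
      f (r • (v : E)) = Φ v * ENNReal.ofReal (G v ^ (finrank ℝ E : ℝ) * Real.exp (-(r * G v) ^ 2))) :
    ∫⁻ x, f x = (∫⁻ v, Φ v ∂((volume : Measure E).toSphere)) *
      ENNReal.ofReal (Real.Gamma ((finrank ℝ E : ℝ) / 2) / 2) := by
  rw [lint_polar f hf, ← lintegral_mul_const _ hΦ]
  refine lintegral_congr fun v => ?_
  have hd : 0 < finrank ℝ E := finrank_pos
  have hd' : (0 : ℝ) < finrank ℝ E := by exact_mod_cast hd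
  have hg := hG v
  have hq : (-1 : ℝ) < ((finrank ℝ E - 1 : ℕ) : ℝ) := by
    rw [Nat.cast_pred hd]; linarith
  have hl := lint_gamma hq
  rw [show ((finrank ℝ E - 1 : ℕ) : ℝ) + 1 = (finrank ℝ E : ℝ) by
    rw [Nat.cast_pred hd]; ring] at hl
  have key : ∫⁻ r in Ioi (0 : ℝ), ENNReal.ofReal (G v) * ENNReal.ofReal ((r * G v) ^ (finrank ℝ E - 1) *
      Real.exp (-(r * G v) ^ 2)) = ENNReal.ofReal (Real.Gamma ((finrank ℝ E : ℝ) / 2) / 2) := by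
    rw [← hl]
    simp only [Real.rpow_natCast]
    rw [lintegral_const_mul _ (by fun_prop), ← lintegral_indicator measurableSet_Ioi,
      ← lintegral_indicator measurableSet_Ioi]
    have := lint_affine 0 (G v) hg.ne' ((Ioi (0 : ℝ)).indicator fun r =>
      ENNReal.ofReal (r ^ (finrank ℝ E - 1) * Real.exp (-r ^ 2)))
      (Measurable.indicator (by fun_prop) measurableSet_Ioi)
    rw [abs_of_pos hg, ENNReal.ofReal_inv_of_pos hg] at this
    have h3 : ∀ t : ℝ, ((Ioi (0 : ℝ)).indicator fun r =>
      ENNReal.ofReal (r ^ (finrank ℝ E - 1) * Real.exp (-r ^ 2))) (0 + t * G v) =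
      ((Ioi (0 : ℝ)).indicator fun r =>
      ENNReal.ofReal ((r * G v) ^ (finrank ℝ E - 1) * Real.exp (-(r * G v) ^ 2))) t := by
      intro t
      rw [zero_add]
      by_cases ht : 0 < t
      · rw [indicator_of_mem (by exact mul_pos ht hg), indicator_of_mem (by exact ht)]
      · rw [indicator_of_notMem (fun h => ht (by
          have h : 0 < t * G v := h
          exact pos_of_mul_pos_left h hg.le)), indicator_of_notMem (by exact ht)]
    simp only [h3] at this
    rw [this, ← mul_assoc, ENNReal.mul_inv_cancel (by simpa using hg) ENNReal.ofReal_ne_top, one_mul]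
  rw [← key, ← lintegral_const_mul _ (by fun_prop)]
  refine setLIntegral_congr_fun measurableSet_Ioi fun r hr => ?_
  have hr : 0 < r := hr
  rw [h v r hr, mul_left_comm, ← ENNReal.ofReal_mul (by positivity),
    ← ENNReal.ofReal_mul (by positivity)]
  congr 2
  rw [Real.rpow_natCast, mul_pow]
  obtain ⟨k, hk⟩ : ∃ k, finrank ℝ E = k + 1 := ⟨finrank ℝ E - 1, by omega⟩
  rw [hk, Nat.add_sub_cancel, pow_succ]
  ring

end FunkAux4

section FunkAux5

/-- The constant. -/
def Ca (m : ℕ) (a : ℝ) : ℝ :=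
  Real.Gamma ((m : ℝ) / 2) / Real.Gamma (1 / 2) * Real.Gamma ((a + 1) / 2) /
    Real.Gamma ((a + m) / 2)

variable {E : Type*} [NormedAddCommGroup E] [InnerProductSpace ℝ E] [FiniteDimensional ℝ E]
  [MeasurableSpace E] [BorelSpace E]

theorem funkE_pow {m : ℕ} (hm : 2 ≤ m) (hd : finrank ℝ E = m + 1) (e w : sphere (0 : E) 1)
    (hc : inner ℝ (w : E) (e : E) ≠ 0) (hc1 : (inner ℝ (w : E) (e : E)) ^ 2 < (1 : ℝ))
    {a : ℝ} (ha : -1 < a) :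
    FunkE (fun θ : sphere (0 : E) 1 => ENNReal.ofReal |inner ℝ (θ : E) (e : E)| ^ a *
      ENNReal.ofReal (1 - (inner ℝ (θ : E) (e : E)) ^ 2) ^ (-(a + m) / 2)) w =
    ENNReal.ofReal (Ca m a) * (ENNReal.ofReal |inner ℝ (w : E) (e : E)| ^ (-(a + 1)) *
      ENNReal.ofReal (1 - (inner ℝ (w : E) (e : E)) ^ 2) ^ (a / 2)) := by
  have := nontrivial_perp hm hd e
  have hf := finrank_perp hd e
  have hnm := measurable_nrm e
  have hm2 : (2 : ℝ) ≤ m := by exact_mod_cast hm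
  rw [funkE_chart hm hd e w hc _ (by fun_prop)]
  set c : ℝ := inner ℝ (w : E) (e : E) with hcdef
  have hcpos : 0 < |c| := abs_pos.2 hc
  have hee : inner ℝ (e : E) (e : E) = (1 : ℝ) := by
    rw [real_inner_self_eq_norm_sq, sph_norm]; norm_num
  have hww : inner ℝ (w : E) (w : E) = (1 : ℝ) := by
    rw [real_inner_self_eq_norm_sq, sph_norm]; norm_num
  have hgm : Measurable (fun x : E => gmap (e : E) (w : E) x) := by unfold gmap; fun_prop
  -- the vector
  have hw' : (w : E) - c • (e : E) ∈ (ℝ ∙ (e : E))ᗮ := by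
    rw [Submodule.mem_orthogonal_singleton_iff_inner_right, inner_sub_right, inner_smul_right, hee,
      real_inner_comm, ← hcdef]; ring
  set w' : (ℝ ∙ (e : E))ᗮ := ⟨(w : E) - c • (e : E), hw'⟩ with hw'def
  have hwn : ‖w'‖ ^ 2 = 1 - c ^ 2 := by
    rw [Submodule.coe_norm, ← real_inner_self_eq_norm_sq]
    simp only [hw'def, inner_sub_left, inner_sub_right, inner_smul_left, inner_smul_right, hee, hww,
      real_inner_comm (w : E) (e : E), ← hcdef]
    simp
    ring
  have hwpos : 0 < ‖w'‖ := by
    have : 0 < ‖w'‖ ^ 2 := by rw [hwn]; linarith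
    exact lt_of_le_of_ne (norm_nonneg _) (fun h => by rw [← h] at this; norm_num at this)
  set ω : (ℝ ∙ (e : E))ᗮ := ‖w'‖⁻¹ • w' with hωdef
  have hω : ‖ω‖ = 1 := by
    rw [hωdef, norm_smul, norm_inv, norm_norm, inv_mul_cancel₀ hwpos.ne']
  have hinner : ∀ x : (ℝ ∙ (e : E))ᗮ, inner ℝ (w : E) (x : E) = ‖w'‖ * inner ℝ ω x := by
    intro x
    rw [hωdef, real_inner_smul_left, ← mul_assoc, mul_inv_cancel₀ hwpos.ne', one_mul,
      Submodule.coe_inner]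
    simp only [hw'def, inner_sub_left, inner_smul_left, perp_inner]
    simp
  have hvn : ∀ v : sphere (0 : (ℝ ∙ (e : E))ᗮ) 1, ‖((v : (ℝ ∙ (e : E))ᗮ) : E)‖ = 1 := sph_norm
  have hge : ∀ x : (ℝ ∙ (e : E))ᗮ, inner ℝ (gmap (e : E) (w : E) x) (e : E) =
      -(inner ℝ (w : E) (x : E) / c) := by
    intro x
    unfold gmap
    rw [real_inner_comm, inner_sub_right, perp_inner, inner_smul_right, hee]; simp [hcdef]
  have hgn : ∀ x : (ℝ ∙ (e : E))ᗮ, ‖gmap (e : E) (w : E) x‖ ^ 2 =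
      ‖(x : E)‖ ^ 2 + (inner ℝ (w : E) (x : E) / c) ^ 2 := by
    intro x
    unfold gmap
    rw [sub_eq_add_neg, ← neg_smul, perp_normsq (e : E) (sph_norm e)]; simp [hcdef]
  have hGpos : ∀ v : sphere (0 : (ℝ ∙ (e : E))ᗮ) 1, 0 < ‖gmap (e : E) (w : E) (v : (ℝ ∙ (e : E))ᗮ)‖ := by
    intro v
    have := hgn v
    rw [hvn] at this
    have : 0 < ‖gmap (e : E) (w : E) (v : (ℝ ∙ (e : E))ᗮ)‖ ^ 2 := by rw [this]; positivity
    exact lt_of_le_of_ne (norm_nonneg _) (fun h => by rw [← h] at this; norm_num at this)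
  have hgs : ∀ (r : ℝ) (x : E), gmap (e : E) (w : E) (r • x) = r • gmap (e : E) (w : E) x := by
    intro r x
    unfold gmap
    rw [inner_smul_right, smul_sub, smul_smul, mul_div_assoc]
  have hmom := sph_moment hf (by omega) ω hω ha
  set M := ∫⁻ v : sphere (0 : (ℝ ∙ (e : E))ᗮ) 1, ENNReal.ofReal |inner ℝ ω (v : (ℝ ∙ (e : E))ᗮ)| ^ a
      ∂((volume : Measure (ℝ ∙ (e : E))ᗮ).toSphere) with hM
  have hG1 : 0 < Real.Gamma ((a + m) / 2) := Real.Gamma_pos_of_pos (by linarith)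
  have hG2 : 0 < Real.Gamma ((a + 1) / 2) := Real.Gamma_pos_of_pos (by linarith)
  have hG3 : 0 < Real.Gamma ((m : ℝ) / 2) := Real.Gamma_pos_of_pos (by linarith)
  have hMeq : M = ENNReal.ofReal (Real.pi ^ (((m : ℝ) - 1) / 2) * Real.Gamma ((a + 1) / 2) *
      (Real.Gamma ((a + m) / 2) / 2)⁻¹) := by
    have h0 : ENNReal.ofReal (Real.Gamma ((a + m) / 2) / 2) ≠ 0 := by
      simpa using hG1
    rw [ENNReal.ofReal_mul (by positivity), ← hmom, ENNReal.ofReal_inv_of_pos (by positivity),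
      mul_assoc, ENNReal.mul_inv_cancel h0 ENNReal.ofReal_ne_top, mul_one]
  have hφ0 : Measurable (fun θ : sphere (0 : E) 1 => ENNReal.ofReal |inner ℝ (θ : E) (e : E)| ^ a *
      ENNReal.ofReal (1 - (inner ℝ (θ : E) (e : E)) ^ 2) ^ (-(a + m) / 2)) := by fun_prop
  have hint := lint_homog2 (E := (ℝ ∙ (e : E))ᗮ)
    (fun x => (fun θ : sphere (0 : E) 1 => ENNReal.ofReal |inner ℝ (θ : E) (e : E)| ^ a *
      ENNReal.ofReal (1 - (inner ℝ (θ : E) (e : E)) ^ 2) ^ (-(a + m) / 2))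
        (nrm e (gmap (e : E) (w : E) x)) * ENNReal.ofReal (Real.exp (-‖gmap (e : E) (w : E) x‖ ^ 2)))
    ((hφ0.comp (hnm.comp (hgm.comp measurable_subtype_coe))).mul (by unfold gmap; fun_prop))
    (fun v => ENNReal.ofReal |inner ℝ ω (v : (ℝ ∙ (e : E))ᗮ)| ^ a *
      ENNReal.ofReal ((‖w'‖ * |c|⁻¹) ^ a)) (by fun_prop)
    (fun v => ‖gmap (e : E) (w : E) (v : (ℝ ∙ (e : E))ᗮ)‖) hGpos (by
      intro v r hr
      dsimp only
      rw [Submodule.coe_smul, hgs]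
      have hG := hGpos v
      have hne : r • gmap (e : E) (w : E) (v : (ℝ ∙ (e : E))ᗮ) ≠ 0 :=
        smul_ne_zero hr.ne' (norm_ne_zero_iff.1 hG.ne')
      have h1 := hgn v
      rw [hvn] at h1
      have h2 : inner ℝ (nrm e (r • gmap (e : E) (w : E) (v : (ℝ ∙ (e : E))ᗮ)) : E) (e : E) =
          ‖gmap (e : E) (w : E) (v : (ℝ ∙ (e : E))ᗮ)‖⁻¹ *
            -(inner ℝ (w : E) ((v : (ℝ ∙ (e : E))ᗮ) : E) / c) := by
        rw [nrm_coe e hne, smul_smul, norm_smul, Real.norm_of_nonneg hr.le, real_inner_smul_left, hge]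
        field_simp
      rw [h2, norm_smul, Real.norm_of_nonneg hr.le, hf]
      set G := ‖gmap (e : E) (w : E) (v : (ℝ ∙ (e : E))ᗮ)‖ with hGdef
      have h3 : 1 - (G⁻¹ * -(inner ℝ (w : E) ((v : (ℝ ∙ (e : E))ᗮ) : E) / c)) ^ 2 = G ^ (-2 : ℝ) := by
        rw [Real.rpow_neg hG.le, show (2 : ℝ) = ((2 : ℕ) : ℝ) by norm_num, Real.rpow_natCast]
        have : (inner ℝ (w : E) ((v : (ℝ ∙ (e : E))ᗮ) : E) / c) ^ 2 = G ^ 2 - 1 := by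
          rw [h1]; ring
        rw [mul_pow, neg_sq, this]
        field_simp
        ring
      have h4 : |G⁻¹ * -(inner ℝ (w : E) ((v : (ℝ ∙ (e : E))ᗮ) : E) / c)| =
          (‖w'‖ * |c|⁻¹) * (G⁻¹ * |inner ℝ ω (v : (ℝ ∙ (e : E))ᗮ)|) := by
        rw [hinner, abs_mul, abs_neg, abs_div, abs_mul, abs_of_pos hwpos, abs_of_pos (inv_pos.2 hG)]
        field_simp
      rw [h3, h4, ofReal_mul_rpow' (by positivity), ofReal_mul_rpow' (by positivity),
        ENNReal.ofReal_rpow_of_pos (show 0 < G ^ (-2 : ℝ) by positivity), ← Real.rpow_mul hG.le]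
      have h5 : G⁻¹ ^ a * G ^ (-2 * (-(a + m) / 2)) = G ^ (m : ℝ) := by
        rw [Real.inv_rpow hG.le, ← Real.rpow_neg hG.le, ← Real.rpow_add hG]
        congr 1; ring
      rw [← h5, ENNReal.ofReal_mul (by positivity), ENNReal.ofReal_mul (by positivity)]
      ring)
  rw [hint, lintegral_mul_const _ (by fun_prop), hf, ← hM, hMeq]
  have hZ : (0 : ℝ) < Real.pi ^ ((m : ℝ) / 2) := by positivity
  have hs : 0 < 1 - c ^ 2 := by linarith
  rw [ENNReal.ofReal_rpow_of_pos hcpos, ENNReal.ofReal_rpow_of_pos hs,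
    ← ENNReal.ofReal_inv_of_pos hZ, ← ENNReal.ofReal_mul (by positivity),
    ← ENNReal.ofReal_mul (by positivity), ← ENNReal.ofReal_mul (by positivity),
    ← ENNReal.ofReal_mul (by positivity), ← ENNReal.ofReal_mul (by positivity)]
  have hCa : 0 ≤ Ca m a := by
    unfold Ca
    have : 0 < Real.Gamma (1 / 2) := Real.Gamma_pos_of_pos (by norm_num)
    positivity
  rw [← ENNReal.ofReal_mul hCa]
  congr 1
  have e1 : (1 - c ^ 2) ^ (a / 2) = ‖w'‖ ^ a := by
    rw [← hwn, show ‖w'‖ ^ 2 = ‖w'‖ ^ (2 : ℝ) by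
      rw [show (2 : ℝ) = ((2 : ℕ) : ℝ) by norm_num, Real.rpow_natCast], ← Real.rpow_mul hwpos.le]
    congr 1; ring
  have e2 : |c| ^ (-(a + 1)) = |c|⁻¹ ^ a * |c|⁻¹ := by
    rw [Real.inv_rpow hcpos.le, ← Real.rpow_neg hcpos.le, ← Real.rpow_neg_one |c|,
      ← Real.rpow_add hcpos]
    congr 1; ring
  have e3 : Real.pi ^ (((m : ℝ) - 1) / 2) = Real.pi ^ ((m : ℝ) / 2) * (√Real.pi)⁻¹ := by
    rw [Real.sqrt_eq_rpow, ← Real.rpow_neg Real.pi_pos.le, ← Real.rpow_add Real.pi_pos]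
    congr 1; ring
  rw [e1, e2, e3, Real.mul_rpow hwpos.le (by positivity), Ca, Real.Gamma_one_half_eq]
  have : 0 < √Real.pi := Real.sqrt_pos.2 Real.pi_pos
  field_simp

theorem sph_fin {m : ℕ} (hm : 2 ≤ m) (hd : finrank ℝ E = m + 1) (e : sphere (0 : E) 1)
    {δ : ℝ} (hδ : 0 < δ) :
    (∫⁻ v : sphere (0 : E) 1, ENNReal.ofReal |inner ℝ (v : E) (e : E)| ^ (δ - 1) *
      ENNReal.ofReal (1 - (inner ℝ (v : E) (e : E)) ^ 2) ^ ((δ - m) / 2)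
      ∂((volume : Measure E).toSphere)) ≠ ⊤ ∧
    (∫⁻ v : sphere (0 : E) 1, ENNReal.ofReal |inner ℝ (v : E) (e : E)| ^ (δ - 1) *
      ENNReal.ofReal (1 - (inner ℝ (v : E) (e : E)) ^ 2) ^ ((δ - m) / 2)
      ∂((volume : Measure E).toSphere)) ≠ 0 := by
  have : Nontrivial E := nontrivial_of_finrank_pos (R := ℝ) (by omega)
  have := nontrivial_perp hm hd e
  have hf := finrank_perp hd e
  have hD : 0 < Real.Gamma (δ / 2) := Real.Gamma_pos_of_pos (by linarith)
  have hD2 : 0 < Real.Gamma (δ) := Real.Gamma_pos_of_pos (by linarith)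
  have h1 := lint_homog (fun x : E => ENNReal.ofReal |inner ℝ x (e : E)| ^ (δ - 1) *
      ENNReal.ofReal (‖x‖ ^ 2 - (inner ℝ x (e : E)) ^ 2) ^ ((δ - m) / 2) *
      ENNReal.ofReal (Real.exp (-‖x‖ ^ 2))) (by fun_prop)
      (fun v => ENNReal.ofReal |inner ℝ (v : E) (e : E)| ^ (δ - 1) *
      ENNReal.ofReal (1 - (inner ℝ (v : E) (e : E)) ^ 2) ^ ((δ - m) / 2)) (by fun_prop)
      (2 * δ - 1 - m) (by rw [hd]; push_cast; linarith) (by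
        intro v r hr
        have e1 : ‖r • (v : E)‖ ^ 2 - (inner ℝ (r • (v : E)) (e : E)) ^ 2 =
            r ^ 2 * (1 - (inner ℝ (v : E) (e : E)) ^ 2) := by
          rw [norm_smul, sph_norm, Real.norm_of_nonneg hr.le, real_inner_smul_left]; ring
        rw [e1, real_inner_smul_left, abs_mul, abs_of_pos hr, ofReal_mul_rpow' hr,
          ofReal_mul_rpow' (by positivity), norm_smul, sph_norm, Real.norm_of_nonneg hr.le, mul_one]
        have e2 : r ^ (2 * δ - 1 - m) = r ^ (δ - 1) * (r ^ 2) ^ ((δ - m) / 2) := by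
          rw [show r ^ 2 = r ^ (2 : ℝ) by
            rw [show (2 : ℝ) = ((2 : ℕ) : ℝ) by norm_num, Real.rpow_natCast], ← Real.rpow_mul hr.le,
            ← Real.rpow_add hr]
          congr 1; ring
        rw [e2, ENNReal.ofReal_mul (by positivity), ENNReal.ofReal_mul (by positivity)]
        ring)
  rw [lint_split (e : E) (sph_norm e) _ (by fun_prop)] at h1
  have h2 : ∀ u : (ℝ ∙ (e : E))ᗮ, ∫⁻ s : ℝ,
      ENNReal.ofReal |inner ℝ ((u : E) + s • (e : E)) (e : E)| ^ (δ - 1) *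
      ENNReal.ofReal (‖(u : E) + s • (e : E)‖ ^ 2 -
        (inner ℝ ((u : E) + s • (e : E)) (e : E)) ^ 2) ^ ((δ - m) / 2) *
      ENNReal.ofReal (Real.exp (-‖(u : E) + s • (e : E)‖ ^ 2)) =
      ENNReal.ofReal (‖u‖ ^ 2) ^ ((δ - m) / 2) * ENNReal.ofReal (Real.exp (-‖u‖ ^ 2)) *
        ENNReal.ofReal (Real.Gamma (δ / 2)) := by
    intro u
    have := lint_even (a := δ - 1) (by linarith)
    rw [sub_add_cancel] at this
    rw [← this, ← lintegral_const_mul _ (by fun_prop)]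
    refine lintegral_congr fun s => ?_
    rw [real_inner_comm, perp_inner_add (e : E) (sph_norm e), perp_normsq (e : E) (sph_norm e),
      add_sub_cancel_right, neg_add, Real.exp_add, ENNReal.ofReal_mul (Real.exp_pos _).le,
      Submodule.coe_norm]
    ring
  simp only [h2] at h1
  rw [lintegral_mul_const _ (by fun_prop)] at h1
  have h3 := lint_homog (fun u : (ℝ ∙ (e : E))ᗮ => ENNReal.ofReal (‖u‖ ^ 2) ^ ((δ - m) / 2) *
      ENNReal.ofReal (Real.exp (-‖u‖ ^ 2))) (by fun_prop) (fun v => 1) (by fun_prop)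
      (δ - m) (by rw [hf]; linarith) (by
        intro v r hr
        rw [norm_smul, sph_norm, Real.norm_of_nonneg hr.le, mul_one,
          ENNReal.ofReal_rpow_of_pos (by positivity), ← ENNReal.ofReal_mul (by positivity), one_mul,
          show r ^ 2 = r ^ (2 : ℝ) by
            rw [show (2 : ℝ) = ((2 : ℕ) : ℝ) by norm_num, Real.rpow_natCast], ← Real.rpow_mul hr.le]
        congr 3; ring)
  rw [h3, hf, lintegral_one, hd, show δ - (m : ℝ) + m = δ by ring] at h1
  have hS : (volume : Measure (ℝ ∙ (e : E))ᗮ).toSphere univ ≠ 0 := by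
    rw [Ne, Measure.measure_univ_eq_zero]
    exact Measure.toSphere_ne_zero _
  have hS' : (volume : Measure (ℝ ∙ (e : E))ᗮ).toSphere univ ≠ ⊤ := measure_ne_top _ _
  rw [show 2 * δ - 1 - (m : ℝ) + ((m + 1 : ℕ) : ℝ) = 2 * δ by push_cast; ring,
    show 2 * δ / 2 = δ by ring] at h1
  constructor
  · intro h
    rw [h, ENNReal.top_mul (by simpa using hD2)] at h1
    exact (ENNReal.mul_ne_top (ENNReal.mul_ne_top hS' ENNReal.ofReal_ne_top)
      ENNReal.ofReal_ne_top) h1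
  · intro h
    rw [h, zero_mul] at h1
    simp only [mul_eq_zero, ENNReal.ofReal_eq_zero, not_le.2 hD, or_false] at h1
    rcases h1 with h1 | h1
    · exact hS h1
    · linarith

end FunkAux5

section FunkAux6

theorem holder_avg {X : Type*} [MeasurableSpace X] (ρ : Measure X) (f v : X → ℝ≥0∞)
    (hf : Measurable f) (hv : Measurable v) (h0 : ∀ᵐ x ∂ρ, v x ≠ 0 ∧ v x ≠ ⊤) {p : ℝ} (hp : 1 ≤ p) :
    (∫⁻ x, f x ∂ρ) ^ p ≤ (∫⁻ x, f x ^ p * v x ^ (1 - p) ∂ρ) * (∫⁻ x, v x ∂ρ) ^ (p - 1) := by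
  rcases hp.eq_or_lt with rfl | hp1
  · simp
  have hp0 : 0 < p := by linarith
  have hpq : p.HolderConjugate (p / (p - 1)) := Real.HolderConjugate.conjExponent hp1
  have h := ENNReal.lintegral_mul_le_Lp_mul_Lq ρ hpq
    (f := fun x => f x * v x ^ ((1 - p) / p)) (g := fun x => v x ^ ((p - 1) / p))
    (by fun_prop) (by fun_prop)
  have e1 : ∫⁻ x, ((fun x => f x * v x ^ ((1 - p) / p)) * fun x => v x ^ ((p - 1) / p)) x ∂ρ =
      ∫⁻ x, f x ∂ρ := by
    refine lintegral_congr_ae ?_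
    filter_upwards [h0] with x hx
    simp only [Pi.mul_apply]
    rw [mul_assoc, ← ENNReal.rpow_add _ _ hx.1 hx.2,
      show (1 - p) / p + (p - 1) / p = 0 by ring, ENNReal.rpow_zero, mul_one]
  have e2 : ∀ x, (f x * v x ^ ((1 - p) / p)) ^ p = f x ^ p * v x ^ (1 - p) := by
    intro x
    rw [ENNReal.mul_rpow_of_nonneg _ _ hp0.le, ← ENNReal.rpow_mul, div_mul_cancel₀ _ hp0.ne']
  have e3 : ∀ x, (v x ^ ((p - 1) / p)) ^ (p / (p - 1)) = v x := by
    intro x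
    have : p - 1 ≠ 0 := by linarith
    rw [← ENNReal.rpow_mul, show (p - 1) / p * (p / (p - 1)) = 1 by field_simp, ENNReal.rpow_one]
  rw [e1] at h
  simp only [e2, e3] at h
  refine (ENNReal.rpow_le_rpow h hp0.le).trans_eq ?_
  have : p - 1 ≠ 0 := by linarith
  rw [ENNReal.mul_rpow_of_nonneg _ _ hp0.le, ← ENNReal.rpow_mul, ← ENNReal.rpow_mul,
    one_div_mul_cancel hp0.ne', ENNReal.rpow_one]
  congr 2
  field_simp

theorem xy_combine {x y : ℝ≥0∞} (hx : x ≠ 0) (hx' : x ≠ ⊤) (hy : y ≠ 0) (hy' : y ≠ ⊤)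
    {a b c d a' b' q : ℝ} (h1 : a * q + c = a') (h2 : b * q + d = b') :
    (x ^ a * y ^ b) ^ q * (x ^ c * y ^ d) = x ^ a' * y ^ b' := by
  have k1 : x ^ a ≠ 0 := by simp [ENNReal.rpow_eq_zero_iff, hx, hx']
  have k2 : x ^ a ≠ ⊤ := by simp [ENNReal.rpow_eq_top_iff, hx, hx']
  have k3 : y ^ b ≠ 0 := by simp [ENNReal.rpow_eq_zero_iff, hy, hy']
  have k4 : y ^ b ≠ ⊤ := by simp [ENNReal.rpow_eq_top_iff, hy, hy']
  rw [ENNReal.mul_rpow_of_ne_top k2 k4, ← ENNReal.rpow_mul, ← ENNReal.rpow_mul, ← h1, ← h2,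
    ENNReal.rpow_add _ _ hx hx', ENNReal.rpow_add _ _ hy hy']
  ring

theorem Ca_pos {m : ℕ} (hm : 2 ≤ m) {a : ℝ} (ha : -1 < a) : 0 < Ca m a := by
  have hm2 : (2 : ℝ) ≤ m := by exact_mod_cast hm
  have hG1 : 0 < Real.Gamma ((a + m) / 2) := Real.Gamma_pos_of_pos (by linarith)
  have hG2 : 0 < Real.Gamma ((a + 1) / 2) := Real.Gamma_pos_of_pos (by linarith)
  have hG3 : 0 < Real.Gamma ((m : ℝ) / 2) := Real.Gamma_pos_of_pos (by linarith)
  have : 0 < Real.Gamma (1 / 2) := Real.Gamma_pos_of_pos (by norm_num)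
  unfold Ca
  positivity

variable {E : Type*} [NormedAddCommGroup E] [InnerProductSpace ℝ E] [FiniteDimensional ℝ E]
  [MeasurableSpace E] [BorelSpace E]

/-- x-weight -/
def wx (e θ : sphere (0 : E) 1) : ℝ≥0∞ := ENNReal.ofReal |inner ℝ (θ : E) (e : E)|
/-- y-weight -/
def wy (e θ : sphere (0 : E) 1) : ℝ≥0∞ := ENNReal.ofReal (1 - (inner ℝ (θ : E) (e : E)) ^ 2)

theorem measurable_wx (e : sphere (0 : E) 1) : Measurable (wx e) := by unfold wx; fun_prop
theorem measurable_wy (e : sphere (0 : E) 1) : Measurable (wy e) := by unfold wy; fun_prop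

theorem wx_top (e θ : sphere (0 : E) 1) : wx e θ ≠ ⊤ := ENNReal.ofReal_ne_top
theorem wy_top (e θ : sphere (0 : E) 1) : wy e θ ≠ ⊤ := ENNReal.ofReal_ne_top

theorem funkE_w {m : ℕ} (hm : 2 ≤ m) (hd : finrank ℝ E = m + 1) (e w : sphere (0 : E) 1)
    (hx : wx e w ≠ 0) (hy : wy e w ≠ 0) {a : ℝ} (ha : -1 < a) :
    FunkE (fun θ => wx e θ ^ a * wy e θ ^ (-(a + m) / 2)) w =
    ENNReal.ofReal (Ca m a) * (wx e w ^ (-(a + 1)) * wy e w ^ (a / 2)) := by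
  refine funkE_pow hm hd e w ?_ ?_ ha
  · intro h; apply hx; simp [wx, h]
  · have : 0 < 1 - (inner ℝ (w : E) (e : E)) ^ 2 := by
      simpa [wy] using hy
    linarith

/-- The inclusion of the great subsphere. -/
def subInc (w : sphere (0 : E) 1) (v : sphere (0 : (ℝ ∙ (w : E))ᗮ) 1) : sphere (0 : E) 1 :=
  ⟨((v : ((ℝ ∙ (w : E))ᗮ)) : E), by
          have hv := v.2
          simp only [mem_sphere_iff_norm, sub_zero] at hv ⊢
          rwa [Submodule.coe_norm] at hv⟩

theorem measurable_subInc (w : sphere (0 : E) 1) : Measurable (subInc w) :=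
  Measurable.subtype_mk (by fun_prop)

/-- normalized measure on the great subsphere. -/
def subMeas (w : sphere (0 : E) 1) : Measure (sphere (0 : (ℝ ∙ (w : E))ᗮ) 1) :=
  ((volume : Measure ((ℝ ∙ (w : E))ᗮ)).toSphere Set.univ)⁻¹ •
    (volume : Measure ((ℝ ∙ (w : E))ᗮ)).toSphere

theorem funkE_avg (φ : sphere (0 : E) 1 → ℝ≥0∞) (w : sphere (0 : E) 1) :
    FunkE φ w = ∫⁻ v, φ (subInc w v) ∂(subMeas w) := by
  rw [subMeas, lintegral_smul_measure]; rfl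

theorem ae_of_fin {X : Type*} [MeasurableSpace X] (ρ : Measure X) (x y : X → ℝ≥0∞)
    (hx : Measurable x) (hy : Measurable y) (hx' : ∀ t, x t ≠ ⊤) (hy' : ∀ t, y t ≠ ⊤) {a b : ℝ}
    (ha : a < 0) (hb : b < 0) (h : ∫⁻ t, x t ^ a * y t ^ b ∂ρ ≠ ⊤) :
    ∀ᵐ t ∂ρ, x t ≠ 0 ∧ y t ≠ 0 := by
  filter_upwards [ae_lt_top (by fun_prop) h] with t ht
  have k1 : x t ^ a ≠ 0 := by simp [ENNReal.rpow_eq_zero_iff, hx', ha, ha.le]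
  have k2 : y t ^ b ≠ 0 := by simp [ENNReal.rpow_eq_zero_iff, hy', hb, hb.le]
  constructor
  · intro h0
    rw [h0, ENNReal.zero_rpow_of_neg ha, ENNReal.top_mul k2] at ht
    exact lt_irrefl _ ht
  · intro h0
    rw [h0, ENNReal.zero_rpow_of_neg hb, ENNReal.mul_top k1] at ht
    exact lt_irrefl _ ht

theorem ae_sph {m : ℕ} (hm : 2 ≤ m) (hd : finrank ℝ E = m + 1) (e : sphere (0 : E) 1) :
    ∀ᵐ w ∂((volume : Measure E).toSphere), wx e w ≠ 0 ∧ wy e w ≠ 0 := by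
  have hm2 : (2 : ℝ) ≤ m := by exact_mod_cast hm
  exact ae_of_fin _ (wx e) (wy e) (measurable_wx e) (measurable_wy e) (wx_top e) (wy_top e)
    (by norm_num : (1 / 2 : ℝ) - 1 < 0) (by linarith : ((1 / 2 : ℝ) - m) / 2 < 0)
    (sph_fin hm hd e (by norm_num)).1

theorem ae_sub {m : ℕ} (hm : 2 ≤ m) (hd : finrank ℝ E = m + 1) (e w : sphere (0 : E) 1)
    (hx : wx e w ≠ 0) (hy : wy e w ≠ 0) :
    ∀ᵐ v ∂(subMeas w), wx e (subInc w v) ≠ 0 ∧ wy e (subInc w v) ≠ 0 := by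
  have hm2 : (2 : ℝ) ≤ m := by exact_mod_cast hm
  have h := funkE_w hm hd e w hx hy (a := -1 / 2) (by norm_num)
  rw [funkE_avg] at h
  refine ae_of_fin _ (fun v => wx e (subInc w v)) (fun v => wy e (subInc w v))
    ((measurable_wx e).comp (measurable_subInc w)) ((measurable_wy e).comp (measurable_subInc w))
    (fun v => wx_top e _) (fun v => wy_top e _)
    (by norm_num : (-1 / 2 : ℝ) < 0) (by linarith : -((-1 / 2 : ℝ) + m) / 2 < 0) ?_
  rw [h]
  refine ENNReal.mul_ne_top ENNReal.ofReal_ne_top (ENNReal.mul_ne_top ?_ ?_)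
  · simp [ENNReal.rpow_eq_top_iff, hx, wx_top]
  · simp [ENNReal.rpow_eq_top_iff, hy, wy_top]

theorem main_ineq {m : ℕ} (hm : 2 ≤ m) (hd : finrank ℝ E = m + 1) (e : sphere (0 : E) 1)
    {a p : ℝ} (ha : -1 < a) (hp : 1 ≤ p) (φ : sphere (0 : E) 1 → ℝ≥0∞) (hφ : Measurable φ) :
    ∫⁻ w, FunkE φ w ^ p * wx e w ^ (a * p + p - 1) * wy e w ^ ((-(a * p) - m) / 2)
      ∂((volume : Measure E).toSphere) ≤
    ENNReal.ofReal (Ca m a) ^ p * ∫⁻ θ, φ θ ^ p * wy e θ ^ ((a * p + m * (p - 1)) / 2) *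
      wx e θ ^ (-(a * p) - 1) ∂((volume : Measure E).toSphere) := by
  have hxm := measurable_wx e
  have hym := measurable_wy e
  set C := ENNReal.ofReal (Ca m a) with hC
  have hC0 : C ≠ 0 := by simpa [hC] using Ca_pos hm ha
  have hCt : C ≠ ⊤ := ENNReal.ofReal_ne_top
  set v : sphere (0 : E) 1 → ℝ≥0∞ := fun θ => wx e θ ^ a * wy e θ ^ (-(a + m) / 2) with hv
  have hvm : Measurable v := by fun_prop
  set g : sphere (0 : E) 1 → ℝ≥0∞ := fun θ => φ θ ^ p * v θ ^ (1 - p) with hg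
  have hgm : Measurable g := by fun_prop
  calc ∫⁻ w, FunkE φ w ^ p * wx e w ^ (a * p + p - 1) * wy e w ^ ((-(a * p) - m) / 2)
      ∂((volume : Measure E).toSphere)
      ≤ ∫⁻ w, C ^ (p - 1) * (FunkE g w * v w) ∂((volume : Measure E).toSphere) := by
        refine lintegral_mono_ae ?_
        filter_upwards [ae_sph hm hd e] with w hw
        have h1 : FunkE φ w ^ p ≤ FunkE g w * FunkE v w ^ (p - 1) := by
          rw [funkE_avg, funkE_avg, funkE_avg]
          refine holder_avg (subMeas w) (fun t => φ (subInc w t)) (fun t => v (subInc w t))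
            (hφ.comp (measurable_subInc w)) (hvm.comp (measurable_subInc w)) ?_ hp
          filter_upwards [ae_sub hm hd e w hw.1 hw.2] with t ht
          constructor
          · simp only [hv, Ne, mul_eq_zero, not_or]
            constructor <;> simp [ENNReal.rpow_eq_zero_iff, ht, wx_top, wy_top]
          · refine ENNReal.mul_ne_top ?_ ?_ <;>
              simp [ENNReal.rpow_eq_top_iff, ht, wx_top, wy_top]
        rw [funkE_w hm hd e w hw.1 hw.2 ha, ENNReal.mul_rpow_of_nonneg _ _ (by linarith)] at h1
        calc _ ≤ FunkE g w * (C ^ (p - 1) * (wx e w ^ (-(a + 1)) * wy e w ^ (a / 2)) ^ (p - 1)) *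
              wx e w ^ (a * p + p - 1) * wy e w ^ ((-(a * p) - m) / 2) := by gcongr
          _ = C ^ (p - 1) * (FunkE g w * ((wx e w ^ (-(a + 1)) * wy e w ^ (a / 2)) ^ (p - 1) *
              (wx e w ^ (a * p + p - 1) * wy e w ^ ((-(a * p) - m) / 2)))) := by ring
          _ = _ := by
            rw [xy_combine hw.1 (wx_top e w) hw.2 (wy_top e w) (a' := a)
              (b' := -(a + m) / 2) (by ring) (by ring)]
    _ = C ^ (p - 1) * ∫⁻ w, FunkE v w * g w ∂((volume : Measure E).toSphere) := by
        rw [lintegral_const_mul _ (by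
          have := measurable_funkE hm hd e g hgm
          fun_prop),
          funkE_symm hm hd e g v hgm hvm]
    _ = C ^ (p - 1) * ∫⁻ θ, C * (φ θ ^ p * wy e θ ^ ((a * p + m * (p - 1)) / 2) *
      wx e θ ^ (-(a * p) - 1)) ∂((volume : Measure E).toSphere) := by
        congr 1
        refine lintegral_congr_ae ?_
        filter_upwards [ae_sph hm hd e] with w hw
        rw [funkE_w hm hd e w hw.1 hw.2 ha]
        calc _ = C * (φ w ^ p * ((wx e w ^ a * wy e w ^ (-(a + m) / 2)) ^ (1 - p) *
              (wx e w ^ (-(a + 1)) * wy e w ^ (a / 2)))) := by simp only [hg, hv]; ring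
          _ = _ := by
            rw [xy_combine hw.1 (wx_top e w) hw.2 (wy_top e w) (a' := -(a * p) - 1)
              (b' := (a * p + m * (p - 1)) / 2) (by ring) (by ring)]
            ring
    _ = _ := by
        rw [lintegral_const_mul _ (by fun_prop), ← mul_assoc]
        congr 1
        nth_rewrite 2 [← ENNReal.rpow_one C]
        rw [← ENNReal.rpow_add _ _ hC0 hCt, sub_add_cancel]

theorem wxy_le (e w : sphere (0 : E) 1) (v : sphere (0 : (ℝ ∙ (w : E))ᗮ) 1) :
    wx e w ^ (2 : ℝ) ≤ wy e (subInc w v) := by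
  have hss : ∀ z : sphere (0 : E) 1, inner ℝ (z : E) (z : E) = (1 : ℝ) := fun z => by
    rw [real_inner_self_eq_norm_sq, sph_norm]; norm_num
  have hθ : inner ℝ (subInc w v : E) (subInc w v : E) = (1 : ℝ) := hss _
  have hw := hss w
  have he := hss e
  have ho : inner ℝ (w : E) (subInc w v : E) = (0 : ℝ) := perp_inner _ _
  set θ : E := (subInc w v : E) with hθd
  have h := real_inner_self_nonneg (x := (e : E) - (inner ℝ (w : E) (e : E) : ℝ) • (w : E) -
    (inner ℝ θ (e : E) : ℝ) • θ)
  simp only [inner_sub_left, inner_sub_right, real_inner_smul_left, real_inner_smul_right,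
    hθ, hw, he, ho, real_inner_comm (w : E) θ,
    real_inner_comm (w : E) (e : E), real_inner_comm θ (e : E)] at h
  rw [wx, wy, ENNReal.ofReal_rpow_of_nonneg (abs_nonneg _) (by norm_num)]
  apply ENNReal.ofReal_le_ofReal
  rw [show (2 : ℝ) = ((2 : ℕ) : ℝ) by norm_num, Real.rpow_natCast, sq_abs, ← hθd]
  simp only [real_inner_comm (e : E) (w : E), real_inner_comm (e : E) θ,
    real_inner_comm θ (w : E), ho] at h ⊢
  nlinarith [h]

theorem sharp {m : ℕ} (hm : 2 ≤ m) (hd : finrank ℝ E = m + 1) (e : sphere (0 : E) 1)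
    {a p ε : ℝ} (ha : -1 < a) (hp : 1 ≤ p) (hε : 0 < ε) {K : ℝ≥0∞}
    (hK : ∀ φ : sphere (0 : E) 1 → ℝ≥0∞, Measurable φ →
    ∫⁻ w, FunkE φ w ^ p * wx e w ^ (a * p + p - 1) * wy e w ^ ((-(a * p) - m) / 2)
      ∂((volume : Measure E).toSphere) ≤
    K ^ p * ∫⁻ θ, φ θ ^ p * wy e θ ^ ((a * p + m * (p - 1)) / 2) *
      wx e θ ^ (-(a * p) - 1) ∂((volume : Measure E).toSphere)) :
    ENNReal.ofReal (Ca m (a + ε)) ≤ K := by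
  have hxm := measurable_wx e
  have hym := measurable_wy e
  have hp0 : 0 < p := by linarith
  set C := ENNReal.ofReal (Ca m (a + ε)) with hC
  obtain ⟨hI1, hI0⟩ := sph_fin hm hd e (δ := ε * p) (by positivity)
  set I := ∫⁻ v : sphere (0 : E) 1, ENNReal.ofReal |inner ℝ (v : E) (e : E)| ^ (ε * p - 1) *
      ENNReal.ofReal (1 - (inner ℝ (v : E) (e : E)) ^ 2) ^ ((ε * p - m) / 2)
      ∂((volume : Measure E).toSphere) with hI
  have hI' : I = ∫⁻ v : sphere (0 : E) 1, wx e v ^ (ε * p - 1) * wy e v ^ ((ε * p - m) / 2)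
      ∂((volume : Measure E).toSphere) := rfl
  have h := hK (fun θ => wx e θ ^ (a + ε) * wy e θ ^ ((-(a + m) + ε) / 2)) (by fun_prop)
  have hR : ∫⁻ θ, (wx e θ ^ (a + ε) * wy e θ ^ ((-(a + m) + ε) / 2)) ^ p *
      wy e θ ^ ((a * p + m * (p - 1)) / 2) *
      wx e θ ^ (-(a * p) - 1) ∂((volume : Measure E).toSphere) = I := by
    rw [hI']
    refine lintegral_congr_ae ?_
    filter_upwards [ae_sph hm hd e] with w hw
    have := xy_combine (q := p) hw.1 (wx_top e w) hw.2 (wy_top e w) (a := a + ε)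
      (b := (-(a + m) + ε) / 2) (c := -(a * p) - 1) (d := (a * p + m * (p - 1)) / 2)
      (a' := ε * p - 1) (b' := (ε * p - m) / 2) (by ring) (by ring)
    rw [← this]
    ring
  have hL : C ^ p * I ≤ ∫⁻ w, FunkE (fun θ => wx e θ ^ (a + ε) * wy e θ ^ ((-(a + m) + ε) / 2)) w ^ p
      * wx e w ^ (a * p + p - 1) * wy e w ^ ((-(a * p) - m) / 2)
      ∂((volume : Measure E).toSphere) := by
    rw [hI', ← lintegral_const_mul _ (by fun_prop)]
    refine lintegral_mono_ae ?_
    filter_upwards [ae_sph hm hd e] with w hw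
    have h1 : C * (wx e w ^ (-(a + 1) + ε) * wy e w ^ ((a + ε) / 2)) ≤
        FunkE (fun θ => wx e θ ^ (a + ε) * wy e θ ^ ((-(a + m) + ε) / 2)) w := by
      have h2 := funkE_w hm hd e w hw.1 hw.2 (a := a + ε) (by linarith)
      calc _ = (wx e w ^ (2 : ℝ)) ^ ε * (C * (wx e w ^ (-(a + ε + 1)) * wy e w ^ ((a + ε) / 2))) := by
            rw [← ENNReal.rpow_mul, show -(a + 1) + ε = 2 * ε + -(a + ε + 1) by ring,
              ENNReal.rpow_add _ _ hw.1 (wx_top e w)]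
            ring
        _ ≤ _ := by
            rw [← h2, funkE_avg, funkE_avg, ← lintegral_const_mul _ (by
              have := measurable_subInc w
              fun_prop)]
            refine lintegral_mono fun t => ?_
            have h3 := wxy_le e w t
            have h4 : wy e (subInc w t) ≠ 0 := by
              intro h0
              rw [h0, nonpos_iff_eq_zero, ENNReal.rpow_eq_zero_iff] at h3
              rcases h3 with h3 | h3
              · exact hw.1 h3.1
              · exact wx_top _ _ h3.1
            calc (wx e w ^ (2 : ℝ)) ^ ε * (wx e (subInc w t) ^ (a + ε) *
                  wy e (subInc w t) ^ (-(a + ε + m) / 2)) ≤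
                  wy e (subInc w t) ^ ε * (wx e (subInc w t) ^ (a + ε) *
                  wy e (subInc w t) ^ (-(a + ε + m) / 2)) := by gcongr
              _ = wx e (subInc w t) ^ (a + ε) * wy e (subInc w t) ^ ((-(a + m) + ε) / 2) := by
                rw [show (-(a + m) + ε) / 2 = ε + -(a + ε + m) / 2 by ring,
                  ENNReal.rpow_add _ _ h4 (wy_top e _)]
                ring
    calc _ = (C * (wx e w ^ (-(a + 1) + ε) * wy e w ^ ((a + ε) / 2))) ^ p *
        wx e w ^ (a * p + p - 1) * wy e w ^ ((-(a * p) - m) / 2) := by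
          rw [ENNReal.mul_rpow_of_nonneg _ _ hp0.le, mul_assoc, mul_assoc,
            xy_combine (q := p) hw.1 (wx_top e w) hw.2 (wy_top e w) (a' := ε * p - 1)
            (b' := (ε * p - m) / 2) (by ring) (by ring)]
      _ ≤ _ := by gcongr
  rw [hR] at h
  have h5 := hL.trans h
  rw [ENNReal.mul_le_mul_iff_left hI0 hI1] at h5
  exact (ENNReal.rpow_le_rpow_iff hp0).1 h5

theorem norm_iff {s L R K : ℝ≥0∞} (hs : s ≠ 0) (hs' : s ≠ ⊤) {p : ℝ} (hp : 0 < p) :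
    (s * L) ^ (1 / p) ≤ K * (s * R) ^ (1 / p) ↔ L ≤ K ^ p * R := by
  have h : K = (K ^ p) ^ (1 / p) := by
    rw [← ENNReal.rpow_mul, mul_one_div_cancel hp.ne', ENNReal.rpow_one]
  nth_rewrite 1 [h]
  rw [← ENNReal.mul_rpow_of_nonneg _ _ (by positivity), ENNReal.rpow_le_rpow_iff (by positivity),
    mul_left_comm, ENNReal.mul_le_mul_iff_right hs hs']

theorem Ca_tendsto {m : ℕ} (hm : 2 ≤ m) {a : ℝ} (ha : -1 < a) :
    Filter.Tendsto (fun ε => Ca m (a + ε)) (nhdsWithin 0 (Ioi 0)) (nhds (Ca m a)) := by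
  have hm2 : (2 : ℝ) ≤ m := by exact_mod_cast hm
  have hG1 : 0 < Real.Gamma ((a + m) / 2) := Real.Gamma_pos_of_pos (by linarith)
  have c1 : ContinuousAt (fun ε => Real.Gamma ((a + ε + 1) / 2)) 0 := by
    refine ContinuousAt.comp (f := fun ε : ℝ => (a + ε + 1) / 2) (g := Real.Gamma) ?_ (by fun_prop)
    exact (Real.differentiableOn_Gamma_Ioi.differentiableAt
      (Ioi_mem_nhds (by simp; linarith))).continuousAt
  have c2 : ContinuousAt (fun ε => Real.Gamma ((a + ε + m) / 2)) 0 := by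
    refine ContinuousAt.comp (f := fun ε : ℝ => (a + ε + m) / 2) (g := Real.Gamma) ?_ (by fun_prop)
    exact (Real.differentiableOn_Gamma_Ioi.differentiableAt
      (Ioi_mem_nhds (by simp; linarith))).continuousAt
  have c3 : ContinuousAt (fun ε => Ca m (a + ε)) 0 := by
    unfold Ca
    exact (continuousAt_const.mul c1).div c2 (by simpa using hG1.ne')
  have := c3.tendsto
  simp only [add_zero] at this
  exact this.mono_left nhdsWithin_le_nhds

end FunkAux6

theorem stmt14_aux (n : ℕ) (hn : 3 ≤ n) (p : ℝ) (hp : 1 ≤ p) (μ ν c₁ : ℝ)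
    (hμ : μ > ((n : ℝ) - 1) - (n : ℝ) / p - (1 - 1 / p))
    (hν : ν = μ - ((n : ℝ) - 2) * (1 - 1 / p))
    (hc : c₁ = Real.Gamma (((n : ℝ) - 1) / 2) / Real.Gamma (1 / 2) *
      Real.Gamma ((μ + (n : ℝ) / p - ((n : ℝ) - 1) + (1 - 1 / p)) / 2) /
      Real.Gamma ((μ + (n : ℝ) / p - 1 / p) / 2)) :
    ∃ (m : ℕ) (a : ℝ), n = m + 1 ∧ 2 ≤ m ∧ -1 < a ∧ c₁ = Ca m a ∧ ν * p = a * p + p - 1 ∧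
      ((1 - ν) * p - n) / 2 = (-(a * p) - m) / 2 ∧ μ * p / 2 = (a * p + m * (p - 1)) / 2 ∧
      ((n : ℝ) - 1 - μ) * p - n = -(a * p) - 1 := by
  obtain ⟨m, rfl⟩ : ∃ m, n = m + 1 := ⟨n - 1, by omega⟩
  have hp0 : p ≠ 0 := by linarith
  have hm : ((m + 1 : ℕ) : ℝ) = m + 1 := by push_cast; ring
  rw [hm] at hμ hν hc ⊢
  refine ⟨m, μ - m + m / p, rfl, by omega, ?_, ?_, ?_, ?_, ?_, ?_⟩
  · have : ((m : ℝ) + 1) / p = m / p + 1 / p := by ring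
    rw [this] at hμ
    linarith
  · rw [hc, Ca]
    congr 2
    · congr 2
      ring
    · congr 1; ring
    · congr 1; ring
  · rw [hν]; field_simp; ring
  · rw [hν]; field_simp; ring
  · field_simp; ring
  · field_simp; ring

/-- Last-coordinate unit vector. -/
def lastE (n : ℕ) (hn : n - 1 < n) : sphere (0 : EuclideanSpace ℝ (Fin n)) 1 :=
  ⟨EuclideanSpace.single ⟨n - 1, hn⟩ (1 : ℝ), by simp⟩

theorem lastE_inner (n : ℕ) (hn : n - 1 < n) (w : EuclideanSpace ℝ (Fin n)) :
    w ⟨n - 1, hn⟩ = inner ℝ w (lastE n hn : EuclideanSpace ℝ (Fin n)) := by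
  simp [lastE, EuclideanSpace.inner_single_right]

theorem funk_eq (n : ℕ) (φ : sphere (0 : EuclideanSpace ℝ (Fin n)) 1 → ℝ≥0∞)
    (w : sphere (0 : EuclideanSpace ℝ (Fin n)) 1) : Funk n φ w = FunkE φ w := rfl

end StmtHelpers

/-- Weighted norm inequality, with sharp constant `c₁`, for the codimension-one Funk transform
(case `k = n-1` of the weighted estimate obtained by stereographic projection); `w_n` denotes
the last coordinate, and `sin d(w^⊥) = |w_n|`, `cos d(w^⊥) = (1-w_n²)^{1/2}`. -/
theorem stmt14 (n : ℕ) (hn : 3 ≤ n) (p : ℝ) (hp : 1 ≤ p) (μ ν c₁ : ℝ)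
    (hμ : μ > ((n : ℝ) - 1) - (n : ℝ) / p - (1 - 1 / p))
    (hν : ν = μ - ((n : ℝ) - 2) * (1 - 1 / p))
    (hc : c₁ = Real.Gamma (((n : ℝ) - 1) / 2) / Real.Gamma (1 / 2) *
      Real.Gamma ((μ + (n : ℝ) / p - ((n : ℝ) - 1) + (1 - 1 / p)) / 2) /
      Real.Gamma ((μ + (n : ℝ) / p - 1 / p) / 2)) :
    (∀ φ : sphere (0 : EuclideanSpace ℝ (Fin n)) 1 → ℝ≥0∞, Measurable φ →
      (∫⁻ w, Funk n φ w ^ p *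
          ENNReal.ofReal |(w : EuclideanSpace ℝ (Fin n)) ⟨n - 1, by omega⟩| ^ (ν * p) *
          ENNReal.ofReal (1 - ((w : EuclideanSpace ℝ (Fin n)) ⟨n - 1, by omega⟩) ^ 2) ^
            (((1 - ν) * p - n) / 2) ∂(sphMeasure n)) ^ (1 / p) ≤
        ENNReal.ofReal c₁ *
          (∫⁻ θ, φ θ ^ p *
            ENNReal.ofReal (1 - ((θ : EuclideanSpace ℝ (Fin n)) ⟨n - 1, by omega⟩) ^ 2) ^
              (μ * p / 2) *
            ENNReal.ofReal |(θ : EuclideanSpace ℝ (Fin n)) ⟨n - 1, by omega⟩| ^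
              (((n : ℝ) - 1 - μ) * p - n) ∂(sphMeasure n)) ^ (1 / p)) ∧
    (∀ c' : ℝ, 0 ≤ c' →
      (∀ φ : sphere (0 : EuclideanSpace ℝ (Fin n)) 1 → ℝ≥0∞, Measurable φ →
        (∫⁻ w, Funk n φ w ^ p *
            ENNReal.ofReal |(w : EuclideanSpace ℝ (Fin n)) ⟨n - 1, by omega⟩| ^ (ν * p) *
            ENNReal.ofReal (1 - ((w : EuclideanSpace ℝ (Fin n)) ⟨n - 1, by omega⟩) ^ 2) ^
              (((1 - ν) * p - n) / 2) ∂(sphMeasure n)) ^ (1 / p) ≤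
          ENNReal.ofReal c' *
            (∫⁻ θ, φ θ ^ p *
              ENNReal.ofReal (1 - ((θ : EuclideanSpace ℝ (Fin n)) ⟨n - 1, by omega⟩) ^ 2) ^
                (μ * p / 2) *
              ENNReal.ofReal |(θ : EuclideanSpace ℝ (Fin n)) ⟨n - 1, by omega⟩| ^
                (((n : ℝ) - 1 - μ) * p - n) ∂(sphMeasure n)) ^ (1 / p)) →
      c₁ ≤ c') := by
  have hn1 : n - 1 < n := by omega
  obtain ⟨m, a, hnm, hm, ha, hca, e1, e2, e3, e4⟩ := stmt14_aux n hn p hp μ ν c₁ hμ hν hc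
  have hp0 : 0 < p := by linarith
  have hd : Module.finrank ℝ (EuclideanSpace ℝ (Fin n)) = m + 1 := by
    rw [finrank_euclideanSpace_fin, hnm]
  have : Nontrivial (EuclideanSpace ℝ (Fin n)) :=
    Module.nontrivial_of_finrank_pos (R := ℝ) (by omega)
  have hs : ((volume : Measure (EuclideanSpace ℝ (Fin n))).toSphere Set.univ)⁻¹ ≠ 0 :=
    ENNReal.inv_ne_zero.2 (measure_ne_top _ _)
  have hs' : ((volume : Measure (EuclideanSpace ℝ (Fin n))).toSphere Set.univ)⁻¹ ≠ ⊤ := by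
    rw [ENNReal.inv_ne_top, Ne, Measure.measure_univ_eq_zero]
    exact Measure.toSphere_ne_zero _
  simp only [sphMeasure, lintegral_smul_measure, smul_eq_mul, norm_iff hs hs' hp0, funk_eq,
    lastE_inner n hn1, e1, e2, e3, e4]
  refine ⟨fun φ hφ => ?_, fun c' hc' h => ?_⟩
  · rw [hca]
    exact main_ineq hm hd (lastE n hn1) ha hp φ hφ
  · rw [hca]
    refine le_of_tendsto (Ca_tendsto hm ha) ?_
    filter_upwards [self_mem_nhdsWithin] with ε hε
    exact (ENNReal.ofReal_le_ofReal_iff hc').1 (sharp hm hd (lastE n hn1) ha hp hε h)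
end
end
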